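/- Let H ⊂ ℂ^n be a compact convex set with nonempty interior and suppose (H,ν) satisfies the density condition. Then for every μ ∈ 𝓜(H), J(μ) = W(μ) = inf{ δ̄^{e^{−Q}}(H) · exp(∫_H Q dμ) : Q : H → ℝ continuous }. -/

import Mathlib

open MeasureTheory Filter Topology ENNReal

noncomputable section

/-- Points of `ℂⁿ` (with the Euclidean metric). -/
abbrev Pt (n : ℕ) := EuclideanSpace ℂ (Fin n)

instance Pt.measurableSpace (n : ℕ) : MeasurableSpace (Pt n) := borel _

instance Pt.borelSpace (n : ℕ) : BorelSpace (Pt n) := ⟨rfl⟩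

/-- `s(d) = binomial(d+n, n)`, the number of multi-indices `α ∈ ℕⁿ` with `|α| ≤ d`. -/
def sdim (n d : ℕ) : ℕ := (d + n).choose n

lemma sdim_pos (n d : ℕ) : 0 < sdim n d := Nat.choose_pos (Nat.le_add_left n d)

/-- `E` is an enumeration of the multi-indices `α ∈ ℕⁿ` with `|α| ≤ d`. -/
def IsEnum (n d : ℕ) (E : Fin (sdim n d) → (Fin n → ℕ)) : Prop :=
  Function.Injective E ∧ ∀ α : Fin n → ℕ, ((∑ i, α i) ≤ d ↔ α ∈ Set.range E)

/-- The Vandermonde determinant `VDM_d(a_1, …, a_{s(d)}) = det [a_j^{α_i}]`. -/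
def VDM (n d : ℕ) (E : Fin (sdim n d) → (Fin n → ℕ))
    (a : Fin (sdim n d) → Pt n) : ℂ :=
  Matrix.det (Matrix.of fun i j => ∏ k, (a j k) ^ (E i k))

/-- `|VDM_d^Q(a)| = |VDM_d(a)| · w(a_1)^d ⋯ w(a_s)^d` where `w = e^{-Q}`, as a member
of `ℝ≥0∞`. -/
def absVDMQ (n d : ℕ) (E : Fin (sdim n d) → (Fin n → ℕ)) (H : Set (Pt n)) (Q : H → ℝ)
    (a : Fin (sdim n d) → H) : ℝ≥0∞ :=
  ENNReal.ofReal (‖VDM n d E (fun j => (a j : Pt n))‖ *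
    ∏ j, Real.exp (-(d : ℝ) * Q (a j)))

/-- The empirical measure `(1/s) ∑_j δ_{a_j}` of a tuple of points. -/
def emp {X : Type*} [MeasurableSpace X] {s : ℕ} (a : Fin s → X) : Measure X :=
  ((s : ℝ≥0∞))⁻¹ • ∑ j, Measure.dirac (a j)

lemma emp_univ {X : Type*} [MeasurableSpace X] {s : ℕ} (hs : s ≠ 0) (a : Fin s → X) :
    emp a Set.univ = 1 := by
  have : (emp a) Set.univ = ((s : ℝ≥0∞))⁻¹ * ∑ j : Fin s, (Measure.dirac (a j)) Set.univ := by
    simp [emp, Measure.smul_apply, Measure.finset_sum_apply]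
  rw [this]
  simp only [measure_univ, Finset.sum_const, Finset.card_univ, Fintype.card_fin, nsmul_eq_mul,
    mul_one]
  exact ENNReal.inv_mul_cancel (by exact_mod_cast hs) (by simp)

/-- The empirical probability measure `(1/s) ∑_j δ_{a_j}` of a tuple of points. -/
def empPM {X : Type*} [MeasurableSpace X] {s : ℕ} (hs : s ≠ 0) (a : Fin s → X) :
    ProbabilityMeasure X := ⟨emp a, ⟨emp_univ hs a⟩⟩

/-- `G̃_s(μ)`: the tuples in `H^s` whose empirical measure lies in `G`. -/
def Gtilde {n : ℕ} (d : ℕ) (H : Set (Pt n)) (G : Set (ProbabilityMeasure H)) :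
    Set (Fin (sdim n d) → H) :=
  {a | empPM (sdim_pos n d).ne' a ∈ G}

/-- `J_d^Q(μ, G) = (∫_{G̃_s(μ)} |VDM_d^Q(a)|² dν^{⊗s}(a))^{1/(2ds)}`. -/
def Jd (n d : ℕ) (E : Fin (sdim n d) → (Fin n → ℕ)) (H : Set (Pt n)) (ν : Measure H)
    (Q : H → ℝ) (G : Set (ProbabilityMeasure H)) : ℝ≥0∞ :=
  (∫⁻ a in Gtilde d H G, (absVDMQ n d E H Q a) ^ 2
      ∂(Measure.pi fun _ : Fin (sdim n d) => ν)) ^ (1 / (2 * d * sdim n d) : ℝ)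

/-- `W_d^Q(μ, G) = sup { |VDM_d^Q(a)|^{1/(ds)} : a ∈ G̃_s(μ) }`. -/
def Wd (n d : ℕ) (E : Fin (sdim n d) → (Fin n → ℕ)) (H : Set (Pt n))
    (Q : H → ℝ) (G : Set (ProbabilityMeasure H)) : ℝ≥0∞ :=
  ⨆ a ∈ Gtilde d H G, (absVDMQ n d E H Q a) ^ (1 / (d * sdim n d) : ℝ)

/-- `J^Q(μ) = inf_{G ∋ μ} limsup_{d → ∞} J_d^Q(μ, G)`, the infimum being over all open
neighborhoods `G` of `μ` in `𝓜(H)`. -/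
def JQ (n : ℕ) (E : ∀ d, Fin (sdim n d) → (Fin n → ℕ)) (H : Set (Pt n)) (ν : Measure H)
    (Q : H → ℝ) (μ : ProbabilityMeasure H) : ℝ≥0∞ :=
  ⨅ G ∈ {G : Set (ProbabilityMeasure H) | IsOpen G ∧ μ ∈ G},
    limsup (fun d => Jd n d (E d) H ν Q G) atTop

/-- `W^Q(μ) = inf_{G ∋ μ} limsup_{d → ∞} W_d^Q(μ, G)`, the infimum being over all open
neighborhoods `G` of `μ` in `𝓜(H)`. -/
def WQ (n : ℕ) (E : ∀ d, Fin (sdim n d) → (Fin n → ℕ)) (H : Set (Pt n))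
    (Q : H → ℝ) (μ : ProbabilityMeasure H) : ℝ≥0∞ :=
  ⨅ G ∈ {G : Set (ProbabilityMeasure H) | IsOpen G ∧ μ ∈ G},
    limsup (fun d => Wd n d (E d) H Q G) atTop

/-- `δ̄^w(H) = lim sup_d (sup_{a ∈ H^{s(d)}} |VDM_d^Q(a)|)^{1/(d·s(d))}` where `w = e^{-Q}`. -/
def deltaBar (n : ℕ) (E : ∀ d, Fin (sdim n d) → (Fin n → ℕ)) (H : Set (Pt n))
    (Q : H → ℝ) : ℝ≥0∞ :=
  limsup (fun d => (⨆ a : Fin (sdim n d) → H, absVDMQ n d (E d) H Q a)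
    ^ (1 / (d * sdim n d) : ℝ)) atTop

/-- The density condition on `(H, ν)`: there is `T > 0` such that for every `z₀ ∈ H`
there is `r(z₀) > 0` with `ν(B(z₀,r)) ≥ r^T` for all `0 < r < r(z₀)`. -/
def DensityCond {n : ℕ} (H : Set (Pt n)) (ν : Measure H) : Prop :=
  ∃ T : ℝ, 0 < T ∧ ∀ z₀ : H, ∃ r₀ > 0, ∀ r : ℝ, 0 < r → r < r₀ →
    ENNReal.ofReal (r ^ T) ≤ ν (Metric.ball z₀ r)

/-!
`J ≤ W` because `ν` has mass at most one, and `W(μ) ≤ δ̄^{e^{-Q}}(H) · exp (∫ Q dμ)` because the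
weight `e^{-Q}` multiplies `|VDM_d(a)|` by `exp (-d ∑ Q (a_j))`, which is close to
`exp (-d s ∫ Q dμ)` when the empirical measure of `a` is close to `μ`. The content is the bound of
`J(μ)` from below, a large deviation lower bound for the measure `|VDM_d|² dν^{⊗s}`.

The free energy `(2ds)⁻¹ log ∫ |VDM_d|² e^{2d ∑ V(a_j)} dν^{⊗s}` converges to `log δ̄^{e^V}(H)`: the
transfinite diameter is a limit by Zaharjuta's submultiplicativity argument, and the maximum of a
weighted polynomial on `H` is at most `e^{o(d)}` times its `L²(ν)` norm (the Bernstein–Markov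
inequality), because convexity of `H` propagates large values to balls inside `H` and the density
condition gives these balls enough mass.

For the lower bound no differentiability of the limit is needed. By Andreief's identity the tilt of
a determinantal measure by `e^{∑ V(a_j)}` is determinantal again, with normalisation the determinant
of a Gram matrix; the inequality `det A ≤ (tr A / s)^s` then shows that the exponential moments of
its linear statistics are at most those of `s` independent points distributed according to its mean
intensity `κ`, so by Hoeffding's inequality the tilted measure concentrates near `κ`. To steer `κ`
to `μ` on finitely many test functions `u_i`, take `V = ∑ t_i u_i` where `t` minimises the free
energy minus `∫ V dμ` plus a small multiple of `‖t‖²`; at the minimum the gradient equation says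
that the `u_i`-moments of `κ` and `μ` nearly agree, and the minimal value gives the exponential
rate.
-/

/-! ### Determinantal measures -/

section Andreief

variable {𝕜 ι : Type*} [RCLike 𝕜] [Fintype ι] [DecidableEq ι]

lemma det_mul_det_eq_sum_sum_perm (A B : Matrix ι ι 𝕜) :
    A.det * B.det = ∑ π : Equiv.Perm ι, ∑ τ : Equiv.Perm ι,
      ((Equiv.Perm.sign π : ℤ) : 𝕜) * (((Equiv.Perm.sign τ : ℤ) : 𝕜) *
        ∏ j, A (π j) j * B (τ j) j) := by
  simp_rw [Matrix.det_apply', Finset.sum_mul_sum, Finset.prod_mul_distrib]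
  exact Finset.sum_congr rfl fun π _ => Finset.sum_congr rfl fun τ _ => by ring

lemma sum_perm_sign_mul_prod_apply_apply (M : Matrix ι ι 𝕜) (π : Equiv.Perm ι) :
    ∑ τ : Equiv.Perm ι, ((Equiv.Perm.sign π : ℤ) : 𝕜) * (((Equiv.Perm.sign τ : ℤ) : 𝕜) *
      ∏ j, M (π j) (τ j)) = M.det := by
  have hsign : ((Equiv.Perm.sign π : ℤ) : 𝕜) * ((Equiv.Perm.sign π : ℤ) : 𝕜) = 1 := by
    rw [← Int.cast_mul, ← Units.val_mul, Int.units_mul_self, Units.val_one, Int.cast_one]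
  calc _ = ((Equiv.Perm.sign π : ℤ) : 𝕜) * (M.submatrix π id).transpose.det := by
        rw [Matrix.det_apply', Finset.mul_sum]; rfl
    _ = M.det := by rw [Matrix.det_transpose, Matrix.det_permute, ← mul_assoc, hsign, one_mul]

theorem andreief_identity {X : Type*} [MeasurableSpace X] (ν : Measure X) [SigmaFinite ν]
    (f g : ι → X → 𝕜) (hfg : ∀ i k, Integrable (fun x => f i x * g k x) ν) :
    ∫ a : ι → X, (Matrix.of fun i j => f i (a j)).det * (Matrix.of fun i j => g i (a j)).det
        ∂(Measure.pi fun _ => ν) =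
      (Fintype.card ι).factorial * (Matrix.of fun i k => ∫ x, f i x * g k x ∂ν).det := by
  have hint (π τ : Equiv.Perm ι) :
      Integrable (fun a : ι → X => ∏ j, f (π j) (a j) * g (τ j) (a j))
        (Measure.pi fun _ => ν) :=
    Integrable.fintype_prod fun j => hfg (π j) (τ j)
  have hterm (π τ : Equiv.Perm ι) :
      ∫ a : ι → X, ∏ j, f (π j) (a j) * g (τ j) (a j) ∂(Measure.pi fun _ => ν) =
        ∏ j, ∫ x, f (π j) x * g (τ j) x ∂ν :=
    integral_fintype_prod_eq_prod (𝕜 := 𝕜) fun j x => f (π j) x * g (τ j) x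
  simp_rw [det_mul_det_eq_sum_sum_perm, Matrix.of_apply]
  rw [integral_finsetSum _ fun π _ => integrable_finsetSum _ fun τ _ =>
    ((hint π τ).const_mul _).const_mul _]
  have hinner (π : Equiv.Perm ι) :
      ∫ a : ι → X, ∑ τ : Equiv.Perm ι, ((Equiv.Perm.sign π : ℤ) : 𝕜) *
          (((Equiv.Perm.sign τ : ℤ) : 𝕜) * ∏ j, f (π j) (a j) * g (τ j) (a j))
        ∂(Measure.pi fun _ => ν) = (Matrix.of fun i k => ∫ x, f i x * g k x ∂ν).det := by
    rw [integral_finsetSum _ fun τ _ => ((hint π τ).const_mul _).const_mul _,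
      ← sum_perm_sign_mul_prod_apply_apply _ π]
    simp_rw [integral_const_mul, hterm, Matrix.of_apply]
  simp_rw [hinner, Finset.sum_const, Finset.card_univ, Fintype.card_perm, nsmul_eq_mul]

open scoped ComplexOrder in
lemma re_det_le_pow_re_trace_div_card {A : Matrix ι ι 𝕜} (hA : A.PosSemidef) :
    RCLike.re A.det ≤ (RCLike.re A.trace / Fintype.card ι) ^ Fintype.card ι := by
  rcases isEmpty_or_nonempty ι with h | h
  · simp
  have hcard : (0 : ℝ) < Fintype.card ι := by exact_mod_cast Fintype.card_pos
  set e := hA.isHermitian.eigenvalues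
  have he : ∀ i, 0 ≤ e i := hA.eigenvalues_nonneg
  have hdet : RCLike.re A.det = ∏ i, e i := by
    rw [hA.isHermitian.det_eq_prod_eigenvalues, ← map_prod, RCLike.ofReal_re]
  have htrace : RCLike.re A.trace = ∑ i, e i := by
    rw [hA.isHermitian.trace_eq_sum_eigenvalues, ← map_sum, RCLike.ofReal_re]
  have hamgm := Real.geom_mean_le_arith_mean Finset.univ (fun _ : ι => (1 : ℝ)) e
    (fun _ _ => zero_le_one) (by simpa using hcard) fun i _ => he i
  simp only [Real.rpow_one, Finset.sum_const, Finset.card_univ, nsmul_eq_mul, mul_one,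
    one_mul] at hamgm
  rw [hdet, htrace, ← Real.rpow_natCast]
  rwa [Real.rpow_inv_le_iff_of_pos (Finset.prod_nonneg fun i _ => he i)
    (div_nonneg (Finset.sum_nonneg fun i _ => he i) hcard.le) hcard] at hamgm

end Andreief

section LinearStatistic

variable {ι X : Type*} [Fintype ι]

/-- The linear statistic `a ↦ ∑ j, V (a j)` of a configuration of points. -/
def linearStatistic : (X → ℝ) →ₗ[ℝ] (ι → X) → ℝ where
  toFun V a := ∑ j, V (a j)
  map_add' V W := by ext a; simp [Finset.sum_add_distrib]
  map_smul' c V := by ext a; simp [Finset.mul_sum]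

lemma linearStatistic_apply (V : X → ℝ) (a : ι → X) : linearStatistic V a = ∑ j, V (a j) := rfl

variable [TopologicalSpace X]

lemma abs_linearStatistic_le [CompactSpace X] (V : C(X, ℝ)) (a : ι → X) :
    |linearStatistic V a| ≤ Fintype.card ι * ‖V‖ := by
  calc |linearStatistic V a| ≤ ∑ j, |V (a j)| := Finset.abs_sum_le_sum_abs _ _
    _ ≤ ∑ _j : ι, ‖V‖ := Finset.sum_le_sum fun j _ => V.norm_coe_le_norm (a j)
    _ = Fintype.card ι * ‖V‖ := by simp

variable [MeasurableSpace X]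

lemma measurable_linearStatistic [OpensMeasurableSpace X] (V : C(X, ℝ)) :
    Measurable (linearStatistic (ι := ι) V) :=
  Finset.measurable_fun_sum _ fun j _ => V.measurable.comp (measurable_pi_apply j)

lemma integrable_exp_linearStatistic [CompactSpace X] [OpensMeasurableSpace X]
    (P : Measure (ι → X)) [IsFiniteMeasure P] (V : C(X, ℝ)) :
    Integrable (fun a => Real.exp (linearStatistic V a)) P := by
  refine Integrable.of_bound (C := Real.exp (Fintype.card ι * ‖V‖))
    (measurable_linearStatistic V).exp.aestronglyMeasurable (.of_forall fun a => ?_)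
  rw [Real.norm_eq_abs, Real.abs_exp, Real.exp_le_exp]
  exact (le_abs_self _).trans (abs_linearStatistic_le V a)

/-- A measure on configurations is dominated by a product if the exponential moments of its linear
statistics are bounded by those of independent points with law `κ`. -/
def DominatedByProduct (P : Measure (ι → X)) (κ : Measure X) : Prop :=
  ∀ v : C(X, ℝ), ∫ a, Real.exp (linearStatistic v a) ∂P ≤
    (∫ x, Real.exp (v x) ∂κ) ^ Fintype.card ι

/-- All tilts of `P` by continuous linear statistics are dominated by products of probability
measures. -/
def TiltsDominatedByProducts (P : Measure (ι → X)) : Prop :=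
  ∀ V : C(X, ℝ), ∃ κ : ProbabilityMeasure X, DominatedByProduct (P.tilted (linearStatistic V)) κ

end LinearStatistic

section Determinantal

open scoped ComplexOrder MatrixOrder ComplexConjugate

variable {𝕜 ι X : Type*} [RCLike 𝕜] [TopologicalSpace X] [MeasurableSpace X]

/-- The matrix of inner products of the `φ_i` in `L²(e^W ν)`. -/
def weightedGram (ν : Measure X) (φ : ι → C(X, 𝕜)) (W : C(X, ℝ)) : Matrix ι ι 𝕜 :=
  Matrix.of fun i k => ∫ x, φ i x * (conj (φ k x) * (Real.exp (W x) : ℝ)) ∂ν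

section

variable [CompactSpace X] [BorelSpace X] {ν : Measure X} [IsFiniteMeasure ν]
  (φ : ι → C(X, 𝕜)) (W : C(X, ℝ))

lemma integrable_weightedGram (i k : ι) :
    Integrable (fun x => φ i x * (conj (φ k x) * (Real.exp (W x) : ℝ))) ν := by
  have hW : Continuous fun x => ((Real.exp (W x) : ℝ) : 𝕜) :=
    RCLike.continuous_ofReal.comp (Real.continuous_exp.comp W.continuous)
  exact ((φ i).continuous.mul ((RCLike.continuous_conj.comp (φ k).continuous).mul
    hW)).integrable_of_hasCompactSupport (.of_compactSpace _)

lemma weightedGram_posSemidef [Finite ι] : (weightedGram ν φ W).PosSemidef := by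
  let ψ (i : ι) : C(X, 𝕜) := ⟨fun x => conj (φ i x) * (Real.exp (W x / 2) : ℝ),
    (RCLike.continuous_conj.comp (φ i).continuous).mul
      (RCLike.continuous_ofReal.comp (Real.continuous_exp.comp (W.continuous.div_const 2)))⟩
  suffices weightedGram ν φ W = Matrix.gram 𝕜 fun i => ContinuousMap.toLp 2 ν 𝕜 (ψ i) by
    rw [this]
    exact Matrix.posSemidef_gram _ _
  ext i k
  rw [Matrix.gram_apply, ContinuousMap.inner_toLp, weightedGram, Matrix.of_apply]
  congr 1 with x
  rw [← add_halves (W x), Real.exp_add, RCLike.ofReal_mul]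
  simp only [ψ, ContinuousMap.coe_mk, map_mul, RCLike.conj_conj, RCLike.conj_ofReal]
  ring

lemma integrable_dotProduct_mulVec_mul_exp [Fintype ι] (M : Matrix ι ι 𝕜) :
    Integrable (fun x => (star (φ · x) ⬝ᵥ M.mulVec (φ · x)) * ((Real.exp (W x) : ℝ) : 𝕜)) ν := by
  have hW : Continuous fun x => ((Real.exp (W x) : ℝ) : 𝕜) :=
    RCLike.continuous_ofReal.comp (Real.continuous_exp.comp W.continuous)
  have hM : Continuous fun x => star (φ · x) ⬝ᵥ M.mulVec (φ · x) := by
    simp only [dotProduct, Matrix.mulVec, Pi.star_apply]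
    fun_prop
  exact (hM.mul hW).integrable_of_hasCompactSupport (.of_compactSpace _)

lemma trace_mul_weightedGram [Fintype ι] (M : Matrix ι ι 𝕜) :
    (M * weightedGram ν φ W).trace =
      ∫ x, (star (φ · x) ⬝ᵥ M.mulVec (φ · x)) * (Real.exp (W x) : ℝ) ∂ν := by
  have hterm (k i : ι) := (integrable_weightedGram (ν := ν) φ W i k).const_mul (M k i)
  calc (M * weightedGram ν φ W).trace
      = ∫ x, ∑ k, ∑ i, M k i * (φ i x * (conj (φ k x) * (Real.exp (W x) : ℝ))) ∂ν := by
        rw [integral_finsetSum _ fun k _ => integrable_finsetSum _ fun i _ => hterm k i]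
        simp_rw [integral_finsetSum _ fun i _ => hterm _ i, integral_const_mul]
        rfl
    _ = _ := by
        congr 1 with x
        simp only [dotProduct, Matrix.mulVec, Finset.sum_mul, Finset.mul_sum, Pi.star_apply,
          starRingEnd_apply]
        exact Finset.sum_congr rfl fun k _ => Finset.sum_congr rfl fun i _ => by ring

end

variable [Fintype ι] [DecidableEq ι]

/-- The determinantal measure with weights `φ`: its density with respect to `ν^ι` is
`‖det (φ_i (a_j))‖²`. -/
def determinantalMeasure (ν : Measure X) (φ : ι → C(X, 𝕜)) : Measure (ι → X) :=
  (Measure.pi fun _ => ν).withDensity fun a =>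
    ENNReal.ofReal (‖(Matrix.of fun i j => φ i (a j)).det‖ ^ 2)

lemma measurable_det_apply [OpensMeasurableSpace X] (φ : ι → C(X, 𝕜)) :
    Measurable fun a : ι → X => (Matrix.of fun i j => φ i (a j)).det := by
  simp only [Matrix.det_apply, Matrix.of_apply]
  have (i j : ι) : Measurable fun a : ι → X => φ i (a j) :=
    (φ i).measurable.comp (measurable_pi_apply j)
  fun_prop

/-- The one-point intensity, normalised to mass one, of the tilt of `determinantalMeasure ν φ` by
the linear statistic of `V`. -/
def intensityDensity (ν : Measure X) (φ : ι → C(X, 𝕜)) (V : C(X, ℝ)) (x : X) : ℝ :=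
  RCLike.re (star (φ · x) ⬝ᵥ (weightedGram ν φ V)⁻¹.mulVec (φ · x)) * Real.exp (V x) /
    Fintype.card ι

lemma measurable_intensityDensity [OpensMeasurableSpace X] (ν : Measure X)
    (φ : ι → C(X, 𝕜)) (V : C(X, ℝ)) : Measurable (intensityDensity ν φ V) := by
  unfold intensityDensity
  have hφ (i : ι) : Measurable (φ i) := (φ i).measurable
  have hV : Measurable V := V.measurable
  simp only [dotProduct, Matrix.mulVec, Pi.star_apply]
  fun_prop

lemma re_det_le_re_det_mul_pow_re_trace_inv_mul {A B : Matrix ι ι 𝕜} (hA : A.PosDef)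
    (hB : B.PosSemidef) :
    RCLike.re B.det ≤
      RCLike.re A.det * (RCLike.re (A⁻¹ * B).trace / Fintype.card ι) ^ Fintype.card ι := by
  obtain ⟨C, hC⟩ := CStarAlgebra.nonneg_iff_eq_star_mul_self.mp hA.inv.posSemidef.nonneg
  have hCBC := re_det_le_pow_re_trace_div_card (hB.mul_mul_conjTranspose_same C)
  have htrace : (C * B * C.conjTranspose).trace = (A⁻¹ * B).trace := by
    rw [hC, Matrix.trace_mul_comm, ← mul_assoc, Matrix.star_eq_conjTranspose]
  have hdet : A.det * (C * B * C.conjTranspose).det = B.det := by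
    have hcomm : (C * B * C.conjTranspose).det = (A⁻¹ * B).det := by
      rw [hC, Matrix.star_eq_conjTranspose]
      simp only [Matrix.det_mul]
      ring
    rw [hcomm, ← Matrix.det_mul, Matrix.mul_nonsing_inv_cancel_left _ _
      ((Matrix.isUnit_iff_isUnit_det A).mp hA.isUnit)]
  obtain ⟨hre, him⟩ := RCLike.pos_iff.mp hA.det_pos
  rw [← hdet, RCLike.mul_re, him, zero_mul, sub_zero, ← htrace]
  exact mul_le_mul_of_nonneg_left hCBC hre.le

variable [CompactSpace X] [BorelSpace X] {ν : Measure X} [IsFiniteMeasure ν]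
  (φ : ι → C(X, 𝕜))

instance : IsFiniteMeasure (determinantalMeasure ν φ) := by
  have hcont : Continuous fun a : ι → X => (Matrix.of fun i j => φ i (a j)).det := by
    simp only [Matrix.det_apply, Matrix.of_apply]
    fun_prop
  obtain ⟨B, hB⟩ := isCompact_univ.exists_bound_of_continuousOn hcont.continuousOn
  refine isFiniteMeasure_withDensity_ofReal (Integrable.of_bound (C := B ^ 2)
    ((measurable_det_apply φ).norm.pow_const 2).aestronglyMeasurable (.of_forall fun a => ?_)).2
  rw [norm_pow, norm_norm]
  exact pow_le_pow_left₀ (norm_nonneg _) (hB a (Set.mem_univ a)) 2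

lemma integral_exp_linearStatistic_determinantalMeasure (W : C(X, ℝ)) :
    ∫ a, Real.exp (linearStatistic W a) ∂(determinantalMeasure ν φ) =
      (Fintype.card ι).factorial * RCLike.re (weightedGram ν φ W).det := by
  have hpoint (a : ι → X) :
      (ENNReal.ofReal (‖(Matrix.of fun i j => φ i (a j)).det‖ ^ 2)).toReal •
        ((Real.exp (linearStatistic W a) : ℝ) : 𝕜) =
      (Matrix.of fun i j => φ i (a j)).det *
        (Matrix.of fun i j => conj (φ i (a j)) * (Real.exp (W (a j)) : ℝ)).det := by
    have hconj : (Matrix.of fun i j => conj (φ i (a j)) * ((Real.exp (W (a j)) : ℝ) : 𝕜)).det =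
        ((Real.exp (linearStatistic W a) : ℝ) : 𝕜) *
          conj (Matrix.of fun i j => φ i (a j)).det := by
      rw [RingHom.map_det, linearStatistic_apply, Real.exp_sum, RCLike.ofReal_prod,
        ← Matrix.det_mul_row]
      congr 1 with i j
      simp [mul_comm]
    rw [ENNReal.toReal_ofReal (by positivity), hconj, RCLike.real_smul_eq_coe_mul,
      RCLike.ofReal_pow, ← RCLike.mul_conj]
    ring
  have hand := andreief_identity ν (fun i => φ i)
    (fun k x => conj (φ k x) * (Real.exp (W x) : ℝ)) (integrable_weightedGram φ W)
  simp_rw [← hpoint] at hand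
  rw [← integral_withDensity_eq_integral_toReal_smul
    ((measurable_det_apply φ).norm.pow_const 2).ennreal_ofReal (by simp), integral_ofReal] at hand
  rw [← RCLike.ofReal_re (K := 𝕜) (∫ a, _ ∂_), determinantalMeasure, hand, ← RCLike.ofReal_natCast,
    RCLike.re_ofReal_mul]
  rfl

lemma intensityDensity_nonneg (V : C(X, ℝ)) (x : X) : 0 ≤ intensityDensity ν φ V x := by
  have h := (weightedGram_posSemidef (ν := ν) φ V).inv.dotProduct_mulVec_nonneg (φ · x)
  have := (RCLike.nonneg_iff.mp h).1
  unfold intensityDensity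
  positivity

lemma integral_exp_withDensity_intensityDensity (V v : C(X, ℝ)) :
    ∫ x, Real.exp (v x) ∂(ν.withDensity fun x => ENNReal.ofReal (intensityDensity ν φ V x)) =
      RCLike.re ((weightedGram ν φ V)⁻¹ * weightedGram ν φ (V + v)).trace / Fintype.card ι := by
  rw [integral_withDensity_eq_integral_toReal_smul
    (measurable_intensityDensity ν φ V).ennreal_ofReal (by simp)]
  rw [trace_mul_weightedGram, ← RCLike.reCLM_apply, ← ContinuousLinearMap.integral_comp_comm]
  · rw [← integral_div]
    congr 1 with x
    rw [ENNReal.toReal_ofReal (intensityDensity_nonneg φ V x), intensityDensity, smul_eq_mul,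
      RCLike.reCLM_apply, mul_comm (_ ⬝ᵥ _), RCLike.re_ofReal_mul, ContinuousMap.add_apply,
      Real.exp_add]
    ring
  · exact integrable_dotProduct_mulVec_mul_exp φ (V + v) _

lemma re_det_weightedGram_pos [NeZero (determinantalMeasure ν φ)] (V : C(X, ℝ)) :
    0 < RCLike.re (weightedGram ν φ V).det := by
  have hpos :=
    integral_exp_pos (integrable_exp_linearStatistic (determinantalMeasure ν φ) V)
  rw [integral_exp_linearStatistic_determinantalMeasure] at hpos
  exact pos_of_mul_pos_right hpos (Nat.cast_nonneg _)

theorem tiltsDominatedByProducts_determinantalMeasure [Nonempty ι]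
    [NeZero (determinantalMeasure ν φ)] :
    TiltsDominatedByProducts (determinantalMeasure ν φ) := by
  intro V
  have hdet := re_det_weightedGram_pos (ν := ν) φ V
  have hpos : (weightedGram ν φ V).PosDef :=
    (weightedGram_posSemidef φ V).posDef_iff_det_ne_zero.mpr fun h => by simp [h] at hdet
  have hunit := (Matrix.isUnit_iff_isUnit_det _).mp hpos.isUnit
  let κ := ν.withDensity fun x => ENNReal.ofReal (intensityDensity ν φ V x)
  have hκ : IsProbabilityMeasure κ := by
    have h := integral_exp_withDensity_intensityDensity (ν := ν) φ V 0
    rw [add_zero, Matrix.nonsing_inv_mul _ hunit] at h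
    simpa [isProbabilityMeasure_iff_real, κ] using h
  refine ⟨⟨κ, hκ⟩, fun v => ?_⟩
  simp only [ProbabilityMeasure.coe_mk, κ]
  rw [integral_exp_tilted, integral_exp_withDensity_intensityDensity]
  rw [← map_add, ← ContinuousMap.coe_add, integral_exp_linearStatistic_determinantalMeasure,
    integral_exp_linearStatistic_determinantalMeasure,
    mul_div_mul_left _ _ (by positivity), div_le_iff₀' hdet]
  exact re_det_le_re_det_mul_pow_re_trace_inv_mul hpos (weightedGram_posSemidef φ (V + v))

end Determinantal

/-! ### Large deviations -/

section Concentration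

open ProbabilityTheory

variable {X : Type*} [TopologicalSpace X] [CompactSpace X] [MeasurableSpace X]
  [OpensMeasurableSpace X]

lemma integral_exp_le_exp_integral_add (κ : Measure X) [IsProbabilityMeasure κ] (v : C(X, ℝ)) :
    ∫ x, Real.exp (v x) ∂κ ≤ Real.exp (∫ x, v x ∂κ + ‖v‖ ^ 2 / 2) := by
  have hv : ∀ᵐ x ∂κ, v x ∈ Set.Icc (-‖v‖) ‖v‖ :=
    .of_forall fun x => abs_le.mp (v.norm_coe_le_norm x)
  have h := (hasSubgaussianMGF_of_mem_Icc v.measurable.aemeasurable hv).mgf_le 1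
  simp only [mgf, one_mul, Real.exp_sub, integral_div] at h
  rw [div_le_iff₀ (Real.exp_pos _), ← Real.exp_add] at h
  refine h.trans_eq ?_
  have hwidth : ‖‖v‖ - -‖v‖‖ / 2 = ‖v‖ := by
    rw [sub_neg_eq_add, Real.norm_of_nonneg (by positivity), add_self_div_two]
  push_cast
  rw [hwidth, one_pow, mul_one, add_comm]

variable {ι : Type*} [Fintype ι] {P : Measure (ι → X)} {κ : Measure X} [IsProbabilityMeasure κ]

namespace DominatedByProduct

lemma integral_exp_le (hP : DominatedByProduct P κ) (v : C(X, ℝ)) :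
    ∫ a, Real.exp (linearStatistic v a) ∂P ≤
      Real.exp (Fintype.card ι * (∫ x, v x ∂κ + ‖v‖ ^ 2 / 2)) := by
  rw [Real.exp_nat_mul]
  exact (hP v).trans (pow_le_pow_left₀ (integral_nonneg fun _ => (Real.exp_pos _).le)
    (integral_exp_le_exp_integral_add κ v) _)

variable [IsFiniteMeasure P]

lemma hasSubgaussianMGF (hP : DominatedByProduct P κ) {v : C(X, ℝ)} {B : NNReal}
    (hv : ‖v‖ ≤ B) :
    HasSubgaussianMGF (fun a => linearStatistic v a - Fintype.card ι * ∫ x, v x ∂κ)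
      (Fintype.card ι * B ^ 2) P := by
  have hexp (t : ℝ) (a : ι → X) :
      Real.exp (t * (linearStatistic v a - Fintype.card ι * ∫ x, v x ∂κ)) =
        Real.exp (linearStatistic (t • v : C(X, ℝ)) a) /
          Real.exp (t * (Fintype.card ι * ∫ x, v x ∂κ)) := by
    rw [mul_sub, Real.exp_sub, ContinuousMap.coe_smul, map_smul, Pi.smul_apply, smul_eq_mul]
  constructor
  · intro t
    simp_rw [hexp]
    exact (integrable_exp_linearStatistic P _).div_const _
  · intro t
    simp_rw [mgf, hexp, integral_div]
    rw [div_le_iff₀ (Real.exp_pos _), ← Real.exp_add]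
    refine (hP.integral_exp_le (t • v)).trans (Real.exp_le_exp.mpr ?_)
    have hsq : (|t| * ‖v‖) ^ 2 ≤ t ^ 2 * B ^ 2 := by
      rw [mul_pow, sq_abs]
      gcongr
    simp only [ContinuousMap.coe_smul, Pi.smul_apply, smul_eq_mul, integral_const_mul, norm_smul,
      Real.norm_eq_abs, NNReal.coe_mul, NNReal.coe_natCast, NNReal.coe_pow]
    calc (Fintype.card ι : ℝ) * (t * ∫ x, v x ∂κ + (|t| * ‖v‖) ^ 2 / 2)
        ≤ Fintype.card ι * (t * ∫ x, v x ∂κ + t ^ 2 * B ^ 2 / 2) := by gcongr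
      _ = _ := by ring

lemma measureReal_le_abs_sub_le (hP : DominatedByProduct P κ) {v : C(X, ℝ)} {B : NNReal}
    (hv : ‖v‖ ≤ B) {e : ℝ} (he : 0 ≤ e) :
    P.real {a | Fintype.card ι * e ≤ |linearStatistic v a - Fintype.card ι * ∫ x, v x ∂κ|} ≤
      2 * Real.exp (-(Fintype.card ι * e ^ 2 / (2 * (B : ℝ) ^ 2))) := by
  set s : ℝ := (Fintype.card ι : ℝ) with hs
  have hrate : -(s * e) ^ 2 / (2 * ((Fintype.card ι * B ^ 2 : NNReal) : ℝ)) =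
      -(s * e ^ 2 / (2 * (B : ℝ) ^ 2)) := by
    rcases eq_or_ne s 0 with h | h
    · simp [h]
    · push_cast
      rw [← hs]
      field_simp
  have hupper := (hP.hasSubgaussianMGF hv).measure_ge_le (ε := s * e) (by positivity)
  have hlower := (hP.hasSubgaussianMGF hv).neg.measure_ge_le (ε := s * e) (by positivity)
  rw [hrate] at hupper hlower
  rw [two_mul]
  refine le_trans ?_ (add_le_add hupper hlower)
  exact le_trans (measureReal_mono fun a ha => le_abs.mp ha.out) (measureReal_union_le _ _)

end DominatedByProduct

end Concentration

section LargeDeviations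

variable {ι X : Type*} [Fintype ι] [TopologicalSpace X]

lemma linearStatistic_sum_smul_le {τ : Type*} [Fintype τ] (u : τ → C(X, ℝ)) {m : τ → ℝ}
    {t : EuclideanSpace ℝ τ} {e R : ℝ} (ht : ‖t‖ ≤ R) {a : ι → X}
    (ha : ∀ i, |linearStatistic (u i) a - Fintype.card ι * m i| ≤ Fintype.card ι * e) :
    linearStatistic (∑ i, t i • u i : C(X, ℝ)) a ≤
      Fintype.card ι * (∑ i, t i * m i + e * (Fintype.card τ * R)) := by
  have hterm (i : τ) : t i * linearStatistic (u i) a ≤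
      Fintype.card ι * (t i * m i + e * R) := by
    have hti : |t i| ≤ R := (PiLp.norm_apply_le t i).trans ht
    have := (le_abs_self _).trans ((abs_mul (t i) _).trans_le
      (mul_le_mul hti (ha i) (abs_nonneg _) ((abs_nonneg _).trans hti)))
    linarith
  calc linearStatistic (∑ i, t i • u i : C(X, ℝ)) a
      = ∑ i, t i * linearStatistic (u i) a := by
        simp [ContinuousMap.coe_sum, ContinuousMap.coe_smul, map_sum]
    _ ≤ ∑ i, Fintype.card ι * (t i * m i + e * R) := Finset.sum_le_sum fun i _ => hterm i
    _ = _ := by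
        rw [← Finset.mul_sum, Finset.sum_add_distrib, Finset.sum_const, Finset.card_univ,
          nsmul_eq_mul]
        ring

variable [MeasurableSpace X]

/-- The logarithmic moment generating function of linear statistics, per point. -/
def scaledCGF (P : Measure (ι → X)) (V : C(X, ℝ)) : ℝ :=
  Real.log (∫ a, Real.exp (linearStatistic V a) ∂P) / Fintype.card ι

variable [CompactSpace X] [OpensMeasurableSpace X]

lemma DominatedByProduct.half_le_measureReal_forall_abs_sub_le {τ : Type*} [Fintype τ]
    {u : τ → C(X, ℝ)} {P : Measure (ι → X)}
    [IsProbabilityMeasure P] {κ : Measure X} [IsProbabilityMeasure κ]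
    (hκ : DominatedByProduct P κ) {B : NNReal} {e : ℝ} (he : 0 ≤ e) (hu : ∀ i, ‖u i‖ ≤ B)
    (htail : Fintype.card τ * (2 * Real.exp (-(Fintype.card ι * e ^ 2 / (2 * B ^ 2)))) ≤ 1 / 2) :
    1 / 2 ≤ P.real {a | ∀ i, |linearStatistic (u i) a - Fintype.card ι * ∫ x, u i x ∂κ| ≤
      Fintype.card ι * e} := by
  let bad (i : τ) : Set (ι → X) :=
    {a | Fintype.card ι * e ≤ |linearStatistic (u i) a - Fintype.card ι * ∫ x, u i x ∂κ|}
  have hbad : P.real (⋃ i, bad i) ≤ 1 / 2 := by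
    refine ((measureReal_iUnion_fintype_le _).trans (Finset.sum_le_sum fun i _ =>
      hκ.measureReal_le_abs_sub_le (hu i) he)).trans ?_
    simpa using htail
  have hmeas : MeasurableSet (⋃ i, bad i) := .iUnion fun i =>
    measurableSet_le measurable_const (((measurable_linearStatistic (u i)).sub_const _).abs)
  have hcompl := measureReal_compl (μ := P) hmeas
  rw [probReal_univ] at hcompl
  calc (1 / 2 : ℝ) ≤ P.real (⋃ i, bad i)ᶜ := by linarith
    _ ≤ _ := measureReal_mono fun a ha => by
      simp only [bad, Set.compl_iUnion, Set.mem_iInter, Set.mem_compl_iff, Set.mem_ofPred_eq,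
        not_le] at ha ⊢
      exact fun i => (ha i).le

variable [Nonempty ι]
  {P : Measure (ι → X)} [IsFiniteMeasure P] [NeZero P]

lemma exp_card_mul_scaledCGF (P : Measure (ι → X)) [IsFiniteMeasure P] [NeZero P] (V : C(X, ℝ)) :
    Real.exp (Fintype.card ι * scaledCGF P V) = ∫ a, Real.exp (linearStatistic V a) ∂P := by
  rw [scaledCGF, mul_div_cancel₀ _ (by positivity),
    Real.exp_log (integral_exp_pos (integrable_exp_linearStatistic P V))]

lemma integral_exp_tilted_linearStatistic (V v : C(X, ℝ)) :
    ∫ a, Real.exp (linearStatistic v a) ∂(P.tilted (linearStatistic V)) =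
      Real.exp (Fintype.card ι * (scaledCGF P (V + v) - scaledCGF P V)) := by
  rw [integral_exp_tilted, mul_sub, Real.exp_sub, exp_card_mul_scaledCGF, exp_card_mul_scaledCGF,
    ContinuousMap.coe_add, map_add]

lemma scaledCGF_add_le_add_norm (V v : C(X, ℝ)) :
    scaledCGF P (V + v) ≤ scaledCGF P V + ‖v‖ := by
  have hcard : (0 : ℝ) < Fintype.card ι := by positivity
  rw [← mul_le_mul_iff_right₀ hcard, ← Real.exp_le_exp, mul_add, Real.exp_add,
    exp_card_mul_scaledCGF, exp_card_mul_scaledCGF, ← integral_mul_const]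
  refine integral_mono (integrable_exp_linearStatistic P _)
    ((integrable_exp_linearStatistic P V).mul_const _) fun a => ?_
  rw [ContinuousMap.coe_add, map_add, Pi.add_apply, Real.exp_add]
  gcongr
  exact (le_abs_self _).trans (abs_linearStatistic_le v a)

lemma lipschitzWith_scaledCGF : LipschitzWith 1 (scaledCGF P) :=
  .of_le_add fun V W => by
    simpa [dist_eq_norm] using scaledCGF_add_le_add_norm (P := P) W (V - W)

lemma DominatedByProduct.scaledCGF_add_le {κ : Measure X} [IsProbabilityMeasure κ] {V : C(X, ℝ)}
    (hκ : DominatedByProduct (P.tilted (linearStatistic V)) κ) (v : C(X, ℝ)) :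
    scaledCGF P (V + v) ≤ scaledCGF P V + ∫ x, v x ∂κ + ‖v‖ ^ 2 / 2 := by
  have h := hκ.integral_exp_le v
  rw [integral_exp_tilted_linearStatistic, Real.exp_le_exp,
    mul_le_mul_iff_right₀ (by positivity)] at h
  linarith

lemma measureReal_tilted_mul_exp_le {V : C(X, ℝ)} {A : Set (ι → X)} (hA : MeasurableSet A) {c : ℝ}
    (hc : ∀ a ∈ A, linearStatistic V a ≤ Fintype.card ι * c) :
    (P.tilted (linearStatistic V)).real A * Real.exp (Fintype.card ι * (scaledCGF P V - c)) ≤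
      P.real A := by
  have hint := integrable_exp_linearStatistic P V
  rw [Measure.real, tilted_apply_eq_ofReal_integral' _ hA, ENNReal.toReal_ofReal
    (setIntegral_nonneg hA fun _ _ => div_nonneg (Real.exp_pos _).le
      (integral_nonneg fun _ => (Real.exp_pos _).le)), integral_div, mul_sub, Real.exp_sub,
    exp_card_mul_scaledCGF, div_mul_div_cancel₀ (integral_exp_pos hint).ne',
    div_le_iff₀ (Real.exp_pos _)]
  calc ∫ a in A, Real.exp (linearStatistic V a) ∂P
      ≤ ∫ _a in A, Real.exp (Fintype.card ι * c) ∂P :=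
        setIntegral_mono_on hint.integrableOn (integrable_const _) hA
          fun a ha => Real.exp_le_exp.mpr (hc a ha)
    _ = P.real A * Real.exp (Fintype.card ι * c) := by simp

variable {τ : Type*} [Fintype τ] (u : τ → C(X, ℝ)) (b : EuclideanSpace ℝ τ)

/-- The regularised dual functional of the problem of steering the linear statistics `u` to the
value `b`. -/
def regularizedDual (P : Measure (ι → X)) (η : ℝ) (t : EuclideanSpace ℝ τ) : ℝ :=
  scaledCGF P (∑ i, t i • u i) - inner ℝ t b + η / 2 * ‖t‖ ^ 2

lemma continuous_regularizedDual (η : ℝ) : Continuous (regularizedDual u b P η) := by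
  unfold regularizedDual
  have := (lipschitzWith_scaledCGF (P := P)).continuous
  fun_prop

lemma DominatedByProduct.regularizedDual_add_single_le [DecidableEq τ] {η : ℝ}
    {t : EuclideanSpace ℝ τ} {κ : Measure X} [IsProbabilityMeasure κ]
    (hκ : DominatedByProduct (P.tilted (linearStatistic (∑ i, t i • u i : C(X, ℝ)))) κ)
    (i : τ) (r : ℝ) :
    regularizedDual u b P η (t + r • EuclideanSpace.single i (1 : ℝ)) ≤
      regularizedDual u b P η t +
        (r * (∫ x, u i x ∂κ - b i + η * t i) + r ^ 2 * ((‖u i‖ ^ 2 + η) / 2)) := by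
  have hsum : ∑ k, (t + r • EuclideanSpace.single i (1 : ℝ)) k • u k =
      ∑ k, t k • u k + r • u i := by
    simp [add_smul, Finset.sum_add_distrib, ite_smul]
  have hcgf := hκ.scaledCGF_add_le (r • u i)
  have hnorm : ‖t + r • EuclideanSpace.single i (1 : ℝ)‖ ^ 2 = ‖t‖ ^ 2 + 2 * (r * t i) + r ^ 2 := by
    rw [norm_add_sq_real, inner_smul_right, EuclideanSpace.inner_single_right]
    simp [norm_smul]
  have hinner : inner ℝ (t + r • EuclideanSpace.single i (1 : ℝ)) b = inner ℝ t b + r * b i := by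
    rw [inner_add_left, inner_smul_left, EuclideanSpace.inner_single_left]
    simp
  simp only [ContinuousMap.coe_smul, Pi.smul_apply, smul_eq_mul, integral_const_mul, norm_smul,
    mul_pow, Real.norm_eq_abs, sq_abs] at hcgf
  rw [regularizedDual, regularizedDual, hsum, hnorm, hinner]
  linarith

lemma integral_eq_of_isLocalMin_regularizedDual {η : ℝ} {t : EuclideanSpace ℝ τ}
    (hmin : IsLocalMin (regularizedDual u b P η) t) {κ : Measure X} [IsProbabilityMeasure κ]
    (hκ : DominatedByProduct (P.tilted (linearStatistic (∑ i, t i • u i : C(X, ℝ)))) κ) (i : τ) :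
    ∫ x, u i x ∂κ = b i - η * t i := by
  classical
  set A := ∫ x, u i x ∂κ - b i + η * t i
  let g (r : ℝ) : ℝ := r * A + r ^ 2 * ((‖u i‖ ^ 2 + η) / 2)
  have hg : HasDerivAt g A 0 :=
    (((hasDerivAt_id' (0 : ℝ)).mul_const A).fun_add
      (((hasDerivAt_id' (0 : ℝ)).fun_pow 2).mul_const _)).congr_deriv (by norm_num)
  have hline : Tendsto (fun r : ℝ => t + r • EuclideanSpace.single i (1 : ℝ)) (𝓝 0) (𝓝 t) := by
    have : Continuous fun r : ℝ => t + r • EuclideanSpace.single i (1 : ℝ) := by fun_prop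
    simpa using this.tendsto 0
  have hgmin : IsLocalMin g 0 := by
    filter_upwards [hline.eventually hmin] with r hr
    have := hκ.regularizedDual_add_single_le u b i r (η := η)
    simp only [g]
    linarith
  linarith [hgmin.hasDerivAt_eq_zero hg]

lemma exists_isLocalMin_regularizedDual {η R I C : ℝ} (hη : 0 < η)
    (hI : ∀ t ∈ Metric.closedBall (0 : EuclideanSpace ℝ τ) R,
      I ≤ scaledCGF P (∑ i, t i • u i) - inner ℝ t b)
    (hC : scaledCGF P 0 ≤ C) (hR : 0 ≤ R) (hCI : C - I < η / 2 * R ^ 2) :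
    ∃ t : EuclideanSpace ℝ τ, ‖t‖ ≤ R ∧ IsLocalMin (regularizedDual u b P η) t ∧
      η / 2 * ‖t‖ ^ 2 ≤ C - I := by
  obtain ⟨t, ht, hmin⟩ := (isCompact_closedBall (0 : EuclideanSpace ℝ τ) R).exists_isMinOn
    ⟨0, Metric.mem_closedBall_self hR⟩ (continuous_regularizedDual u b (P := P) η).continuousOn
  have hzero : regularizedDual u b P η t ≤ C := by
    refine (hmin (Metric.mem_closedBall_self hR)).trans ?_
    simpa [regularizedDual] using hC
  have hsq : η / 2 * ‖t‖ ^ 2 ≤ C - I := by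
    have := hI t ht
    unfold regularizedDual at hzero
    linarith
  have hlt : ‖t‖ < R := by
    refine lt_of_pow_lt_pow_left₀ 2 hR ?_
    exact lt_of_mul_lt_mul_left (hsq.trans_lt hCI) (by positivity)
  exact ⟨t, hlt.le, hmin.isLocalMin (Metric.closedBall_mem_nhds_of_mem (by simpa using hlt)), hsq⟩

lemma abs_mul_apply_le_sqrt {η K : ℝ} (hη : 0 ≤ η) {t : EuclideanSpace ℝ τ}
    (ht : η / 2 * ‖t‖ ^ 2 ≤ K) (i : τ) : |η * t i| ≤ √(2 * η * K) := by
  have hti : t i ^ 2 ≤ ‖t‖ ^ 2 := sq_le_sq.mpr (by simpa using PiLp.norm_apply_le t i)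
  refine Real.abs_le_sqrt ?_
  calc (η * t i) ^ 2 = 2 * η * (η / 2 * t i ^ 2) := by ring
    _ ≤ 2 * η * K := by
      gcongr
      exact (mul_le_mul_of_nonneg_left hti (by positivity)).trans ht

theorem TiltsDominatedByProducts.half_exp_le_measureReal (hP : TiltsDominatedByProducts P)
    {B : NNReal} {e η R I C : ℝ} (he : 0 ≤ e) (hη : 0 < η) (hR : 0 ≤ R) (hu : ∀ i, ‖u i‖ ≤ B)
    (hI : ∀ t ∈ Metric.closedBall (0 : EuclideanSpace ℝ τ) R,
      I ≤ scaledCGF P (∑ i, t i • u i) - inner ℝ t b)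
    (hC : scaledCGF P 0 ≤ C) (hCI : C - I < η / 2 * R ^ 2)
    (htail : Fintype.card τ * (2 * Real.exp (-(Fintype.card ι * e ^ 2 / (2 * B ^ 2)))) ≤ 1 / 2) :
    1 / 2 * Real.exp (Fintype.card ι * (I - e * (Fintype.card τ * R))) ≤
      P.real {a | ∀ i, |linearStatistic (u i) a - Fintype.card ι * b i| ≤
        Fintype.card ι * (e + √(2 * η * (C - I)))} := by
  obtain ⟨t, htR, hmin, hsq⟩ := exists_isLocalMin_regularizedDual u b hη hI hC hR hCI
  set V : C(X, ℝ) := ∑ i, t i • u i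
  obtain ⟨κ, hκ⟩ := hP V
  have hmoment := integral_eq_of_isLocalMin_regularizedDual u b hmin hκ
  set A : Set (ι → X) := {a | ∀ i, |linearStatistic (u i) a - Fintype.card ι * ∫ x, u i x ∂κ| ≤
    Fintype.card ι * e}
  have hA : MeasurableSet A := by
    simp only [A, Set.ofPred_forall]
    exact .iInter fun i =>
      measurableSet_le ((measurable_linearStatistic (u i)).sub_const _).abs measurable_const
  have := isProbabilityMeasure_tilted (integrable_exp_linearStatistic P V)
  have hhalf : 1 / 2 ≤ (P.tilted (linearStatistic V)).real A :=
    hκ.half_le_measureReal_forall_abs_sub_le he hu htail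
  have hVA (a) (ha : a ∈ A) : linearStatistic V a ≤
      Fintype.card ι * (inner ℝ t b + e * (Fintype.card τ * R)) := by
    refine (linearStatistic_sum_smul_le u htR ha).trans ?_
    gcongr
    simp only [PiLp.inner_apply, RCLike.inner_apply, conj_trivial, hmoment]
    refine Finset.sum_le_sum fun i _ => ?_
    nlinarith [mul_nonneg hη.le (sq_nonneg (t i))]
  have hAb : A ⊆ {a | ∀ i, |linearStatistic (u i) a - Fintype.card ι * b i| ≤
        Fintype.card ι * (e + √(2 * η * (C - I)))} := fun a ha i => by
    have hshift := abs_mul_apply_le_sqrt hη.le hsq i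
    calc |linearStatistic (u i) a - Fintype.card ι * b i|
        ≤ |linearStatistic (u i) a - Fintype.card ι * ∫ x, u i x ∂κ| +
            |Fintype.card ι * ∫ x, u i x ∂κ - Fintype.card ι * b i| := abs_sub_le ..
      _ = |linearStatistic (u i) a - Fintype.card ι * ∫ x, u i x ∂κ| +
            Fintype.card ι * |η * t i| := by
        rw [hmoment, ← mul_sub, sub_sub_cancel_left, abs_mul, abs_neg, Nat.abs_cast]
      _ ≤ _ := by
        rw [mul_add]
        exact add_le_add (ha i) (by gcongr)
  have hrate : I - e * (Fintype.card τ * R) ≤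
      scaledCGF P V - (inner ℝ t b + e * (Fintype.card τ * R)) := by
    linarith [hI t (by simpa using htR)]
  calc 1 / 2 * Real.exp (Fintype.card ι * (I - e * (Fintype.card τ * R)))
      ≤ (P.tilted (linearStatistic V)).real A * Real.exp (Fintype.card ι *
          (scaledCGF P V - (inner ℝ t b + e * (Fintype.card τ * R)))) := by gcongr
    _ ≤ P.real A := measureReal_tilted_mul_exp_le hA hVA
    _ ≤ _ := measureReal_mono hAb

end LargeDeviations

/-! ### The weighted transfinite diameter -/

section LejaPoints

variable {ι X 𝕜 : Type*} [LinearOrder ι] [TopologicalSpace X] [CompactSpace X] [Nonempty X]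
  [RCLike 𝕜] {f : ι → C(X, 𝕜)}

lemma exists_norm_apply_eq_norm (q : C(X, 𝕜)) : ∃ x, ‖q x‖ = ‖q‖ := by
  obtain ⟨x, -, hx⟩ := isCompact_univ.exists_isMaxOn Set.univ_nonempty
    q.continuous.norm.continuousOn
  exact ⟨x, (q.norm_coe_le_norm x).antisymm
    ((q.norm_le (norm_nonneg _)).mpr fun y => hx (Set.mem_univ y))⟩

/-- Leja's construction: each new point maximises the remainder of the interpolation at the
previous ones. -/
lemma exists_lejaPoints (hf : ∀ i, f i ∉ Submodule.span 𝕜 (f '' Set.Iio i)) (s : Finset ι) :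
    ∃ (p : ι → C(X, 𝕜)) (a : ι → X),
      (∀ i ∈ s, p i - f i ∈ Submodule.span 𝕜 (f '' Set.Iio i)) ∧
      (∀ i ∈ s, ‖p i (a i)‖ = ‖p i‖) ∧ (∀ i ∈ s, ∀ j ∈ s, j < i → p i (a j) = 0) ∧
      ∀ y : ι → 𝕜, ∃ h ∈ Submodule.span 𝕜 (f '' s), ∀ j ∈ s, h (a j) = y j := by
  induction s using Finset.induction_on_max with
  | empty =>
    exact ⟨0, fun _ => Classical.arbitrary X, by simp, by simp, by simp,
      fun _ => ⟨0, Submodule.zero_mem _, by simp⟩⟩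
  | insert m s hm ih =>
    obtain ⟨p, a, hspan, hmax, hzero, hinterp⟩ := ih
    obtain ⟨h, hh, hha⟩ := hinterp fun j => f m (a j)
    obtain ⟨x, hx⟩ := exists_norm_apply_eq_norm (f m - h)
    have hms : m ∉ s := fun hmem => (hm m hmem).false
    have hne (i : ι) (hi : i ∈ s) : i ≠ m := ne_of_mem_of_not_mem hi hms
    have hh' : h ∈ Submodule.span 𝕜 (f '' Set.Iio m) :=
      Submodule.span_mono (Set.image_mono hm) hh
    have hx0 : (f m - h) x ≠ 0 := by
      rw [← norm_ne_zero_iff, hx, norm_ne_zero_iff, sub_ne_zero]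
      rintro heq
      exact hf m (heq ▸ hh')
    refine ⟨Function.update p m (f m - h), Function.update a m x, ?_, ?_, ?_, fun y => ?_⟩
    · simp +contextual [hne, hspan, hh']
    · simpa +contextual [hne, hmax] using hx
    · have hlt (i : ι) (hi : i ∈ s) : ¬m < i := (hm i hi).le.not_gt
      simp +contextual [hne, hlt, hha, hzero]
    · obtain ⟨g, hg, hga⟩ := hinterp y
      have hle : Submodule.span 𝕜 (f '' s) ≤ Submodule.span 𝕜 (f '' (insert m s : Finset ι)) :=
        Submodule.span_mono (Set.image_mono (by simp))
      refine ⟨g + ((y m - g x) / (f m - h) x) • (f m - h),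
        add_mem (hle hg) (Submodule.smul_mem _ _ (sub_mem
          (Submodule.subset_span (Set.mem_image_of_mem f (by simp))) (hle hh))), ?_⟩
      rw [Finset.forall_mem_insert]
      refine ⟨?_, fun j hj => ?_⟩
      · simp only [Function.update_self, ContinuousMap.add_apply, ContinuousMap.smul_apply,
          smul_eq_mul]
        rw [div_mul_cancel₀ _ hx0]
        ring
      · simp [hne j hj, hga j hj, hha j hj]

end LejaPoints

section TriangularFamilies

variable {ι : Type*} [Fintype ι] [DecidableEq ι]

lemma det_eq_det_of_sub_mem_span [LinearOrder ι] {R M : Type*} [CommRing R] [AddCommGroup M]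
    [Module R M] {f p : ι → M}
    (hp : ∀ i, p i - f i ∈ Submodule.span R (f '' Set.Iio i)) (ℓ : ι → M →ₗ[R] R) :
    (Matrix.of fun i j => ℓ j (p i)).det = (Matrix.of fun i j => ℓ j (f i)).det := by
  choose c hc hcp using fun i => (Finsupp.mem_span_image_iff_linearCombination R).mp (hp i)
  have hc0 {i l : ι} (hil : i ≤ l) : c i l = 0 :=
    Finsupp.notMem_support_iff.mp fun h => (hc i h).out.not_ge hil
  let T : Matrix ι ι R := Matrix.of fun i l => c i l + if i = l then 1 else 0
  have hT : T.det = 1 := by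
    rw [Matrix.det_of_isLowerTriangular]
    · simp [T, hc0]
    · intro i j (hij : i < j)
      simp [T, hij.ne, hc0 hij.le]
  have hmul : (Matrix.of fun i j => ℓ j (p i)) = T * Matrix.of fun i j => ℓ j (f i) := by
    ext i j
    rw [Matrix.of_apply, ← sub_add_cancel (p i) (f i), ← hcp i]
    simp [T, Matrix.mul_apply, add_mul, Finset.sum_add_distrib, Finsupp.linearCombination_apply,
      Finsupp.sum_fintype]
  rw [hmul, Matrix.det_mul, hT, one_mul]

lemma norm_det_le_factorial_mul_prod {𝕜 : Type*} [NormedField 𝕜]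
    {A : Matrix ι ι 𝕜} {c : ι → ℝ} (h : ∀ i j, ‖A i j‖ ≤ c i) :
    ‖A.det‖ ≤ (Fintype.card ι).factorial * ∏ i, c i := by
  have hterm (σ : Equiv.Perm ι) : ‖Equiv.Perm.sign σ • ∏ i, A (σ i) i‖ ≤ ∏ i, c i := by
    have hsign : ‖Equiv.Perm.sign σ • ∏ i, A (σ i) i‖ = ‖∏ i, A (σ i) i‖ := by
      rcases Int.units_eq_one_or (Equiv.Perm.sign σ) with hσ | hσ <;> simp [hσ]
    rw [hsign, norm_prod, ← Equiv.prod_comp σ c]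
    exact Finset.prod_le_prod (fun _ _ => norm_nonneg _) fun i _ => h _ _
  rw [Matrix.det_apply]
  refine (norm_sum_le _ _).trans ((Finset.sum_le_sum fun σ _ => hterm σ).trans_eq ?_)
  rw [Finset.sum_const, Finset.card_univ, Fintype.card_perm, nsmul_eq_mul]

variable [LinearOrder ι] {X 𝕜 : Type*} [TopologicalSpace X] [RCLike 𝕜]
  {f p : ι → C(X, 𝕜)}

lemma det_eval_eq_det_eval_of_sub_mem_span
    (hp : ∀ i, p i - f i ∈ Submodule.span 𝕜 (f '' Set.Iio i)) (a : ι → X) :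
    (Matrix.of fun i j => p i (a j)).det = (Matrix.of fun i j => f i (a j)).det :=
  det_eq_det_of_sub_mem_span hp fun j => (ContinuousMap.evalCLM 𝕜 (a j)).toLinearMap

variable [CompactSpace X]

lemma norm_det_le_factorial_mul_prod_norm
    (hp : ∀ i, p i - f i ∈ Submodule.span 𝕜 (f '' Set.Iio i)) (a : ι → X) :
    ‖(Matrix.of fun i j => f i (a j)).det‖ ≤ (Fintype.card ι).factorial * ∏ i, ‖p i‖ := by
  rw [← det_eval_eq_det_eval_of_sub_mem_span hp a]
  exact norm_det_le_factorial_mul_prod fun i j => (p i).norm_coe_le_norm (a j)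

variable [Nonempty X]

lemma exists_prod_norm_le_norm_det (f : ι → C(X, 𝕜)) :
    ∃ p : ι → C(X, 𝕜), (∀ i, p i - f i ∈ Submodule.span 𝕜 (f '' Set.Iio i)) ∧
      ∃ a : ι → X, ∏ i, ‖p i‖ ≤ ‖(Matrix.of fun i j => f i (a j)).det‖ := by
  by_cases hf : ∀ i, f i ∉ Submodule.span 𝕜 (f '' Set.Iio i)
  · obtain ⟨p, a, hspan, hmax, hzero, -⟩ := exists_lejaPoints hf Finset.univ
    simp only [Finset.mem_univ, true_imp_iff] at hspan hmax hzero
    refine ⟨p, hspan, a, ?_⟩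
    rw [← det_eval_eq_det_eval_of_sub_mem_span hspan a,
      Matrix.det_of_isUpperTriangular (M := Matrix.of fun i j => p i (a j))
        fun i j hij => hzero i j hij, norm_prod]
    exact (Finset.prod_congr rfl fun i _ => (hmax i).symm).le
  · push Not at hf
    obtain ⟨k, hk⟩ := hf
    refine ⟨Function.update f k 0, fun i => ?_, fun _ => Classical.arbitrary X, ?_⟩
    · obtain rfl | hik := eq_or_ne i k
      · simpa using hk
      · simp [hik]
    · rw [Finset.prod_eq_zero (Finset.mem_univ k) (by simp)]
      exact norm_nonneg _

end TriangularFamilies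

section WeightedMonomials

/-- The weighted monomial `w ^ d * x ^ α`; for `w = e^{-Q}` its values are the entries of the
weighted Vandermonde matrix. -/
def weightedMonomial {σ A : Type*} [Fintype σ] [CommMonoid A] (w : A) (x : σ → A) (d : ℕ)
    (α : σ → ℕ) : A :=
  w ^ d * ∏ i, x i ^ α i

/-- Multi-indices of degree at most `d`, ordered lexicographically. -/
abbrev MultiIndex (σ : Type*) [Fintype σ] (d : ℕ) := {α : Lex (σ → ℕ) // ∑ i, ofLex α i ≤ d}

variable {σ : Type*} [Fintype σ]

instance MultiIndex.finite (d : ℕ) : Finite (MultiIndex σ d) :=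
  ((Set.Finite.pi' fun _ : σ => Set.finite_Iic d).subset fun α (hα : ∑ i, ofLex α i ≤ d) i =>
    (Finset.single_le_sum (fun _ _ => Nat.zero_le _) (Finset.mem_univ i)).trans hα).to_subtype

instance MultiIndex.fintype (d : ℕ) : Fintype (MultiIndex σ d) := .ofFinite _

section Algebra

variable {A : Type*} [CommMonoid A] (w : A) (x : σ → A)

lemma weightedMonomial_add (d e : ℕ) (α β : σ → ℕ) :
    weightedMonomial w x (d + e) (α + β) =
      weightedMonomial w x d α * weightedMonomial w x e β := by
  simp only [weightedMonomial, pow_add, Pi.add_apply, Finset.prod_mul_distrib]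
  exact mul_mul_mul_comm ..

lemma weightedMonomial_eq_mul_prod {d : ℕ} {α : σ → ℕ} (hα : ∑ i, α i ≤ d) :
    weightedMonomial w x d α = w ^ (d - ∑ i, α i) * ∏ i, (w * x i) ^ α i := by
  simp_rw [mul_pow]
  rw [Finset.prod_mul_distrib, Finset.prod_pow_eq_pow_sum, ← mul_assoc, ← pow_add,
    Nat.sub_add_cancel hα, weightedMonomial]

end Algebra

lemma norm_weightedMonomial_le {A : Type*} [NormedCommRing A] [NormOneClass A] {w : A} {x : σ → A}
    {M : ℝ} (hw : ‖w‖ ≤ M) (hx : ∀ i, ‖w * x i‖ ≤ M) {d : ℕ} {α : σ → ℕ} (hα : ∑ i, α i ≤ d) :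
    ‖weightedMonomial w x d α‖ ≤ M ^ d := by
  have hM : 0 ≤ M := (norm_nonneg w).trans hw
  calc ‖weightedMonomial w x d α‖
      ≤ ‖w ^ (d - ∑ i, α i)‖ * ∏ i, ‖(w * x i) ^ α i‖ := by
        rw [weightedMonomial_eq_mul_prod w x hα]
        exact (norm_mul_le _ _).trans (by gcongr; exact Finset.norm_prod_le _ _)
    _ ≤ M ^ (d - ∑ i, α i) * ∏ i, M ^ α i := by
        gcongr with i
        · exact (norm_pow_le _ _).trans (by gcongr)
        · exact (norm_pow_le _ _).trans (by gcongr; exact hx i)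
    _ = M ^ d := by rw [Finset.prod_pow_eq_pow_sum, ← pow_add, Nat.sub_add_cancel hα]

variable [LinearOrder σ] {A : Type*} [CommRing A] (𝕜 : Type*) [Field 𝕜] [Algebra 𝕜 A]
  (w : A) (x : σ → A)

/-- `p` is a monic weighted polynomial of degree at most `d` with leading multi-index `α`. -/
def IsMonicAt (d : ℕ) (α : σ → ℕ) (p : A) : Prop :=
  ∑ i, α i ≤ d ∧ p - weightedMonomial w x d α ∈
    Submodule.span 𝕜 (weightedMonomial w x d '' {β | toLex β < toLex α ∧ ∑ i, β i ≤ d})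

lemma isMonicAt_iff_sub_mem_span {d : ℕ} {α : MultiIndex σ d} {p : A} :
    IsMonicAt 𝕜 w x d (ofLex α.1) p ↔ p - weightedMonomial w x d (ofLex α.1) ∈
      Submodule.span 𝕜 ((fun β : MultiIndex σ d => weightedMonomial w x d (ofLex β.1)) ''
        Set.Iio α) := by
  have himage : weightedMonomial w x d '' {β | toLex β < α.1 ∧ ∑ i, β i ≤ d} =
      (fun β : MultiIndex σ d => weightedMonomial w x d (ofLex β.1)) '' Set.Iio α := by
    ext y
    constructor
    · rintro ⟨β, ⟨hlt, hdeg⟩, rfl⟩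
      exact ⟨⟨toLex β, hdeg⟩, hlt, rfl⟩
    · rintro ⟨β, hlt, rfl⟩
      exact ⟨ofLex β.1, ⟨hlt, β.2⟩, rfl⟩
  rw [IsMonicAt, toLex_ofLex, himage]
  exact and_iff_right α.2

variable {𝕜 w x}

lemma isMonicAt_weightedMonomial {d : ℕ} {α : σ → ℕ} (hα : ∑ i, α i ≤ d) :
    IsMonicAt 𝕜 w x d α (weightedMonomial w x d α) :=
  ⟨hα, by simp⟩

namespace IsMonicAt

lemma mul {d e : ℕ} {α β : σ → ℕ} {p q : A} (hp : IsMonicAt 𝕜 w x d α p)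
    (hq : IsMonicAt 𝕜 w x e β q) : IsMonicAt 𝕜 w x (d + e) (α + β) (p * q) := by
  have hdeg : ∑ i, (α + β) i ≤ d + e := by
    simpa [Finset.sum_add_distrib] using add_le_add hp.1 hq.1
  refine ⟨hdeg, ?_⟩
  set L := Submodule.span 𝕜
    (weightedMonomial w x (d + e) '' {γ | toLex γ < toLex (α + β) ∧ ∑ i, γ i ≤ d + e})
  have hmonomial {γ δ : σ → ℕ} (hγ : ∑ i, γ i ≤ d) (hδ : ∑ i, δ i ≤ e)
      (hlt : toLex γ + toLex δ < toLex α + toLex β) :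
      weightedMonomial w x d γ * weightedMonomial w x e δ ∈ L := by
    rw [← weightedMonomial_add]
    refine Submodule.subset_span ⟨γ + δ, ⟨hlt, ?_⟩, rfl⟩
    simpa [Finset.sum_add_distrib] using add_le_add hγ hδ
  have hleft : (p - weightedMonomial w x d α) * weightedMonomial w x e β ∈ L := by
    refine Submodule.span_le (p := L.comap (LinearMap.mulRight 𝕜 _)) |>.mpr ?_ hp.2
    rintro _ ⟨γ, ⟨hlt, hγ⟩, rfl⟩
    exact hmonomial hγ hq.1 (add_lt_add_left hlt _)
  have hright : weightedMonomial w x d α * (q - weightedMonomial w x e β) ∈ L := by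
    refine Submodule.span_le (p := L.comap (LinearMap.mulLeft 𝕜 _)) |>.mpr ?_ hq.2
    rintro _ ⟨δ, ⟨hlt, hδ⟩, rfl⟩
    exact hmonomial hp.1 hδ (add_lt_add_right hlt _)
  have hcross : (p - weightedMonomial w x d α) * (q - weightedMonomial w x e β) ∈ L := by
    have hmem := Submodule.mul_mem_mul hp.2 hq.2
    rw [Submodule.span_mul_span] at hmem
    refine Submodule.span_le.mpr ?_ hmem
    rintro _ ⟨_, ⟨γ, ⟨hγlt, hγ⟩, rfl⟩, _, ⟨δ, ⟨hδlt, hδ⟩, rfl⟩, rfl⟩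
    exact hmonomial hγ hδ (add_lt_add hγlt hδlt)
  rw [weightedMonomial_add]
  convert add_mem (add_mem hleft hright) hcross using 1
  ring

lemma pow {d : ℕ} {α : σ → ℕ} {p : A} (hp : IsMonicAt 𝕜 w x d α p) (k : ℕ) :
    IsMonicAt 𝕜 w x (k * d) (k • α) (p ^ k) := by
  induction k with
  | zero => simpa [weightedMonomial] using isMonicAt_weightedMonomial (d := 0) (α := 0) (by simp)
  | succ k ih => simpa [add_mul, add_smul, pow_succ] using ih.mul hp

end IsMonicAt

end WeightedMonomials

section WeightedVandermonde

variable {X 𝕜 σ : Type*} [TopologicalSpace X] [RCLike 𝕜] [Fintype σ]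

/-- The Vandermonde determinant of the weighted monomials of degree at most `d`, evaluated at
points indexed by these monomials. -/
def weightedVandermonde (w : C(X, 𝕜)) (x : σ → C(X, 𝕜)) (d : ℕ) (a : MultiIndex σ d → X) : 𝕜 :=
  (Matrix.of fun α β => weightedMonomial w x d (ofLex α.1) (a β)).det

/-- The multi-index `k α + ρ`. -/
def MultiIndex.mulAdd {k d D : ℕ} (hD : k * (d + Fintype.card σ) ≤ D)
    (αρ : MultiIndex σ d × (σ → Fin k)) : MultiIndex σ D :=
  ⟨toLex (k • ofLex αρ.1.1 + fun i => (αρ.2 i : ℕ)), by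
    have hρ : ∑ i, (αρ.2 i : ℕ) ≤ Fintype.card σ * k :=
      (Finset.sum_le_sum fun i _ => (αρ.2 i).is_lt.le).trans_eq (by simp)
    have hα : k * ∑ i, ofLex αρ.1.1 i ≤ k * d := Nat.mul_le_mul_left k αρ.1.2
    simp only [ofLex_toLex, Pi.add_apply, Pi.smul_apply, smul_eq_mul, Finset.sum_add_distrib,
      ← Finset.mul_sum]
    linarith [mul_add k d (Fintype.card σ), mul_comm k (Fintype.card σ)]⟩

lemma MultiIndex.mulAdd_injective {k d D : ℕ} (hD : k * (d + Fintype.card σ) ≤ D) :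
    Function.Injective (MultiIndex.mulAdd (σ := σ) hD) := by
  rintro ⟨α, ρ⟩ ⟨β, τ⟩ h
  have hcoord (i : σ) : k * ofLex α.1 i + ρ i = k * ofLex β.1 i + τ i :=
    congrFun (congrArg (fun γ : MultiIndex σ D => ofLex γ.1) h) i
  have hα (i : σ) : ofLex α.1 i = ofLex β.1 i := by
    have hdiv := congrArg (· / k) (hcoord i)
    simpa [Nat.mul_add_div (Nat.zero_le _ |>.trans_lt (ρ i).is_lt), Nat.div_eq_of_lt] using hdiv
  refine Prod.ext (Subtype.ext (funext hα)) (funext fun i => Fin.ext ?_)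
  have hi := hcoord i
  rw [hα i] at hi
  exact Nat.add_left_cancel hi

variable [LinearOrder σ] [CompactSpace X] {w : C(X, 𝕜)} {x : σ → C(X, 𝕜)}

lemma norm_weightedVandermonde_le {d : ℕ} {p : MultiIndex σ d → C(X, 𝕜)}
    (hp : ∀ α, IsMonicAt 𝕜 w x d (ofLex α.1) (p α)) (a : MultiIndex σ d → X) :
    ‖weightedVandermonde w x d a‖ ≤ (Fintype.card (MultiIndex σ d)).factorial * ∏ α, ‖p α‖ :=
  norm_det_le_factorial_mul_prod_norm (fun α => (isMonicAt_iff_sub_mem_span 𝕜 w x).mp (hp α)) a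

lemma exists_prod_norm_le_norm_weightedVandermonde [Nonempty X] (w : C(X, 𝕜)) (x : σ → C(X, 𝕜))
    (d : ℕ) :
    ∃ p : MultiIndex σ d → C(X, 𝕜), (∀ α, IsMonicAt 𝕜 w x d (ofLex α.1) (p α)) ∧
      ∃ a, ∏ α, ‖p α‖ ≤ ‖weightedVandermonde w x d a‖ := by
  obtain ⟨p, hp, ha⟩ := exists_prod_norm_le_norm_det
    fun α : MultiIndex σ d => weightedMonomial w x d (ofLex α.1)
  exact ⟨p, fun α => (isMonicAt_iff_sub_mem_span 𝕜 w x).mpr (hp α), ha⟩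

/-- The monic polynomials of degree `D` that bound the determinant are built from near-minimal
ones of degree `d` by taking `k`-th powers and multiplying by short monomials. -/
lemma exists_isMonicAt_norm_le_extend [Nonempty X] {k d D : ℕ} (hD : k * (d + Fintype.card σ) ≤ D)
    (hw : ‖w‖ ≤ 1) (hx : ∀ i, ‖w * x i‖ ≤ 1) {p : MultiIndex σ d → C(X, 𝕜)}
    (hp : ∀ α, IsMonicAt 𝕜 w x d (ofLex α.1) (p α)) (γ : MultiIndex σ D) :
    ∃ q : C(X, 𝕜), IsMonicAt 𝕜 w x D (ofLex γ.1) q ∧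
      ‖q‖ ≤ Function.extend (MultiIndex.mulAdd hD) (fun αρ => ‖p αρ.1‖ ^ k) 1 γ := by
  by_cases hγ : γ ∈ Set.range (MultiIndex.mulAdd hD)
  · obtain ⟨⟨α, ρ⟩, rfl⟩ := hγ
    have hρ : ∑ i, (ρ i : ℕ) ≤ D - k * d := by
      have hsum : ∑ i, (ρ i : ℕ) ≤ Fintype.card σ * k :=
        (Finset.sum_le_sum fun i _ => (ρ i).is_lt.le).trans_eq (by simp)
      have := mul_add k d (Fintype.card σ)
      have := mul_comm k (Fintype.card σ)
      lia
    refine ⟨p α ^ k * weightedMonomial w x (D - k * d) fun i => ρ i, ?_, ?_⟩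
    · have hmonic := ((hp α).pow k).mul (isMonicAt_weightedMonomial hρ)
      rwa [Nat.add_sub_cancel' (le_trans (by gcongr; lia) hD)] at hmonic
    · rw [(MultiIndex.mulAdd_injective hD).extend_apply]
      calc ‖p α ^ k * weightedMonomial w x (D - k * d) fun i => ρ i‖
          ≤ ‖p α‖ ^ k * 1 ^ (D - k * d) := (norm_mul_le _ _).trans
            (by gcongr; exacts [norm_pow_le _ _, norm_weightedMonomial_le hw hx hρ])
        _ = ‖p α‖ ^ k := by rw [one_pow, mul_one]
  · refine ⟨weightedMonomial w x D (ofLex γ.1), isMonicAt_weightedMonomial γ.2, ?_⟩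
    rw [Function.extend_apply' _ _ _ hγ]
    exact (norm_weightedMonomial_le hw hx γ.2).trans_eq (one_pow D)

lemma norm_weightedVandermonde_le_pow [Nonempty X] {k d D : ℕ}
    (hD : k * (d + Fintype.card σ) ≤ D) (hw : ‖w‖ ≤ 1) (hx : ∀ i, ‖w * x i‖ ≤ 1) {V : ℝ}
    (hV : ∀ a, ‖weightedVandermonde w x d a‖ ≤ V) (a : MultiIndex σ D → X) :
    ‖weightedVandermonde w x D a‖ ≤
      (Fintype.card (MultiIndex σ D)).factorial * V ^ (k ^ (Fintype.card σ + 1)) := by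
  obtain ⟨p, hp, a₀, ha₀⟩ := exists_prod_norm_le_norm_weightedVandermonde w x d
  choose q hq hqle using exists_isMonicAt_norm_le_extend hD hw hx hp
  refine (norm_weightedVandermonde_le hq a).trans ?_
  gcongr
  calc ∏ γ, ‖q γ‖
      ≤ ∏ γ, Function.extend (MultiIndex.mulAdd hD) (fun αρ => ‖p αρ.1‖ ^ k) 1 γ := by
        gcongr with γ; exact hqle γ
    _ = ∏ αρ : MultiIndex σ d × (σ → Fin k), ‖p αρ.1‖ ^ k :=
        (Fintype.prod_of_injective _ (MultiIndex.mulAdd_injective hD) _ _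
          (fun γ hγ => by rw [Function.extend_apply' _ _ _ hγ, Pi.one_apply])
          fun αρ => ((MultiIndex.mulAdd_injective hD).extend_apply _ _ αρ).symm).symm
    _ = (∏ α, ‖p α‖) ^ k ^ (Fintype.card σ + 1) := by
        simp [Fintype.prod_prod_type, Finset.prod_pow, ← pow_mul, pow_succ, mul_comm]
    _ ≤ V ^ k ^ (Fintype.card σ + 1) := by
        gcongr; exact ha₀.trans (hV a₀)

end WeightedVandermonde

section CardMultiIndex

variable {σ : Type*} [Fintype σ]

/-- Adding a slack coordinate homogenizes the multi-indices of degree at most `d`. -/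
def MultiIndex.equivSym [DecidableEq σ] (d : ℕ) : MultiIndex σ d ≃ Sym (Option σ) d :=
  Equiv.trans (β := {P : Option σ → ℕ // ∑ i, P i = d})
    { toFun α := ⟨fun i => i.elim (d - ∑ i, ofLex α.1 i) (ofLex α.1), by
        rw [Fintype.sum_option]
        exact Nat.sub_add_cancel α.2⟩
      invFun P := ⟨toLex fun i => P.1 (some i), by
        have hP := P.2
        rw [Fintype.sum_option] at hP
        exact Nat.le.intro ((add_comm _ _).trans hP)⟩
      left_inv α := rfl
      right_inv P := by
        have hP := P.2
        rw [Fintype.sum_option] at hP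
        refine Subtype.ext (funext (Option.rec ?_ fun i => rfl))
        exact Nat.sub_eq_of_eq_add hP.symm }
    (Sym.equivNatSumOfFintype (Option σ) d).symm

lemma MultiIndex.card (d : ℕ) :
    Fintype.card (MultiIndex σ d) = (d + Fintype.card σ).choose (Fintype.card σ) := by
  classical
  rw [Fintype.card_congr (MultiIndex.equivSym d), Sym.card_sym_eq_choose, Fintype.card_option,
    add_right_comm, Nat.add_sub_cancel, add_comm d, Nat.choose_symm_add]

lemma tendsto_natCast_add_div (n : ℕ) :
    Tendsto (fun d : ℕ => ((d : ℝ) + n) / d) atTop (𝓝 1) := by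
  have h := (tendsto_const_div_atTop_nhds_zero_nat (n : ℝ)).const_add 1
  rw [add_zero] at h
  refine h.congr' ?_
  filter_upwards [eventually_gt_atTop 0] with d hd
  field_simp

lemma tendsto_card_multiIndex_div_pow :
    Tendsto (fun d : ℕ => (Fintype.card (MultiIndex σ d) : ℝ) / d ^ Fintype.card σ) atTop
      (𝓝 ((Fintype.card σ).factorial : ℝ)⁻¹) := by
  set n := Fintype.card σ
  have hchoose := (Asymptotics.isEquivalent_iff_exists_eq_mul.mp (isEquivalent_choose n))
  obtain ⟨u, hu, hchoose⟩ := hchoose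
  have hlim := ((hu.comp (tendsto_add_atTop_nat n)).mul
    ((tendsto_natCast_add_div n).pow n)).mul_const (n.factorial : ℝ)⁻¹
  simp only [one_pow, one_mul] at hlim
  refine hlim.congr' ?_
  filter_upwards [(tendsto_add_atTop_nat n).eventually hchoose] with d hd
  simp only [Pi.mul_apply] at hd
  rw [MultiIndex.card, hd]
  simp only [Function.comp]
  push_cast
  rw [div_pow]
  ring

lemma tendsto_card_multiIndex_rpow :
    Tendsto (fun d : ℕ => (Fintype.card (MultiIndex σ d) : ℝ) ^ (1 / (d : ℝ))) atTop (𝓝 1) := by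
  have hcoeff := (tendsto_card_multiIndex_div_pow (σ := σ)).rpow
    tendsto_one_div_atTop_nhds_zero_nat (Or.inl (by positivity))
  have hpow := (tendsto_rpow_div.comp tendsto_natCast_atTop_atTop).pow (Fintype.card σ)
  have hlim := hcoeff.mul hpow
  rw [Real.rpow_zero, one_pow, one_mul] at hlim
  refine hlim.congr' ?_
  filter_upwards [eventually_gt_atTop 0] with d hd
  rw [Function.comp, Real.rpow_pow_comm (by positivity),
    ← Real.mul_rpow (by positivity) (by positivity), div_mul_cancel₀ _ (by positivity)]

lemma factorial_rpow_le {s : ℕ} (hs : s ≠ 0) {d : ℝ} (hd : 0 ≤ d) :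
    (s.factorial : ℝ) ^ (1 / (d * s)) ≤ (s : ℝ) ^ (1 / d) := by
  calc (s.factorial : ℝ) ^ (1 / (d * s))
      ≤ ((s : ℝ) ^ s) ^ (1 / (d * s)) := by
        gcongr; exact_mod_cast Nat.factorial_le_pow s
    _ = (s : ℝ) ^ (1 / d) := by
        rw [← Real.rpow_natCast_mul s.cast_nonneg]
        congr 1
        field_simp

/-- The exponent is the limit of `k ^ (n + 1) / (D * s(D))` for `k = ⌊D / (d + n)⌋`. -/
lemma tendsto_natDiv_pow_div_card_multiIndex {m : ℕ} (hm : m ≠ 0) :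
    Tendsto (fun D : ℕ => (D / m : ℕ) ^ (Fintype.card σ + 1) /
      (D * Fintype.card (MultiIndex σ D) : ℝ)) atTop
      (𝓝 ((Fintype.card σ).factorial / (m : ℝ) ^ (Fintype.card σ + 1))) := by
  have hfloor : Tendsto (fun D : ℕ => ((D / m : ℕ) : ℝ) / D) atTop (𝓝 (m : ℝ)⁻¹) := by
    refine ((tendsto_nat_floor_mul_div_atTop (R := ℝ) (a := (m : ℝ)⁻¹) (by positivity)).comp
      tendsto_natCast_atTop_atTop).congr fun D => ?_
    rw [Function.comp, inv_mul_eq_div, Nat.floor_div_eq_div]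
  have hlim := (hfloor.pow (Fintype.card σ + 1)).div
    (tendsto_card_multiIndex_div_pow (σ := σ)) (by positivity)
  rw [inv_pow, inv_div_inv] at hlim
  refine hlim.congr' ?_
  filter_upwards [eventually_gt_atTop 0] with D hD
  rw [Pi.div_apply, div_pow]
  field_simp
  ring

lemma tendsto_card_multiIndex_mul_div_pow :
    Tendsto (fun d : ℕ => (d * Fintype.card (MultiIndex σ d) : ℝ) *
      ((Fintype.card σ).factorial / ((d + Fintype.card σ : ℕ) : ℝ) ^ (Fintype.card σ + 1)))
      atTop (𝓝 1) := by
  set n := Fintype.card σ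
  have hlim := ((tendsto_card_multiIndex_div_pow (σ := σ)).mul_const (n.factorial : ℝ)).div
    ((tendsto_natCast_add_div n).pow (n + 1)) (by simp)
  rw [inv_mul_cancel₀ (by positivity), one_pow, div_one] at hlim
  refine hlim.congr' ?_
  filter_upwards [eventually_gt_atTop 0] with d hd
  rw [Pi.div_apply, div_pow]
  push_cast
  field_simp
  ring

end CardMultiIndex

lemma exists_forall_norm_smul_le_one {ι E : Type*} [Finite ι] [SeminormedAddCommGroup E]
    (𝕜 : Type*) [RCLike 𝕜] [NormedSpace 𝕜 E] (f : ι → E) :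
    ∃ r : 𝕜, r ≠ 0 ∧ ∀ i, ‖r • f i‖ ≤ 1 := by
  obtain ⟨M, hM⟩ := (Set.finite_range fun i => ‖f i‖).bddAbove
  have hpos : 0 < max M 1 := lt_max_of_lt_right one_pos
  refine ⟨(((max M 1)⁻¹ : ℝ) : 𝕜), RCLike.ofReal_ne_zero.mpr (inv_ne_zero hpos.ne'), fun i => ?_⟩
  rw [norm_smul, RCLike.norm_ofReal, abs_of_pos (inv_pos.mpr hpos)]
  exact inv_mul_le_one_of_le₀ ((hM (Set.mem_range_self i)).trans (le_max_left _ _)) hpos.le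

section WeightedDiameter

variable {X 𝕜 σ : Type*} [TopologicalSpace X] [RCLike 𝕜] [Fintype σ]

/-- The `d`-th root `(sup_a |VDM_d(a)|)^{1/(d·s(d))}` whose limit is a power of the weighted
transfinite diameter; the supremum is taken in `ℝ≥0∞`. -/
def weightedDiameter (w : C(X, 𝕜)) (x : σ → C(X, 𝕜)) (d : ℕ) : ℝ≥0∞ :=
  (⨆ a, ‖weightedVandermonde w x d a‖ₑ) ^ (1 / (d * Fintype.card (MultiIndex σ d)) : ℝ)

lemma weightedVandermonde_smul (r : 𝕜) (w : C(X, 𝕜)) (x : σ → C(X, 𝕜)) (d : ℕ)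
    (a : MultiIndex σ d → X) :
    weightedVandermonde (r • w) x d a =
      r ^ (d * Fintype.card (MultiIndex σ d)) * weightedVandermonde w x d a := by
  have hmatrix : (Matrix.of fun α β : MultiIndex σ d =>
      weightedMonomial (r • w) x d (ofLex α.1) (a β)) =
      r ^ d • Matrix.of fun α β => weightedMonomial w x d (ofLex α.1) (a β) := by
    ext α β
    simp [weightedMonomial, mul_pow, mul_assoc]
  rw [weightedVandermonde, hmatrix, Matrix.det_smul, ← pow_mul, weightedVandermonde]

lemma weightedDiameter_smul (r : 𝕜) (w : C(X, 𝕜)) (x : σ → C(X, 𝕜)) {d : ℕ} (hd : d ≠ 0) :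
    weightedDiameter (r • w) x d = ‖r‖ₑ * weightedDiameter w x d := by
  have hexp : (d * Fintype.card (MultiIndex σ d) : ℝ) ≠ 0 := by
    rw [MultiIndex.card]
    exact_mod_cast mul_ne_zero hd (Nat.choose_pos (Nat.le_add_left _ d)).ne'
  simp_rw [weightedDiameter, weightedVandermonde_smul, enorm_mul, ← ENNReal.mul_iSup]
  rw [ENNReal.mul_rpow_of_nonneg _ _ (by positivity), enorm_pow, ← ENNReal.rpow_natCast,
    ← ENNReal.rpow_mul]
  push_cast
  rw [mul_one_div_cancel hexp, ENNReal.rpow_one]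

variable [LinearOrder σ] [CompactSpace X] {w : C(X, 𝕜)} {x : σ → C(X, 𝕜)}

lemma iSup_enorm_weightedVandermonde_ne_top (w : C(X, 𝕜)) (x : σ → C(X, 𝕜)) (d : ℕ) :
    ⨆ a, ‖weightedVandermonde w x d a‖ₑ ≠ ⊤ := by
  refine ne_top_of_le_ne_top (b := ENNReal.ofReal
    ((Fintype.card (MultiIndex σ d)).factorial * ∏ α : MultiIndex σ d,
      ‖weightedMonomial w x d (ofLex α.1)‖))
    ENNReal.ofReal_ne_top (iSup_le fun a => ?_)
  rw [← ofReal_norm]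
  exact ENNReal.ofReal_le_ofReal
    (norm_weightedVandermonde_le (fun α => isMonicAt_weightedMonomial α.2) a)

lemma weightedDiameter_le_ofReal [Nonempty X] (hw : ‖w‖ ≤ 1) (hx : ∀ i, ‖w * x i‖ ≤ 1) {V : ℝ}
    {d : ℕ} (hV : ∀ a, ‖weightedVandermonde w x d a‖ ≤ V) (D : ℕ) :
    weightedDiameter w x D ≤ ENNReal.ofReal ((Fintype.card (MultiIndex σ D) : ℝ) ^ (1 / (D : ℝ)) *
      V ^ ((D / (d + Fintype.card σ) : ℕ) ^ (Fintype.card σ + 1) /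
        (D * Fintype.card (MultiIndex σ D)) : ℝ)) := by
  have hV0 : 0 ≤ V := (norm_nonneg _).trans (hV fun _ => Classical.arbitrary X)
  have hs : Fintype.card (MultiIndex σ D) ≠ 0 := by
    rw [MultiIndex.card]
    exact (Nat.choose_pos (Nat.le_add_left _ D)).ne'
  calc weightedDiameter w x D
      ≤ ENNReal.ofReal ((Fintype.card (MultiIndex σ D)).factorial *
          V ^ ((D / (d + Fintype.card σ)) ^ (Fintype.card σ + 1))) ^
          (1 / (D * Fintype.card (MultiIndex σ D)) : ℝ) := by
        refine ENNReal.rpow_le_rpow (iSup_le fun a => ?_) (by positivity)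
        rw [← ofReal_norm]
        exact ENNReal.ofReal_le_ofReal
          (norm_weightedVandermonde_le_pow (Nat.div_mul_le_self D _) hw hx hV a)
    _ ≤ _ := by
        rw [ENNReal.ofReal_rpow_of_nonneg (by positivity) (by positivity),
          Real.mul_rpow (by positivity) (by positivity), ← Real.rpow_natCast_mul hV0,
          Nat.cast_pow, mul_one_div]
        gcongr
        exact factorial_rpow_le hs D.cast_nonneg

lemma limsup_weightedDiameter_le [Nonempty X] (hw : ‖w‖ ≤ 1) (hx : ∀ i, ‖w * x i‖ ≤ 1) {d : ℕ}
    (hd : d ≠ 0) :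
    limsup (weightedDiameter w x) atTop ≤ (⨆ a, ‖weightedVandermonde w x d a‖ₑ) ^
      ((Fintype.card σ).factorial / ((d + Fintype.card σ : ℕ) : ℝ) ^ (Fintype.card σ + 1)) := by
  have hS := iSup_enorm_weightedVandermonde_ne_top w x d
  set S : ℝ≥0∞ := ⨆ a, ‖weightedVandermonde w x d a‖ₑ
  have hV (a) : ‖weightedVandermonde w x d a‖ ≤ S.toReal := by
    rw [← toReal_enorm]
    exact ENNReal.toReal_mono hS (le_iSup (fun a => ‖weightedVandermonde w x d a‖ₑ) a)
  have hlim := ENNReal.tendsto_ofReal <| tendsto_card_multiIndex_rpow (σ := σ) |>.mul <|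
    (Real.continuousAt_const_rpow' (a := S.toReal) (by positivity)).tendsto.comp
      (tendsto_natDiv_pow_div_card_multiIndex (σ := σ) (m := d + Fintype.card σ) (by lia))
  refine (limsup_le_limsup (.of_forall fun D =>
    weightedDiameter_le_ofReal hw hx hV D)).trans_eq (hlim.limsup_eq.trans ?_)
  rw [one_mul, ← ENNReal.ofReal_rpow_of_nonneg (by positivity) (by positivity),
    ENNReal.ofReal_toReal hS]

lemma limsup_weightedDiameter_le_liminf [Nonempty X] (hw : ‖w‖ ≤ 1) (hx : ∀ i, ‖w * x i‖ ≤ 1) :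
    limsup (weightedDiameter w x) atTop ≤ liminf (weightedDiameter w x) atTop := by
  refine le_of_forall_lt_imp_le_of_dense fun c hc => ?_
  rcases eq_or_ne c 0 with rfl | hc0
  · exact zero_le
  lift c to NNReal using hc.ne_top
  set θ : ℕ → ℝ := fun d => (d * Fintype.card (MultiIndex σ d) : ℝ) *
    ((Fintype.card σ).factorial / ((d + Fintype.card σ : ℕ) : ℝ) ^ (Fintype.card σ + 1))
  have hθ : Tendsto (fun d => (c : ℝ≥0∞) ^ (θ d)⁻¹) atTop (𝓝 c) := by
    have hlim := (tendsto_const_nhds (x := c)).nnrpow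
      ((tendsto_card_multiIndex_mul_div_pow (σ := σ)).inv₀ one_ne_zero)
      (Or.inl (by exact_mod_cast hc0))
    rw [inv_one, NNReal.rpow_one] at hlim
    refine (ENNReal.tendsto_coe.mpr hlim).congr fun d => ?_
    exact ENNReal.coe_rpow_of_ne_zero (by exact_mod_cast hc0) _
  rw [← hθ.liminf_eq]
  refine liminf_le_liminf ?_
  filter_upwards [eventually_ge_atTop 1] with d hd
  have hle := hc.le.trans (limsup_weightedDiameter_le hw hx (Nat.one_le_iff_ne_zero.mp hd))
  refine (ENNReal.rpow_le_rpow hle (by positivity)).trans_eq ?_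
  rw [← ENNReal.rpow_mul, weightedDiameter]
  congr 1
  simp only [θ]
  field_simp

/-- Zaharjuta's theorem. -/
theorem tendsto_weightedDiameter [Nonempty X] (w : C(X, 𝕜)) (x : σ → C(X, 𝕜)) :
    ∃ δ : NNReal, Tendsto (weightedDiameter w x) atTop (𝓝 δ) := by
  obtain ⟨r, hr, hle⟩ :=
    exists_forall_norm_smul_le_one 𝕜 fun i : Option σ => i.elim w fun i => w * x i
  have hw : ‖r • w‖ ≤ 1 := hle none
  have hx (i : σ) : ‖r • w * x i‖ ≤ 1 := by rw [smul_mul_assoc]; exact hle (some i)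
  have hlim := tendsto_of_le_liminf_of_limsup_le (limsup_weightedDiameter_le_liminf hw hx) le_rfl
  have hfinite : limsup (weightedDiameter (r • w) x) atTop ≠ ⊤ :=
    ne_top_of_le_ne_top (ENNReal.rpow_ne_top_of_nonneg (by positivity)
      (iSup_enorm_weightedVandermonde_ne_top (r • w) x 1))
      (limsup_weightedDiameter_le hw hx one_ne_zero)
  lift limsup (weightedDiameter (r • w) x) atTop to NNReal using hfinite with δ
  refine ⟨‖r⁻¹‖₊ * δ, ?_⟩
  rw [ENNReal.coe_mul]
  refine (ENNReal.Tendsto.const_mul hlim (Or.inr ENNReal.coe_ne_top)).congr' ?_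
  filter_upwards [eventually_ne_atTop 0] with d hd
  rw [← enorm_eq_nnnorm, ← weightedDiameter_smul _ _ _ hd, inv_smul_smul₀ hr]

end WeightedDiameter

section EnumeratedVandermonde

variable {n d : ℕ} {E : Fin (sdim n d) → (Fin n → ℕ)} {H : Set (Pt n)}

/-- An enumeration of the multi-indices of degree at most `d`, as an equivalence. -/
def IsEnum.equiv (hE : IsEnum n d E) : Fin (sdim n d) ≃ MultiIndex (Fin n) d :=
  Equiv.ofBijective (fun i => ⟨toLex (E i), (hE.2 (E i)).mpr (Set.mem_range_self i)⟩)
    ⟨fun _ _ h => hE.1 (congrArg (fun α => ofLex α.1) h), fun α =>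
      ((hE.2 (ofLex α.1)).mp α.2).imp fun _ h => Subtype.ext h⟩

/-- The weight `w = e^{-Q}`, as a complex-valued function. -/
def expWeight {X : Type*} [TopologicalSpace X] (Q : C(X, ℝ)) : C(X, ℂ) :=
  ⟨fun z => (Real.exp (-Q z) : ℂ), by fun_prop⟩

/-- The restriction to `H` of the `i`-th coordinate of `ℂⁿ`. -/
def coordinate (H : Set (Pt n)) (i : Fin n) : C(H, ℂ) :=
  ⟨fun z => (z : Pt n) i, by fun_prop⟩

lemma absVDMQ_eq_enorm_det (E : Fin (sdim n d) → (Fin n → ℕ)) (Q : C(H, ℝ))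
    (a : Fin (sdim n d) → H) :
    absVDMQ n d E H Q a =
      ‖(Matrix.of fun i j =>
        weightedMonomial (expWeight Q) (coordinate H) d (E i) (a j)).det‖ₑ := by
  have hmatrix : (Matrix.of fun i j =>
      weightedMonomial (expWeight Q) (coordinate H) d (E i) (a j)) = Matrix.of fun i j =>
        expWeight Q (a j) ^ d * (Matrix.of fun i j => ∏ k, (a j : Pt n) k ^ E i k) i j := by
    ext i j
    simp [weightedMonomial, coordinate]
  have hweight (z : H) : ‖expWeight Q z ^ d‖ = Real.exp (-(d : ℝ) * Q z) := by
    rw [norm_pow, expWeight, ContinuousMap.coe_mk, Complex.norm_real, Real.norm_eq_abs,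
      Real.abs_exp, ← Real.exp_nat_mul, mul_neg, neg_mul]
  rw [hmatrix, Matrix.det_mul_row, absVDMQ, VDM, ← ofReal_norm, norm_mul, norm_prod, mul_comm]
  simp_rw [hweight]

lemma absVDMQ_eq_enorm_weightedVandermonde (hE : IsEnum n d E) (Q : C(H, ℝ))
    (a : Fin (sdim n d) → H) :
    absVDMQ n d E H Q a =
      ‖weightedVandermonde (expWeight Q) (coordinate H) d (a ∘ hE.equiv.symm)‖ₑ := by
  rw [absVDMQ_eq_enorm_det, weightedVandermonde, ← Matrix.det_submatrix_equiv_self hE.equiv]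
  congr 4
  ext i j
  simp only [Matrix.of_apply, Function.comp, Equiv.symm_apply_apply]
  rfl

end EnumeratedVandermonde

variable {n : ℕ} {E : ∀ d, Fin (sdim n d) → (Fin n → ℕ)} {H : Set (Pt n)}

lemma iSup_absVDMQ_rpow_eq_weightedDiameter (hE : ∀ d, IsEnum n d (E d)) (Q : C(H, ℝ)) (d : ℕ) :
    (⨆ a, absVDMQ n d (E d) H Q a) ^ (1 / (d * sdim n d) : ℝ) =
      weightedDiameter (expWeight Q) (coordinate H) d := by
  have hcard : Fintype.card (MultiIndex (Fin n) d) = sdim n d := by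
    rw [MultiIndex.card, Fintype.card_fin, sdim]
  simp_rw [weightedDiameter, hcard, absVDMQ_eq_enorm_weightedVandermonde (hE d)]
  exact congrArg (· ^ _) <| ((hE d).equiv.arrowCongr (Equiv.refl H)).iSup_congr fun _ => rfl

theorem tendsto_deltaBar (hE : ∀ d, IsEnum n d (E d)) [CompactSpace H] [Nonempty H] (Q : C(H, ℝ)) :
    deltaBar n E H Q ≠ ⊤ ∧
    Tendsto (fun d => (⨆ a, absVDMQ n d (E d) H Q a) ^ (1 / (d * sdim n d) : ℝ)) atTop
      (𝓝 (deltaBar n E H Q)) := by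
  obtain ⟨δ, hδ⟩ := tendsto_weightedDiameter (expWeight Q) (coordinate H)
  simp_rw [deltaBar, iSup_absVDMQ_rpow_eq_weightedDiameter hE]
  rw [hδ.limsup_eq]
  exact ⟨ENNReal.coe_ne_top, hδ⟩

lemma eventually_exists_pow_lt_absVDMQ (hE : ∀ d, IsEnum n d (E d)) [CompactSpace H] [Nonempty H]
    (Q : C(H, ℝ)) {c : ℝ≥0∞} (hc : c < deltaBar n E H Q) :
    ∀ᶠ d in atTop, ∃ a, c ^ (d * sdim n d) < absVDMQ n d (E d) H Q a := by
  filter_upwards [(tendsto_deltaBar hE Q).2.eventually_const_lt hc, eventually_gt_atTop 0]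
    with d hd hd0
  have hs := sdim_pos n d
  rw [one_div, ENNReal.lt_rpow_inv_iff (by positivity), lt_iSup_iff] at hd
  exact_mod_cast hd

lemma exists_eventually_absVDMQ_le_pow (hE : ∀ d, IsEnum n d (E d)) [CompactSpace H] [Nonempty H]
    (Q : C(H, ℝ)) :
    ∃ C : ℝ, 0 < C ∧ ∀ᶠ d in atTop, ∀ a,
      absVDMQ n d (E d) H Q a ≤ ENNReal.ofReal C ^ (d * sdim n d) := by
  obtain ⟨hfinite, hlim⟩ := tendsto_deltaBar hE Q
  obtain ⟨C, hC⟩ := ENNReal.lt_iff_exists_nnreal_btwn.mp hfinite.lt_top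
  have hC0 : 0 < C := by exact_mod_cast zero_le.trans_lt hC.1
  refine ⟨C, hC0, ?_⟩
  filter_upwards [hlim.eventually_lt_const hC.1, eventually_gt_atTop 0] with d hd hd0 a
  have hs := sdim_pos n d
  rw [one_div, ENNReal.rpow_inv_lt_iff (by positivity)] at hd
  rw [ENNReal.ofReal_coe_nnreal]
  exact_mod_cast (le_iSup _ a).trans hd.le

/-! ### The Bernstein–Markov inequality -/

section PolynomialsOneVariable

variable {q : Polynomial ℂ} {d : ℕ} {m M : ℝ}

lemma exists_real_polynomial_eval_eq_re (q : Polynomial ℂ) :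
    ∃ P : Polynomial ℝ, P.degree ≤ q.natDegree ∧ ∀ t : ℝ, P.eval t = (q.eval (t : ℂ)).re := by
  refine ⟨∑ i ∈ Finset.range (q.natDegree + 1), Polynomial.monomial i (q.coeff i).re, ?_,
    fun t => ?_⟩
  · refine (Polynomial.degree_sum_le _ _).trans (Finset.sup_le fun i hi => ?_)
    exact (Polynomial.degree_monomial_le _ _).trans
      (by exact_mod_cast Finset.mem_range_succ_iff.mp hi)
  · rw [Polynomial.eval_finsetSum, q.eval_eq_sum_range, Complex.re_sum]
    refine Finset.sum_congr rfl fun i _ => ?_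
    rw [Polynomial.eval_monomial, ← Complex.ofReal_pow, Complex.re_mul_ofReal]

lemma norm_polynomial_eval_cosh_le (hq : q.natDegree ≤ d) (hm : 0 < m)
    (h : ∀ t ∈ Set.Icc (-1 : ℝ) 1, ‖q.eval (t : ℂ)‖ ≤ m) (θ : ℝ) :
    ‖q.eval (Real.cosh θ : ℂ)‖ ≤ m * Real.cosh (d * θ) := by
  obtain ⟨u, hu, hnorm⟩ := Complex.exists_norm_eq_mul_self (q.eval (Real.cosh θ : ℂ))
  obtain ⟨P, hdegree, hP⟩ := exists_real_polynomial_eval_eq_re (Polynomial.C (u / m) * q)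
  have hbound (t : ℝ) (ht : t ∈ Set.Icc (-1) 1) : |P.eval t| ≤ 1 := by
    rw [hP, Polynomial.eval_mul, Polynomial.eval_C]
    refine (Complex.abs_re_le_norm _).trans ?_
    rw [norm_mul, norm_div, hu, Complex.norm_real, Real.norm_of_nonneg hm.le, one_div,
      inv_mul_le_one₀ hm]
    exact h t ht
  have hchebyshev := Polynomial.Chebyshev.eval_iterate_derivative_le_of_forall_abs_le_one
    (k := 0) (Real.one_le_cosh θ)
    (hdegree.trans (by exact_mod_cast (Polynomial.natDegree_C_mul_le _ _).trans hq)) hbound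
  rw [Function.iterate_zero, id, id, hP, Polynomial.Chebyshev.T_real_cosh, Polynomial.eval_mul,
    Polynomial.eval_C, div_mul_eq_mul_div, ← hnorm, Complex.div_ofReal_re, Complex.ofReal_re,
    div_le_iff₀' hm] at hchebyshev
  exact_mod_cast hchebyshev

lemma exists_norm_polynomial_eval_cosh_le (hq : q.natDegree ≤ d) (θ : ℝ) :
    ∃ t ∈ Set.Icc (-1 : ℝ) 1,
      ‖q.eval (Real.cosh θ : ℂ)‖ ≤ ‖q.eval (t : ℂ)‖ * Real.exp (d * |θ|) := by
  obtain ⟨t, ht, hmax⟩ := isCompact_Icc.exists_isMaxOn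
    (Set.nonempty_Icc.mpr (by norm_num : (-1 : ℝ) ≤ 1))
    (f := fun t : ℝ => ‖q.eval (t : ℂ)‖) (by fun_prop)
  refine ⟨t, ht, ?_⟩
  rw [← div_le_iff₀ (Real.exp_pos _)]
  refine le_of_forall_gt_imp_ge_of_dense fun m hm => (div_le_iff₀ (Real.exp_pos _)).mpr ?_
  have hm0 : 0 < m := (norm_nonneg _).trans_lt hm
  refine (norm_polynomial_eval_cosh_le hq hm0 (fun s hs => (hmax hs).trans hm.le) θ).trans ?_
  have hcosh : Real.cosh (d * θ) ≤ Real.exp (d * |θ|) := by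
    rw [← Real.cosh_abs, abs_mul, Nat.abs_cast, Real.cosh_eq]
    have : Real.exp (-(d * |θ|)) ≤ Real.exp (d * |θ|) :=
      Real.exp_le_exp.mpr (neg_le_self (by positivity))
    linarith
  gcongr

/-- Jensen's inequality bounds `log ‖q 0‖` by the mean of `log ‖q‖` over the unit circle, and
the integrand is nonpositive on half of that circle. -/
lemma sq_norm_coeff_zero_le_of_volume_le (hM : 1 ≤ M)
    (hb : ∀ θ : ℝ, ‖q.eval (circleMap 0 1 θ)‖ ≤ M)
    (hvol : volume ({θ : ℝ | 1 < ‖q.eval (circleMap 0 1 θ)‖} ∩ Set.Ioc 0 (2 * Real.pi)) ≤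
      ENNReal.ofReal Real.pi) :
    ‖q.coeff 0‖ ^ 2 ≤ M := by
  rcases eq_or_ne (q.coeff 0) 0 with h0 | h0
  · rw [h0, norm_zero]
    nlinarith
  have hpos : 0 < ‖q.coeff 0‖ := norm_pos_iff.mpr h0
  have hjensen : Real.log ‖q.coeff 0‖ ≤ q.logMahlerMeasure := by
    rw [Polynomial.logMahlerMeasure_eq_log_MahlerMeasure]
    exact Real.log_le_log hpos (by simpa using q.norm_coeff_le_choose_mul_mahlerMeasure 0)
  rw [Polynomial.logMahlerMeasure_def, Real.circleAverage_def, smul_eq_mul] at hjensen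
  set S := {θ : ℝ | 1 < ‖q.eval (circleMap 0 1 θ)‖}
  have hS : MeasurableSet S := (isOpen_lt continuous_const (by fun_prop)).measurableSet
  have hlog : ∀ θ, Real.log ‖q.eval (circleMap 0 1 θ)‖ ≤
      S.indicator (fun _ => Real.log M) θ := by
    intro θ
    by_cases hθ : θ ∈ S
    · rw [Set.indicator_of_mem hθ]
      exact Real.log_le_log (one_pos.trans hθ.out) (hb θ)
    · rw [Set.indicator_of_notMem hθ]
      exact Real.log_nonpos (norm_nonneg _) (not_lt.mp hθ)
  have hint : IntervalIntegrable (S.indicator fun _ => Real.log M) volume 0 (2 * Real.pi) :=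
    intervalIntegrable_iff.mpr ((intervalIntegrable_iff.mp intervalIntegrable_const).indicator hS)
  have hindicator : ∫ θ in 0..2 * Real.pi, S.indicator (fun _ => Real.log M) θ ≤
      Real.pi * Real.log M := by
    rw [intervalIntegral.integral_of_le (by positivity), integral_indicator hS,
      setIntegral_const, smul_eq_mul, measureReal_def, Measure.restrict_apply hS]
    exact mul_le_mul_of_nonneg_right (toReal_le_of_le_ofReal Real.pi_pos.le hvol)
      (Real.log_nonneg hM)
  have hmean : Real.log ‖q.coeff 0‖ ≤ (2 * Real.pi)⁻¹ * (Real.pi * Real.log M) :=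
    hjensen.trans (mul_le_mul_of_nonneg_left
      ((intervalIntegral.integral_mono (by positivity) q.intervalIntegrable_mahlerMeasure hint
        hlog).trans hindicator) (by positivity))
  have : (2 * Real.pi)⁻¹ * (Real.pi * Real.log M) = Real.log M / 2 := by
    field_simp
  rw [← Real.log_le_log_iff (by positivity) (by linarith), Real.log_pow]
  push_cast
  linarith

end PolynomialsOneVariable

section Rotations

lemma smulInvariantMeasure_circle {V : Type*} [NormedAddCommGroup V] [NormedSpace ℂ V]
    [MeasurableSpace V] [BorelSpace V] [FiniteDimensional ℂ V] (μ : Measure V)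
    [μ.IsAddHaarMeasure] :
    SMulInvariantMeasure Circle V μ where
  measure_preimage_smul c s hs := by
    have hproper : ProperSpace V := FiniteDimensional.proper ℂ V
    have hhaar : (μ.map (c • ·)).IsAddHaarMeasure :=
      (DistribMulAction.toAddEquiv V c).isAddHaarMeasure_map μ (continuous_const_smul c)
        (continuous_const_smul c⁻¹)
    have hmap : μ.map (c • ·) = Measure.addHaarScalarFactor (μ.map (c • ·)) μ • μ :=
      Measure.isAddLeftInvariant_eq_smul _ _
    have hball : (c • · : V → V) ⁻¹' Metric.ball 0 1 = Metric.ball 0 1 := by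
      ext v
      simp [Circle.smul_def, norm_smul, Circle.norm_coe]
    have hfactor : (Measure.addHaarScalarFactor (μ.map (c • ·)) μ : ℝ≥0∞) = 1 := by
      have h := DFunLike.congr_fun hmap (Metric.ball 0 1)
      rw [Measure.map_apply (measurable_const_smul c) Metric.isOpen_ball.measurableSet, hball,
        Measure.smul_apply, ENNReal.smul_def, smul_eq_mul] at h
      exact (ENNReal.mul_eq_right (Metric.measure_ball_pos μ 0 one_pos).ne'
        measure_ball_lt_top.ne).mp h.symm
    rw [← Measure.map_apply (measurable_const_smul c) hs, hmap, Measure.smul_apply,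
      ENNReal.smul_def, hfactor, one_smul]

variable {X : Type*} [TopologicalSpace X] [MeasurableSpace X] [BorelSpace X] [MulAction Circle X]
  [ContinuousSMul Circle X] {B K : Set X}

lemma exists_volume_circle_smul_mem_le (μ : Measure X) [SFinite μ] [SMulInvariantMeasure Circle X μ]
    (hB : MeasurableSet B) (hrot : ∀ (c : Circle), ∀ x ∈ B, c • x ∈ B) (hK : MeasurableSet K)
    (h : 2 * μ (B ∩ K) < μ B) :
    ∃ x ∈ B, volume ({θ : ℝ | Circle.exp θ • x ∈ K} ∩ Set.Ioc 0 (2 * Real.pi)) ≤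
      ENNReal.ofReal Real.pi := by
  by_contra! hcon
  set I := Set.Ioc 0 (2 * Real.pi)
  have hsmul : Measurable fun x : X × ℝ => Circle.exp x.2 • x.1 := by
    have : Continuous fun x : X × ℝ => Circle.exp x.2 • x.1 := by fun_prop
    exact this.measurable
  let F : X → ℝ → ℝ≥0∞ := fun x θ => (B ∩ K).indicator 1 (Circle.exp θ • x)
  have hF : Measurable (Function.uncurry F) := (measurable_one.indicator (hB.inter hK)).comp hsmul
  have hfibre (θ : ℝ) : ∫⁻ x, F x θ ∂μ = μ (B ∩ K) := by
    rw [← measure_preimage_smul_of_nullMeasurableSet (hB.inter hK).nullMeasurableSet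
      (Circle.exp θ), ← lintegral_indicator_one (measurable_const_smul _ (hB.inter hK))]
    rfl
  have horbit (x : X) (hx : x ∈ B) : ENNReal.ofReal Real.pi ≤ ∫⁻ θ in I, F x θ := by
    have hmeas : MeasurableSet {θ : ℝ | Circle.exp θ • x ∈ K} :=
      (hsmul.comp measurable_prodMk_left) hK
    refine (hcon x hx).le.trans_eq ?_
    rw [← Measure.restrict_apply hmeas, ← lintegral_indicator_one hmeas]
    refine lintegral_congr fun θ => ?_
    by_cases hθ : Circle.exp θ • x ∈ K
    · simp [F, Set.indicator, hθ, hrot _ x hx]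
    · simp [F, Set.indicator, hθ]
  have hle : ENNReal.ofReal Real.pi * μ B ≤ ENNReal.ofReal Real.pi * (2 * μ (B ∩ K)) := calc
    ENNReal.ofReal Real.pi * μ B ≤ ∫⁻ x in B, (∫⁻ θ in I, F x θ) ∂μ := by
      rw [← setLIntegral_const]
      exact setLIntegral_mono' hB horbit
    _ ≤ ∫⁻ x, (∫⁻ θ in I, F x θ) ∂μ := setLIntegral_le_lintegral _ _
    _ = ∫⁻ θ in I, (∫⁻ x, F x θ ∂μ) := lintegral_lintegral_swap hF.aemeasurable
    _ = ENNReal.ofReal Real.pi * (2 * μ (B ∩ K)) := by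
      simp_rw [hfibre, lintegral_const, Measure.restrict_apply_univ, I, Real.volume_Ioc, sub_zero,
        ENNReal.ofReal_mul zero_le_two, ENNReal.ofReal_ofNat]
      ring
  exact h.not_ge ((ENNReal.mul_le_mul_iff_right
    (ENNReal.ofReal_pos.mpr Real.pi_pos).ne' ENNReal.ofReal_ne_top).mp hle)

end Rotations

/-- `f` is a polynomial function of degree at most `d`: it is holomorphic and its restriction to
every complex line is a polynomial of degree at most `d`. -/
structure IsPolynomialOfDegreeLE {V : Type*} [NormedAddCommGroup V] [NormedSpace ℂ V] (d : ℕ)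
    (f : V → ℂ) : Prop where
  differentiable : Differentiable ℂ f
  exists_eval_eq (z w : V) : ∃ q : Polynomial ℂ, q.natDegree ≤ d ∧ ∀ t : ℂ, q.eval t = f (z + t • w)

section PolynomialFunctions

variable {V : Type*} [NormedAddCommGroup V] [NormedSpace ℂ V] {d e : ℕ} {f g : V → ℂ}

lemma isPolynomialOfDegreeLE_const (c : ℂ) : IsPolynomialOfDegreeLE d fun _ : V => c where
  differentiable := differentiable_const c
  exists_eval_eq _ _ := ⟨Polynomial.C c, by simp, by simp⟩

lemma isPolynomialOfDegreeLE_clm (l : V →L[ℂ] ℂ) : IsPolynomialOfDegreeLE 1 l where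
  differentiable := l.differentiable
  exists_eval_eq z w := ⟨Polynomial.C (l w) * Polynomial.X + Polynomial.C (l z),
    Polynomial.natDegree_linear_le, fun t => by simp; ring⟩

lemma IsPolynomialOfDegreeLE.mono (hf : IsPolynomialOfDegreeLE d f) (h : d ≤ e) :
    IsPolynomialOfDegreeLE e f where
  differentiable := hf.differentiable
  exists_eval_eq z w := (hf.exists_eval_eq z w).imp fun _ hq => ⟨hq.1.trans h, hq.2⟩

lemma IsPolynomialOfDegreeLE.add (hf : IsPolynomialOfDegreeLE d f)
    (hg : IsPolynomialOfDegreeLE d g) : IsPolynomialOfDegreeLE d fun z => f z + g z where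
  differentiable := hf.differentiable.fun_add hg.differentiable
  exists_eval_eq z w := by
    obtain ⟨p, hp, hpf⟩ := hf.exists_eval_eq z w
    obtain ⟨q, hq, hqg⟩ := hg.exists_eval_eq z w
    exact ⟨p + q, Polynomial.natDegree_add_le_of_degree_le hp hq, fun t => by simp [hpf, hqg]⟩

lemma IsPolynomialOfDegreeLE.mul (hf : IsPolynomialOfDegreeLE d f)
    (hg : IsPolynomialOfDegreeLE e g) : IsPolynomialOfDegreeLE (d + e) fun z => f z * g z where
  differentiable := hf.differentiable.fun_mul hg.differentiable
  exists_eval_eq z w := by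
    obtain ⟨p, hp, hpf⟩ := hf.exists_eval_eq z w
    obtain ⟨q, hq, hqg⟩ := hg.exists_eval_eq z w
    exact ⟨p * q, Polynomial.natDegree_mul_le_of_le hp hq, fun t => by simp [hpf, hqg]⟩

lemma IsPolynomialOfDegreeLE.const_mul (c : ℂ) (hf : IsPolynomialOfDegreeLE d f) :
    IsPolynomialOfDegreeLE d fun z => c * f z := by
  simpa using (isPolynomialOfDegreeLE_const (d := 0) c).mul hf

lemma IsPolynomialOfDegreeLE.sum {ι : Type*} {s : Finset ι} {f : ι → V → ℂ}
    (hf : ∀ i ∈ s, IsPolynomialOfDegreeLE d (f i)) :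
    IsPolynomialOfDegreeLE d fun z => ∑ i ∈ s, f i z := by
  classical
  induction s using Finset.induction_on with
  | empty => simpa using isPolynomialOfDegreeLE_const 0
  | insert i s hi ih =>
    simp_rw [Finset.sum_insert hi]
    exact (hf i (Finset.mem_insert_self i s)).add
      (ih fun j hj => hf j (Finset.mem_insert_of_mem hj))

lemma IsPolynomialOfDegreeLE.pow (hf : IsPolynomialOfDegreeLE d f) (k : ℕ) :
    IsPolynomialOfDegreeLE (k * d) fun z => f z ^ k := by
  induction k with
  | zero => simpa using isPolynomialOfDegreeLE_const 1
  | succ k ih => simpa only [pow_succ, Nat.succ_mul] using ih.mul hf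

lemma IsPolynomialOfDegreeLE.prod {ι : Type*} {s : Finset ι} {d : ι → ℕ} {f : ι → V → ℂ}
    (hf : ∀ i ∈ s, IsPolynomialOfDegreeLE (d i) (f i)) :
    IsPolynomialOfDegreeLE (∑ i ∈ s, d i) fun z => ∏ i ∈ s, f i z := by
  classical
  induction s using Finset.induction_on with
  | empty => simpa using isPolynomialOfDegreeLE_const 1
  | insert i s hi ih =>
    simp_rw [Finset.sum_insert hi, Finset.prod_insert hi]
    exact (hf i (Finset.mem_insert_self i s)).mul
      (ih fun j hj => hf j (Finset.mem_insert_of_mem hj))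

end PolynomialFunctions

section PropagationOfLowerBounds

variable {V : Type*} [NormedAddCommGroup V] [NormedSpace ℂ V] {d : ℕ} {f : V → ℂ} {H N : Set V}
  {z z₀ z₁ z₂ c : V} {b m M r ε δ ρ σ : ℝ}

lemma closedBall_lineMap_subset_of_convex (hH : Convex ℝ H) (hz : z ∈ H)
    (hc : Metric.closedBall c δ ⊆ H) (hσ : 0 < σ) (hσ1 : σ ≤ 1) :
    Metric.closedBall (z + σ • (c - z)) (σ * δ) ⊆ H := by
  intro y hy
  rw [Metric.mem_closedBall, dist_eq_norm] at hy
  have hmem : c + σ⁻¹ • (y - (z + σ • (c - z))) ∈ H := hc <| by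
    rwa [Metric.mem_closedBall, dist_eq_norm, add_sub_cancel_left, norm_smul, norm_inv,
      Real.norm_of_nonneg hσ.le, inv_mul_le_iff₀ hσ]
  convert hH.add_smul_sub_mem hz hmem ⟨hσ.le, hσ1⟩ using 1
  rw [add_sub_right_comm, smul_add, smul_inv_smul₀ hσ.ne']
  abel

lemma IsPolynomialOfDegreeLE.exists_norm_le_mul_exp (hf : IsPolynomialOfDegreeLE d f) (z w : V)
    (θ : ℝ) : ∃ t ∈ Set.Icc (Real.cosh θ - 1) (Real.cosh θ + 1),
      ‖f z‖ ≤ ‖f (z + t • w)‖ * Real.exp (d * |θ|) := by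
  obtain ⟨q, hq, hqf⟩ := hf.exists_eval_eq (z + Real.cosh θ • w) (-w)
  have hline (t : ℝ) : q.eval (t : ℂ) = f (z + (Real.cosh θ - t) • w) := by
    rw [hqf, smul_neg, Complex.coe_smul, sub_smul, ← sub_eq_add_neg, add_sub_assoc]
  obtain ⟨t, ht, hle⟩ := exists_norm_polynomial_eval_cosh_le hq θ
  rw [hline, hline, sub_self, zero_smul, add_zero] at hle
  exact ⟨Real.cosh θ - t, ⟨by linarith [ht.2], by linarith [ht.1]⟩, hle⟩

lemma exists_pos_lt_cosh_lt_two (hε : 0 < ε) : ∃ θ > 0, θ < ε ∧ Real.cosh θ < 2 := by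
  have hcosh : ∀ᶠ θ in 𝓝[>] (0 : ℝ), Real.cosh θ < 2 :=
    nhdsWithin_le_nhds ((Real.continuous_cosh.tendsto 0).eventually_lt_const (by simp))
  obtain ⟨θ, ⟨hcosh, hθε⟩, hθ⟩ :=
    ((hcosh.and (nhdsWithin_le_nhds (gt_mem_nhds hε))).and self_mem_nhdsWithin).exists
  exact ⟨θ, hθ, hθε, hcosh⟩

/-- On the segment from `z₀` to an interior point, extrapolating from `[-1, 1]` to `cosh θ` costs
only a factor `exp (d * θ)`, while keeping a distance of order `cosh θ - 1` to the boundary. -/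
lemma exists_ball_subset_norm_le_mul_exp (hH : Convex ℝ H) (hint : (interior H).Nonempty)
    (hbdd : Bornology.IsBounded H) (hε : 0 < ε) (hρ : 0 < ρ) :
    ∃ r > 0, ∀ (d : ℕ) (f : V → ℂ), IsPolynomialOfDegreeLE d f → ∀ z₀ ∈ H, ∃ z₁,
      Metric.ball z₁ r ⊆ H ∩ Metric.ball z₀ ρ ∧ ‖f z₀‖ ≤ ‖f z₁‖ * Real.exp (d * ε) := by
  obtain ⟨c, hc⟩ := hint
  obtain ⟨δ, hδ, hcδ⟩ := Metric.nhds_basis_closedBall.mem_iff.mp (mem_interior_iff_mem_nhds.mp hc)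
  obtain ⟨D, hD⟩ := hbdd.subset_closedBall c
  have hD0 : 0 ≤ D := dist_nonneg.trans (hD (interior_subset hc))
  obtain ⟨θ, hθ, hθε, hcosh⟩ := exists_pos_lt_cosh_lt_two hε
  have hcosh1 : 0 < Real.cosh θ - 1 := sub_pos.mpr (Real.one_lt_cosh.mpr hθ.ne')
  obtain ⟨κ, hκ, hκ1, hκρ⟩ : ∃ κ > 0, 3 * κ ≤ 1 ∧ 3 * κ * (D + δ) ≤ ρ := by
    refine ⟨min (1 / 3) (ρ / (3 * (D + δ))), by positivity, ?_, ?_⟩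
    · linarith [min_le_left (1 / 3) (ρ / (3 * (D + δ)))]
    · have := min_le_right (1 / 3) (ρ / (3 * (D + δ)))
      rw [le_div_iff₀ (by positivity)] at this
      linarith
  refine ⟨(Real.cosh θ - 1) * κ * δ, by positivity, fun d f hf z₀ hz₀ => ?_⟩
  obtain ⟨t, ht, hle⟩ := hf.exists_norm_le_mul_exp z₀ (κ • (c - z₀)) θ
  rw [smul_smul, abs_of_pos hθ] at hle
  set σ := t * κ
  have hσ_ge : (Real.cosh θ - 1) * κ ≤ σ := mul_le_mul_of_nonneg_right ht.1 hκ.le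
  have hσ_le : σ ≤ 3 * κ := mul_le_mul_of_nonneg_right (by linarith [ht.2]) hκ.le
  have hσ0 : 0 < σ := (mul_pos hcosh1 hκ).trans_le hσ_ge
  refine ⟨z₀ + σ • (c - z₀), fun y hy => ?_, hle.trans (by gcongr)⟩
  have hyσ : dist y (z₀ + σ • (c - z₀)) < σ * δ :=
    (Metric.mem_ball.mp hy).trans_le (by gcongr)
  refine ⟨closedBall_lineMap_subset_of_convex hH hz₀ hcδ hσ0 (hσ_le.trans hκ1) hyσ.le, ?_⟩
  have hz₁ : dist (z₀ + σ • (c - z₀)) z₀ ≤ σ * D := by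
    rw [dist_eq_norm, add_sub_cancel_left, norm_smul, Real.norm_of_nonneg hσ0.le, ← dist_eq_norm,
      dist_comm]
    exact mul_le_mul_of_nonneg_left (hD hz₀) hσ0.le
  calc dist y z₀ < σ * (D + δ) := by linarith [dist_triangle y (z₀ + σ • (c - z₀)) z₀]
    _ ≤ 3 * κ * (D + δ) := by gcongr
    _ ≤ ρ := hκρ

lemma half_le_norm_of_dist_lt (hf : DifferentiableOn ℂ f (Metric.ball z₂ r)) (hb : 0 < b)
    (hM : ∀ z ∈ Metric.ball z₂ r, ‖f z‖ ≤ M) (hr : 0 < r) (hz₂ : b ≤ ‖f z₂‖)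
    (hz : dist z z₂ < r * (b / (4 * M))) : b / 2 ≤ ‖f z‖ := by
  have hz₂M := hM z₂ (Metric.mem_ball_self hr)
  have hM0 : 0 < M := hb.trans_le (hz₂.trans hz₂M)
  have hmaps : Set.MapsTo f (Metric.ball z₂ r) (Metric.closedBall (f z₂) (2 * M)) := fun y hy => by
    rw [Metric.mem_closedBall, dist_eq_norm]
    linarith [norm_sub_le (f y) (f z₂), hM y hy]
  have hball : z ∈ Metric.ball z₂ r := hz.trans_le <| mul_le_of_le_one_right hr.le <|
    (div_le_one (by positivity)).mpr (by linarith)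
  have hdist : dist (f z) (f z₂) ≤ b / 2 := calc
    dist (f z) (f z₂) ≤ 2 * M / r * dist z z₂ :=
      Complex.dist_le_div_mul_dist_of_mapsTo_ball hf hmaps hball
    _ ≤ 2 * M / r * (r * (b / (4 * M))) := by gcongr
    _ = b / 2 := by field_simp; norm_num
  rw [dist_comm, dist_eq_norm] at hdist
  linarith [norm_sub_norm_le (f z₂) (f z)]

variable [MeasurableSpace V] [BorelSpace V] [FiniteDimensional ℂ V] (μ : Measure V)
  [μ.IsAddHaarMeasure]

lemma IsPolynomialOfDegreeLE.exists_notMem_lt_norm (hf : IsPolynomialOfDegreeLE d f) (hm : 0 < m)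
    (hmM : m ≤ M) (hM : ∀ z ∈ Metric.ball z₁ r, ‖f z‖ ≤ M) (hN : 2 * μ N < μ (Metric.ball 0 r))
    (hz₁ : m * M < ‖f z₁‖ ^ 2) : ∃ z ∈ Metric.ball z₁ r, z ∉ N ∧ m < ‖f z‖ := by
  by_contra! hcon
  have hproper : ProperSpace V := FiniteDimensional.proper ℂ V
  have hinvariant := smulInvariantMeasure_circle μ
  have hball (v : V) (hv : v ∈ Metric.ball 0 r) : z₁ + v ∈ Metric.ball z₁ r := by
    simpa using hv
  have hrot (c : Circle) (v : V) (hv : v ∈ Metric.ball 0 r) : c • v ∈ Metric.ball 0 r := by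
    simpa [Circle.smul_def, norm_smul, Circle.norm_coe] using hv
  have hK : MeasurableSet {v | m < ‖f (z₁ + v)‖} :=
    (isOpen_lt continuous_const
      (hf.differentiable.continuous.comp (continuous_const_add z₁)).norm).measurableSet
  have hNK : 2 * μ (Metric.ball 0 r ∩ {v | m < ‖f (z₁ + v)‖}) < μ (Metric.ball 0 r) := by
    refine lt_of_le_of_lt ?_ hN
    rw [← measure_preimage_add μ z₁ N]
    gcongr
    exact fun v hv => not_imp_comm.mp (hcon (z₁ + v) (hball v hv.1)) hv.2.out.not_ge
  obtain ⟨v, hv, hvol⟩ := exists_volume_circle_smul_mem_le μ Metric.isOpen_ball.measurableSet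
    hrot hK hNK
  obtain ⟨q, -, hqf⟩ := hf.exists_eval_eq z₁ v
  have hnorm (t : ℂ) : ‖(Polynomial.C (m : ℂ)⁻¹ * q).eval t‖ = ‖f (z₁ + t • v)‖ / m := by
    rw [Polynomial.eval_mul, Polynomial.eval_C, norm_mul, hqf, norm_inv, Complex.norm_real,
      Real.norm_of_nonneg hm.le, inv_mul_eq_div]
  have hcircle (θ : ℝ) : ‖(Polynomial.C (m : ℂ)⁻¹ * q).eval (circleMap 0 1 θ)‖ =
      ‖f (z₁ + Circle.exp θ • v)‖ / m := by
    rw [hnorm, Circle.smul_def, Circle.coe_exp, circleMap_zero, Complex.ofReal_one, one_mul]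
  have hjensen := sq_norm_coeff_zero_le_of_volume_le (M := M / m) ((one_le_div hm).mpr hmM)
    (fun θ => (hcircle θ).trans_le
      (div_le_div_of_nonneg_right (hM _ (hball _ (hrot _ _ hv))) hm.le))
    (by simpa only [hcircle, one_lt_div hm, Set.mem_ofPred_eq] using hvol)
  rw [Polynomial.coeff_zero_eq_eval_zero, hnorm, zero_smul, add_zero, div_pow,
    div_le_div_iff₀ (by positivity) hm] at hjensen
  nlinarith

end PropagationOfLowerBounds

section UniformDensity

variable {X : Type*} [PseudoMetricSpace X] [MeasurableSpace X] {T : ℝ}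

lemma isClosed_setOf_forall_rpow_le_measure_ball (ν : Measure X) (hT : 0 ≤ T) (R : ℝ) :
    IsClosed {x | ∀ r, 0 < r → r < R → ENNReal.ofReal (r ^ T) ≤ ν (Metric.ball x r)} := by
  refine isClosed_of_closure_subset fun x hx r hr hrR => ?_
  have hlim : Tendsto (fun e : ℝ => ENNReal.ofReal ((r - e) ^ T)) (𝓝[>] 0)
      (𝓝 (ENNReal.ofReal ((r - 0) ^ T))) :=
    (ENNReal.continuous_ofReal.comp
      ((continuous_const.sub continuous_id).rpow_const fun _ => Or.inr hT)).continuousWithinAt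
  rw [sub_zero] at hlim
  refine le_of_tendsto hlim ?_
  filter_upwards [self_mem_nhdsWithin, nhdsWithin_le_nhds (gt_mem_nhds hr)] with e he her
  have he0 : 0 < e := he
  obtain ⟨y, hy, hxy⟩ := Metric.mem_closure_iff.mp hx e he0
  refine (hy.out (r - e) (by linarith) (by linarith)).trans (measure_mono ?_)
  exact Metric.ball_subset_ball' (by linarith [dist_comm x y])

lemma exists_measure_compl_lt_forall_rpow_le_measure_ball [BorelSpace X] (ν κ : Measure X)
    [IsFiniteMeasure κ] (hT : 0 ≤ T)
    (hball : ∀ x, ∃ R > 0, ∀ r, 0 < r → r < R → ENNReal.ofReal (r ^ T) ≤ ν (Metric.ball x r))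
    {ε : ℝ≥0∞} (hε : ε ≠ 0) :
    ∃ R > 0, ∃ A : Set X, κ Aᶜ < ε ∧
      ∀ x ∈ A, ∀ r, 0 < r → r < R → ENNReal.ofReal (r ^ T) ≤ ν (Metric.ball x r) := by
  let A (k : ℕ) : Set X :=
    {x | ∀ r, 0 < r → r < 1 / ((k : ℝ) + 1) → ENNReal.ofReal (r ^ T) ≤ ν (Metric.ball x r)}
  have hmono : Monotone A := fun k l hkl x hx r hr hrl =>
    hx.out r hr (hrl.trans_le (one_div_le_one_div_of_le (by positivity) (by gcongr)))
  have hlim : Tendsto (fun k => κ (A k)ᶜ) atTop (𝓝 (κ (⋂ k, (A k)ᶜ))) :=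
    tendsto_measure_iInter_atTop
      (fun k => (isClosed_setOf_forall_rpow_le_measure_ball ν hT _).measurableSet.compl
        |>.nullMeasurableSet)
      (fun _ _ hkl => Set.compl_subset_compl.mpr (hmono hkl)) ⟨0, measure_ne_top κ _⟩
  have hempty : ⋂ k, (A k)ᶜ = ∅ := by
    refine Set.eq_empty_of_forall_notMem fun x hx => ?_
    obtain ⟨R, hR, h⟩ := hball x
    obtain ⟨k, hk⟩ := exists_nat_one_div_lt hR
    exact Set.mem_iInter.mp hx k fun r hr hrk => h r hr (hrk.trans hk)
  rw [hempty, measure_empty] at hlim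
  obtain ⟨k, hk⟩ := (hlim.eventually_lt_const (pos_iff_ne_zero.mpr hε)).exists
  exact ⟨1 / ((k : ℝ) + 1), by positivity, A k, hk, fun x hx => hx⟩

end UniformDensity

lemma exists_forall_dist_lt_norm_le_exp_mul_norm {X E : Type*} [PseudoMetricSpace X]
    [CompactSpace X] [NormedAddCommGroup E] (w : C(X, E)) (hw : ∀ x, w x ≠ 0) {ε : ℝ} (hε : 0 < ε) :
    ∃ ρ > 0, ∀ x y, dist x y < ρ → ‖w x‖ ≤ Real.exp ε * ‖w y‖ := by
  have hlog : UniformContinuous fun x => Real.log ‖w x‖ :=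
    CompactSpace.uniformContinuous_of_continuous
      (w.continuous.norm.log fun x => norm_ne_zero_iff.mpr (hw x))
  obtain ⟨ρ, hρ, h⟩ := Metric.uniformContinuous_iff.mp hlog ε hε
  refine ⟨ρ, hρ, fun x y hxy => ?_⟩
  have hlt : Real.log ‖w x‖ ≤ ε + Real.log ‖w y‖ := by
    linarith [(abs_lt.mp (Real.dist_eq _ _ ▸ h hxy)).2]
  rwa [← Real.exp_le_exp, Real.exp_add, Real.exp_log (norm_pos_iff.mpr (hw x)),
    Real.exp_log (norm_pos_iff.mpr (hw y))] at hlt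

lemma sq_enorm_le_mul_lintegral_of_forall_mem_mul_norm_le {X E : Type*} [MeasurableSpace X]
    [NormedAddCommGroup E] (ν : Measure X) {F : X → E} {s : Set X} (hs : MeasurableSet s)
    {K b m : ℝ} {v : E} (hm : ENNReal.ofReal m ≤ ν s) (hK : 0 ≤ K) (hb : 0 ≤ b)
    (hKbm : 1 ≤ K * (b ^ 2 * m)) (hF : ∀ x ∈ s, b * ‖v‖ ≤ ‖F x‖) :
    ‖v‖ₑ ^ 2 ≤ ENNReal.ofReal K * ∫⁻ x, ‖F x‖ₑ ^ 2 ∂ν := calc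
  ‖v‖ₑ ^ 2 ≤ ENNReal.ofReal (K * (b ^ 2 * m)) * ‖v‖ₑ ^ 2 :=
    le_mul_of_one_le_left zero_le (ENNReal.one_le_ofReal.mpr hKbm)
  _ = ENNReal.ofReal K * ((ENNReal.ofReal b * ‖v‖ₑ) ^ 2 * ENNReal.ofReal m) := by
    rw [ENNReal.ofReal_mul hK, ENNReal.ofReal_mul (by positivity), ENNReal.ofReal_pow hb]
    ring
  _ ≤ ENNReal.ofReal K * ((ENNReal.ofReal b * ‖v‖ₑ) ^ 2 * ν s) := by gcongr
  _ = ENNReal.ofReal K * ∫⁻ _ in s, (ENNReal.ofReal b * ‖v‖ₑ) ^ 2 ∂ν := by rw [setLIntegral_const]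
  _ ≤ ENNReal.ofReal K * ∫⁻ x in s, ‖F x‖ₑ ^ 2 ∂ν := by
    refine mul_le_mul_right (setLIntegral_mono' hs fun x hx => ?_) _
    gcongr
    rw [← ofReal_norm, ← ofReal_norm, ← ENNReal.ofReal_mul hb]
    exact ENNReal.ofReal_le_ofReal (hF x hx)
  _ ≤ ENNReal.ofReal K * ∫⁻ x, ‖F x‖ₑ ^ 2 ∂ν := by
    gcongr
    exact Measure.restrict_le_self

section BernsteinMarkov

variable {V : Type*} [NormedAddCommGroup V] [NormedSpace ℂ V] [MeasurableSpace V] [BorelSpace V]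
  [FiniteDimensional ℂ V] {d : ℕ} {f : V → ℂ} {H : Set V}

lemma IsPolynomialOfDegreeLE.exists_notMem_forall_dist_lt_le_norm (hf : IsPolynomialOfDegreeLE d f)
    (μ : Measure V) [μ.IsAddHaarMeasure] {N : Set V} {z₁ : V} {a r t : ℝ} (ha : 0 < a)
    (ht0 : 0 < t) (ht1 : t < 1) (hr : 0 < r) (hN : 2 * μ N < μ (Metric.ball 0 r))
    (hupper : ∀ z ∈ Metric.ball z₁ (2 * r), ‖f z‖ ≤ t⁻¹ * a) (hlower : t * a ≤ ‖f z₁‖) :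
    ∃ z₂ ∈ Metric.ball z₁ r, z₂ ∉ N ∧
      ∀ z, dist z z₂ < r / 4 * t ^ 5 → t ^ 4 * a / 2 ≤ ‖f z‖ := by
  have hM : t ^ 4 * a ≤ t⁻¹ * a := by
    gcongr
    exact (pow_le_one₀ ht0.le ht1.le).trans (one_le_inv_iff₀.mpr ⟨ht0, ht1.le⟩)
  have hz₁ : t ^ 4 * a * (t⁻¹ * a) < ‖f z₁‖ ^ 2 := calc
    t ^ 4 * a * (t⁻¹ * a) = t * (t * a) ^ 2 := by field_simp
    _ < 1 * (t * a) ^ 2 := by gcongr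
    _ ≤ ‖f z₁‖ ^ 2 := by rw [one_mul]; gcongr
  obtain ⟨z₂, hz₂, hz₂N, hfz₂⟩ := hf.exists_notMem_lt_norm μ (by positivity) hM
    (fun z hz => hupper z (Metric.ball_subset_ball (by linarith) hz)) hN hz₁
  refine ⟨z₂, hz₂, hz₂N, fun z hz => ?_⟩
  have hsub : Metric.ball z₂ r ⊆ Metric.ball z₁ (2 * r) :=
    Metric.ball_subset_ball' (by linarith [Metric.mem_ball.mp hz₂])
  exact half_le_norm_of_dist_lt hf.differentiable.differentiableOn (by positivity)
    (fun y hy => hupper y (hsub hy)) hr hfz₂.le (hz.trans_eq (by field_simp))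

lemma exists_forall_dist_lt_le_norm_weighted_polynomial (μ : Measure V) [μ.IsAddHaarMeasure]
    (hH : IsCompact H) (hconv : Convex ℝ H) (hint : (interior H).Nonempty) (w : C(H, ℂ))
    (hw : ∀ z, w z ≠ 0) {ε : ℝ} (hε : 0 < ε) :
    ∃ r > 0, ∀ A : Set H, 2 * μ (Subtype.val '' Aᶜ) < μ (Metric.ball 0 r) →
      ∀ d : ℕ, 0 < d → ∀ f : V → ℂ, IsPolynomialOfDegreeLE d f → ∀ z₀ : H, f z₀ ≠ 0 →
        (∀ z : H, ‖w z ^ d * f z‖ ≤ ‖w z₀ ^ d * f z₀‖) → ∃ z₂ ∈ A, ∀ z : H,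
          dist z z₂ < r / 4 * Real.exp (-(d * ε)) ^ 5 →
            Real.exp (-(d * ε)) ^ 5 / 2 * ‖w z₀ ^ d * f z₀‖ ≤ ‖w z ^ d * f z‖ := by
  have hcompact : CompactSpace H := isCompact_iff_compactSpace.mp hH
  obtain ⟨ρ, hρ, hwρ⟩ := exists_forall_dist_lt_norm_le_exp_mul_norm w hw hε
  obtain ⟨r, hr, hball⟩ := exists_ball_subset_norm_le_mul_exp hconv hint hH.isBounded hε hρ
  refine ⟨r / 2, half_pos hr, fun A hA d hd f hf z₀ hz₀ hmax => ?_⟩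
  obtain ⟨z₁, hz₁, hfz₁⟩ := hball d f hf z₀ z₀.2
  rw [← mul_div_cancel₀ r two_ne_zero] at hz₁
  set t := Real.exp (-(d * ε)) with ht_def
  have ht0 : 0 < t := Real.exp_pos _
  have ht1 : t < 1 := Real.exp_lt_one_iff.mpr (neg_lt_zero.mpr (by positivity))
  have hexp : Real.exp (d * ε) = t⁻¹ := by rw [ht_def, Real.exp_neg, inv_inv]
  have hweight (y : V) (hy : y ∈ Metric.ball z₁ (2 * (r / 2))) :
      ‖w z₀‖ ^ d ≤ t⁻¹ * ‖w ⟨y, (hz₁ hy).1⟩‖ ^ d := by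
    rw [← hexp, Real.exp_nat_mul, ← mul_pow]
    exact pow_le_pow_left₀ (norm_nonneg _) (hwρ _ _ ((dist_comm _ _).trans_lt (hz₁ hy).2)) d
  simp only [norm_mul, norm_pow] at hmax ⊢
  have hupper (y : V) (hy : y ∈ Metric.ball z₁ (2 * (r / 2))) : ‖f y‖ ≤ t⁻¹ * ‖f z₀‖ := by
    refine le_of_mul_le_mul_left ((hmax ⟨y, (hz₁ hy).1⟩).trans ?_)
      (pow_pos (norm_pos_iff.mpr (hw ⟨y, (hz₁ hy).1⟩)) d)
    nlinarith [mul_le_mul_of_nonneg_right (hweight y hy) (norm_nonneg (f z₀))]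
  have hlower : t * ‖f z₀‖ ≤ ‖f z₁‖ := by
    rwa [hexp, ← div_eq_mul_inv, le_div_iff₀' ht0] at hfz₁
  obtain ⟨z₂, hz₂, hz₂A, hfz₂⟩ := hf.exists_notMem_forall_dist_lt_le_norm μ
    (norm_pos_iff.mpr hz₀) ht0 ht1 (half_pos hr) hA hupper hlower
  have hz₂' := Metric.mem_ball.mp hz₂
  refine ⟨⟨z₂, (hz₁ (Metric.ball_subset_ball (by linarith) hz₂)).1⟩,
    not_not.mp fun h => hz₂A ⟨_, h, rfl⟩, fun z hz => ?_⟩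
  have hzr : (z : V) ∈ Metric.ball z₁ (2 * (r / 2)) := by
    have hz' : dist (z : V) z₂ < r / 2 / 4 * t ^ 5 := hz
    rw [Metric.mem_ball]
    nlinarith [pow_le_one₀ (n := 5) ht0.le ht1.le, dist_triangle (z : V) z₂ z₁]
  have hw_lower : t * ‖w z₀‖ ^ d ≤ ‖w z‖ ^ d := by
    simpa only [inv_mul_eq_div, le_div_iff₀' ht0] using hweight z hzr
  calc t ^ 5 / 2 * (‖w z₀‖ ^ d * ‖f z₀‖) = t * ‖w z₀‖ ^ d * (t ^ 4 * ‖f z₀‖ / 2) := by ring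
    _ ≤ ‖w z‖ ^ d * ‖f z‖ := by gcongr; exact hfz₂ z hz

lemma eventually_one_le_exp_mul {c ε η T : ℝ} (hc : 0 < c) (hη : (10 + 5 * T) * ε < η) :
    ∀ᶠ d : ℕ in atTop, 1 ≤ Real.exp (η * d) *
      ((Real.exp (-(d * ε)) ^ 5 / 2) ^ 2 * (c * Real.exp (-(d * ε)) ^ 5) ^ T) := by
  have hlim : Tendsto (fun d : ℕ => c ^ T / 4 * Real.exp ((η - (10 + 5 * T) * ε) * d)) atTop
      atTop :=
    (Real.tendsto_exp_atTop.comp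
      (tendsto_natCast_atTop_atTop.const_mul_atTop (sub_pos.mpr hη))).const_mul_atTop
      (by positivity)
  filter_upwards [hlim.eventually_ge_atTop 1] with d hd
  refine hd.trans_eq ?_
  have hpow : Real.exp (-(d * ε)) ^ 5 = Real.exp (-(5 * d * ε)) := by
    rw [← Real.exp_nat_mul]
    push_cast
    ring_nf
  have hexp : Real.exp ((η - (10 + 5 * T) * ε) * d) =
      Real.exp (η * d) * Real.exp (-(5 * d * ε)) ^ 2 * Real.exp (-(5 * d * ε) * T) := by
    rw [← Real.exp_nat_mul, ← Real.exp_add, ← Real.exp_add]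
    push_cast
    ring_nf
  rw [hpow, hexp, Real.mul_rpow hc.le (Real.exp_pos _).le, ← Real.exp_mul]
  ring

lemma eventually_mul_exp_neg_pow_lt (c : ℝ) {ε R : ℝ} (hε : 0 < ε) (hR : 0 < R) :
    ∀ᶠ d : ℕ in atTop, c * Real.exp (-(d * ε)) ^ 5 < R := by
  have hlim : Tendsto (fun d : ℕ => Real.exp (-(d * ε))) atTop (𝓝 0) :=
    Real.tendsto_exp_neg_atTop_nhds_zero.comp (tendsto_natCast_atTop_atTop.atTop_mul_const hε)
  have hlim' := (hlim.pow 5).const_mul c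
  rw [zero_pow (by norm_num), mul_zero] at hlim'
  exact hlim'.eventually_lt_const hR

/-- The weighted Bernstein–Markov inequality. -/
theorem eventually_forall_sq_enorm_le_lintegral (hH : IsCompact H) (hconv : Convex ℝ H)
    (hint : (interior H).Nonempty) (ν : Measure H) {T : ℝ} (hT : 0 ≤ T)
    (hball : ∀ x, ∃ R > 0, ∀ r, 0 < r → r < R → ENNReal.ofReal (r ^ T) ≤ ν (Metric.ball x r))
    (w : C(H, ℂ)) (hw : ∀ z, w z ≠ 0) {η : ℝ} (hη : 0 < η) :
    ∀ᶠ d : ℕ in atTop, ∀ f : V → ℂ, IsPolynomialOfDegreeLE d f → ∀ z : H,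
      ‖w z ^ d * f z‖ₑ ^ 2 ≤
        ENNReal.ofReal (Real.exp (η * d)) * ∫⁻ x : H, ‖w x ^ d * f x‖ₑ ^ 2 ∂ν := by
  have hcompact : CompactSpace H := isCompact_iff_compactSpace.mp hH
  obtain ⟨ε, hε, hεη⟩ : ∃ ε > 0, (10 + 5 * T) * ε < η :=
    ⟨η / (2 * (10 + 5 * T)), by positivity, by field_simp; linarith⟩
  let μ : Measure V := Measure.addHaar
  obtain ⟨r, hr, hpoly⟩ :=
    exists_forall_dist_lt_le_norm_weighted_polynomial μ hH hconv hint w hw hε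
  have hfinite : IsFiniteMeasure (μ.comap (Subtype.val : H → V)) := by
    refine ⟨?_⟩
    rw [comap_subtype_coe_apply hH.measurableSet, Set.image_univ, Subtype.range_coe]
    exact hH.measure_lt_top
  obtain ⟨R, hR, A, hA, hball⟩ := exists_measure_compl_lt_forall_rpow_le_measure_ball ν
    (μ.comap Subtype.val) hT hball (ENNReal.half_pos (Metric.measure_ball_pos μ 0 hr).ne').ne'
  rw [comap_subtype_coe_apply hH.measurableSet,
    ENNReal.lt_div_iff_mul_lt (.inl two_ne_zero) (.inl ofNat_ne_top), mul_comm] at hA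
  filter_upwards [eventually_mul_exp_neg_pow_lt (r / 4) hε hR,
    eventually_one_le_exp_mul (T := T) (c := r / 4) (by positivity) hεη,
    eventually_gt_atTop 0] with d hdR hd1 hd0 f hf z
  have hcont : Continuous fun x : H => w x ^ d * f x :=
    (w.continuous.pow d).mul (hf.differentiable.continuous.comp continuous_subtype_val)
  obtain ⟨z₀, -, hmax⟩ := isCompact_univ.exists_isMaxOn ⟨z, Set.mem_univ z⟩ hcont.norm.continuousOn
  have hle : ‖w z ^ d * f z‖ₑ ^ 2 ≤ ‖w z₀ ^ d * f z₀‖ₑ ^ 2 := by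
    gcongr
    exact enorm_le_iff_norm_le.mpr (hmax (Set.mem_univ z))
  refine hle.trans ?_
  obtain hz₀ | hz₀ := eq_or_ne (f z₀) 0
  · simp [hz₀]
  obtain ⟨z₂, hz₂, hlower⟩ := hpoly A hA d hd0 f hf z₀ hz₀ fun z => hmax (Set.mem_univ z)
  exact sq_enorm_le_mul_lintegral_of_forall_mem_mul_norm_le ν Metric.isOpen_ball.measurableSet
    (hball z₂ hz₂ _ (by positivity) hdR) (by positivity) (by positivity) hd1 hlower

end BernsteinMarkov

/-! ### Vandermonde measures -/

lemma exists_det_update_eq_sum {ι X 𝕜 : Type*} [Fintype ι] [DecidableEq ι] [CommRing 𝕜]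
    (φ : ι → X → 𝕜) (a : ι → X) (j : ι) :
    ∃ c : ι → 𝕜, ∀ x,
      (Matrix.of fun i l => φ i (Function.update a j x l)).det = ∑ i, c i * φ i x := by
  refine ⟨fun i => (Matrix.of fun i l => φ i (a l)).adjugate j i, fun x => ?_⟩
  have hcol : (Matrix.of fun i l => φ i (Function.update a j x l)) =
      (Matrix.of fun i l => φ i (a l)).updateCol j fun i => φ i x := by
    ext i l
    obtain rfl | h := eq_or_ne l j <;> simp [*]
  rw [hcol, ← Matrix.cramer_apply, Matrix.cramer_eq_adjugate_mulVec]
  rfl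

section IteratedIntegration

variable {ι X : Type*} [Fintype ι] [DecidableEq ι] [MeasurableSpace X] (ν : Measure X) {K : ℝ≥0∞}

lemma le_pow_card_mul_lintegral_pi [SigmaFinite ν] {F : (ι → X) → ℝ≥0∞} (hF : Measurable F)
    (hle : ∀ a j, F a ≤ K * ∫⁻ x, F (Function.update a j x) ∂ν) (a : ι → X) :
    F a ≤ K ^ Fintype.card ι * ∫⁻ a, F a ∂Measure.pi fun _ => ν := by
  have hmarginal (s : Finset ι) (a : ι → X) :
      F a ≤ K ^ s.card * lmarginal (fun _ => ν) s F a := by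
    induction s using Finset.induction_on generalizing a with
    | empty => simp
    | insert j s hj ih =>
      have hmeas : Measurable fun x => lmarginal (fun _ => ν) s F (Function.update a j x) :=
        (hF.lmarginal fun _ => ν).comp (measurable_update a)
      calc F a ≤ K * ∫⁻ x, F (Function.update a j x) ∂ν := hle a j
        _ ≤ K * ∫⁻ x, K ^ s.card * lmarginal (fun _ => ν) s F (Function.update a j x) ∂ν := by
          gcongr with x
          exact ih _
        _ = K ^ (insert j s).card * lmarginal (fun _ => ν) (insert j s) F a := by
          rw [lintegral_const_mul _ hmeas, lmarginal_insert F hF hj,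
            Finset.card_insert_of_notMem hj, pow_succ', mul_assoc]
  simpa [lmarginal_univ] using hmarginal Finset.univ a

variable {𝕜 : Type*} [TopologicalSpace X] [RCLike 𝕜]

lemma determinantalMeasure_apply (φ : ι → C(X, 𝕜)) {s : Set (ι → X)} (hs : MeasurableSet s) :
    determinantalMeasure ν φ s =
      ∫⁻ a in s, ‖(Matrix.of fun i j => φ i (a j)).det‖ₑ ^ 2 ∂Measure.pi fun _ => ν := by
  simp_rw [determinantalMeasure, withDensity_apply _ hs, ← ofReal_norm,
    ENNReal.ofReal_pow (norm_nonneg _)]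

lemma sq_enorm_det_le_pow_mul_determinantalMeasure_univ [SigmaFinite ν]
    [OpensMeasurableSpace X] (φ : ι → C(X, 𝕜))
    (hφ : ∀ (c : ι → 𝕜) (z : X),
      ‖∑ i, c i * φ i z‖ₑ ^ 2 ≤ K * ∫⁻ x, ‖∑ i, c i * φ i x‖ₑ ^ 2 ∂ν) (a : ι → X) :
    ‖(Matrix.of fun i j => φ i (a j)).det‖ₑ ^ 2 ≤
      K ^ Fintype.card ι * determinantalMeasure ν φ Set.univ := by
  rw [determinantalMeasure_apply ν φ .univ, Measure.restrict_univ]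
  refine le_pow_card_mul_lintegral_pi (F := fun a => ‖(Matrix.of fun i j => φ i (a j)).det‖ₑ ^ 2) ν
    ((measurable_det_apply φ).enorm.pow_const 2) (fun a j => ?_) a
  obtain ⟨c, hc⟩ := exists_det_update_eq_sum (fun i => φ i) a j
  have hcj := hc (a j)
  rw [Function.update_eq_self] at hcj
  simpa only [hc, hcj] using hφ c (a j)

end IteratedIntegration

section PartitionFunction

variable {n d : ℕ} {H : Set (Pt n)}

/-- The measure `|VDM_d^Q(a)|² dν^{⊗s}(a)`, whose total mass is the partition function. -/
def vandermondeMeasure (E : Fin (sdim n d) → (Fin n → ℕ)) (ν : Measure H) (Q : C(H, ℝ)) :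
    Measure (Fin (sdim n d) → H) :=
  determinantalMeasure ν fun i => weightedMonomial (expWeight Q) (coordinate H) d (E i)

lemma vandermondeMeasure_apply (E : Fin (sdim n d) → (Fin n → ℕ)) (ν : Measure H) (Q : C(H, ℝ))
    {s : Set (Fin (sdim n d) → H)} (hs : MeasurableSet s) :
    vandermondeMeasure E ν Q s =
      ∫⁻ a in s, absVDMQ n d E H Q a ^ 2 ∂Measure.pi fun _ => ν := by
  simp_rw [vandermondeMeasure, determinantalMeasure_apply ν _ hs, absVDMQ_eq_enorm_det]

lemma IsEnum.isPolynomialOfDegreeLE_sum {E : Fin (sdim n d) → (Fin n → ℕ)} (hE : IsEnum n d E)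
    (c : Fin (sdim n d) → ℂ) :
    IsPolynomialOfDegreeLE d fun z : Pt n => ∑ i, c i * ∏ k, z k ^ E i k :=
  .sum fun i _ => .const_mul _ <| (IsPolynomialOfDegreeLE.prod fun k _ =>
    (isPolynomialOfDegreeLE_clm (EuclideanSpace.proj k)).pow (E i k)).mono <| by
      simpa using (hE.2 (E i)).mpr (Set.mem_range_self i)

lemma eventually_sq_absVDMQ_le_mul_vandermondeMeasure_univ
    {E : ∀ d, Fin (sdim n d) → (Fin n → ℕ)} (hE : ∀ d, IsEnum n d (E d)) (hH : IsCompact H)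
    (hconv : Convex ℝ H) (hint : (interior H).Nonempty) {ν : Measure H} [SigmaFinite ν]
    (hdens : DensityCond H ν) (Q : C(H, ℝ)) {η : ℝ} (hη : 0 < η) :
    ∀ᶠ d in atTop, ∀ a, absVDMQ n d (E d) H Q a ^ 2 ≤
      ENNReal.ofReal (Real.exp (η * d)) ^ sdim n d *
        vandermondeMeasure (E d) ν Q Set.univ := by
  obtain ⟨T, hT, hball⟩ := hdens
  filter_upwards [eventually_forall_sq_enorm_le_lintegral hH hconv hint ν hT.le hball
    (expWeight Q) (fun z => by simp [expWeight]) hη] with d hd a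
  rw [absVDMQ_eq_enorm_det]
  have hle := sq_enorm_det_le_pow_mul_determinantalMeasure_univ ν
    (fun i => weightedMonomial (expWeight Q) (coordinate H) d (E d i))
    (K := ENNReal.ofReal (Real.exp (η * d))) (fun c z => ?_) a
  · rwa [Fintype.card_fin] at hle
  have hfactor (x : H) : ∑ i, c i * weightedMonomial (expWeight Q) (coordinate H) d (E d i) x =
      expWeight Q x ^ d * ∑ i, c i * ∏ k, (x : Pt n) k ^ E d i k := by
    simp [weightedMonomial, coordinate, Finset.mul_sum, mul_left_comm]
  simpa only [hfactor] using hd _ ((hE d).isPolynomialOfDegreeLE_sum c) z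

theorem eventually_pow_le_vandermondeMeasure_univ
    {E : ∀ d, Fin (sdim n d) → (Fin n → ℕ)} (hE : ∀ d, IsEnum n d (E d)) (hH : IsCompact H)
    (hconv : Convex ℝ H) (hint : (interior H).Nonempty) {ν : Measure H} [SigmaFinite ν]
    (hdens : DensityCond H ν) (Q : C(H, ℝ)) {c : ℝ} (hc0 : 0 < c)
    (hc : ENNReal.ofReal c < deltaBar n E H Q) :
    ∀ᶠ d in atTop, ENNReal.ofReal c ^ (2 * d * sdim n d) ≤
      vandermondeMeasure (E d) ν Q Set.univ := by
  have hcompact : CompactSpace H := isCompact_iff_compactSpace.mp hH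
  have hnonempty : Nonempty H := (hint.mono interior_subset).to_subtype
  obtain ⟨b, -, hcb, hbδ⟩ := ENNReal.lt_iff_exists_real_btwn.mp hc
  have hlt : c < b := (ENNReal.ofReal_lt_ofReal_iff_of_nonneg hc0.le).mp hcb
  have hbc : 0 < b / c := div_pos (hc0.trans hlt) hc0
  have hlog : 0 < 2 * Real.log (b / c) :=
    mul_pos two_pos (Real.log_pos ((one_lt_div hc0).mpr hlt))
  filter_upwards [eventually_sq_absVDMQ_le_mul_vandermondeMeasure_univ hE hH hconv hint hdens Q
    hlog, eventually_exists_pow_lt_absVDMQ hE Q hbδ] with d hd ⟨a, ha⟩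
  have hexp : ENNReal.ofReal (Real.exp (2 * Real.log (b / c) * d)) ^ sdim n d =
      ENNReal.ofReal (b / c) ^ (2 * d * sdim n d) := by
    have hpow : Real.exp (2 * Real.log (b / c) * d) = (b / c) ^ (2 * d) := by
      rw [mul_right_comm, mul_comm, ← Nat.cast_ofNat, ← Nat.cast_mul, Real.exp_mul,
        Real.exp_log hbc, Real.rpow_natCast]
    rw [hpow, ENNReal.ofReal_pow hbc.le, ← pow_mul]
  have hb : ENNReal.ofReal b = ENNReal.ofReal (b / c) * ENNReal.ofReal c := by
    rw [← ENNReal.ofReal_mul hbc.le, div_mul_cancel₀ _ hc0.ne']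
  have hpos : ENNReal.ofReal (b / c) ^ (2 * d * sdim n d) ≠ 0 :=
    pow_ne_zero _ (ENNReal.ofReal_pos.mpr hbc).ne'
  refine (ENNReal.mul_le_mul_iff_right hpos (pow_ne_top ofReal_ne_top)).mp ?_
  calc ENNReal.ofReal (b / c) ^ (2 * d * sdim n d) * ENNReal.ofReal c ^ (2 * d * sdim n d)
      = (ENNReal.ofReal b ^ (d * sdim n d)) ^ 2 := by rw [← mul_pow, ← hb, ← pow_mul]; ring
    _ ≤ absVDMQ n d (E d) H Q a ^ 2 := by gcongr
    _ ≤ _ := hexp ▸ hd a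

end PartitionFunction

section EmpiricalMeasure

variable {X : Type*} [MeasurableSpace X] {s : ℕ}

lemma integral_empPM (hs : s ≠ 0) (a : Fin s → X) {f : X → ℝ} (hf : StronglyMeasurable f) :
    ∫ x, f x ∂(empPM hs a : Measure X) = linearStatistic f a / s := by
  have hcoe : (empPM hs a : Measure X) = (s : ℝ≥0∞)⁻¹ • ∑ j, Measure.dirac (a j) := rfl
  rw [hcoe, integral_smul_measure, integral_finsetSum_measure fun j _ =>
    (integrable_dirac' hf enorm_lt_top)]
  simp_rw [integral_dirac' _ _ hf]
  rw [ENNReal.toReal_inv, ENNReal.toReal_natCast, smul_eq_mul, ← div_eq_inv_mul,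
    linearStatistic_apply]

variable [TopologicalSpace X] [OpensMeasurableSpace X]

lemma continuous_empPM (hs : s ≠ 0) :
    Continuous (empPM hs : (Fin s → X) → ProbabilityMeasure X) := by
  rw [continuous_iff_continuousAt]
  intro a
  refine ProbabilityMeasure.tendsto_iff_forall_integral_tendsto.mpr fun f => ?_
  simp_rw [integral_empPM hs _ f.continuous.stronglyMeasurable, linearStatistic_apply]
  exact ((continuous_finsetSum _ fun j _ =>
    f.continuous.comp (continuous_apply j)).div_const _).tendsto a

open scoped BoundedContinuousFunction in
lemma exists_finset_forall_abs_integral_sub_lt_imp_mem (μ : ProbabilityMeasure X)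
    {G : Set (ProbabilityMeasure X)} (hG : G ∈ 𝓝 μ) :
    ∃ (S : Finset (X →ᵇ ℝ)) (ε : ℝ), 0 < ε ∧ ∀ μ' : ProbabilityMeasure X,
      (∀ f ∈ S, |∫ x, f x ∂(μ' : Measure X) - ∫ x, f x ∂(μ : Measure X)| < ε) → μ' ∈ G := by
  let L (μ' : ProbabilityMeasure X) (f : X →ᵇ ℝ) : ℝ := ∫ x, f x ∂(μ' : Measure X)
  have hL : comap L (𝓝 (L μ)) ≤ 𝓝 μ := by
    change Tendsto (fun μ' : ProbabilityMeasure X => μ') (comap L (𝓝 (L μ))) (𝓝 μ)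
    refine ProbabilityMeasure.tendsto_iff_forall_integral_tendsto.mpr fun f => ?_
    exact (tendsto_pi_nhds.mp (tendsto_comap (f := L) (x := 𝓝 (L μ)))) f
  have hbasis : (𝓝 (L μ)).HasBasis _ _ := nhds_pi (A := fun _ : X →ᵇ ℝ => ℝ) ▸
    hasBasis_pi fun f => Metric.nhds_basis_ball (x := L μ f)
  obtain ⟨⟨I, r⟩, ⟨hI, hr⟩, hsub⟩ := (hbasis.comap L).mem_iff.mp (hL hG)
  have hsmall : ∀ᶠ ε in 𝓝[>] (0 : ℝ), ∀ f ∈ I, ε < r f :=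
    (eventually_all_finite hI).mpr fun f hf => nhdsWithin_le_nhds (gt_mem_nhds (hr f hf))
  obtain ⟨ε, hεr, hε⟩ := (hsmall.and self_mem_nhdsWithin).exists
  refine ⟨hI.toFinset, ε, hε, fun μ' h => hsub fun f hf => ?_⟩
  exact (h f (hI.mem_toFinset.mpr hf)).trans (hεr f hf)

end EmpiricalMeasure

variable {n d : ℕ} {H : Set (Pt n)}

lemma measurableSet_Gtilde (d : ℕ) {G : Set (ProbabilityMeasure H)} (hG : IsOpen G) :
    MeasurableSet (Gtilde d H G) :=
  (hG.preimage (continuous_empPM (sdim_pos n d).ne')).measurableSet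

lemma absVDMQ_add (E : Fin (sdim n d) → (Fin n → ℕ)) (Q V : H → ℝ) (a : Fin (sdim n d) → H) :
    absVDMQ n d E H (Q + V) a =
      ENNReal.ofReal (Real.exp (-d * linearStatistic V a)) * absVDMQ n d E H Q a := by
  rw [absVDMQ, absVDMQ, ← ENNReal.ofReal_mul (Real.exp_pos _).le, linearStatistic_apply,
    Finset.mul_sum, Real.exp_sum, mul_left_comm, ← Finset.prod_mul_distrib]
  simp_rw [← Real.exp_add, Pi.add_apply, mul_add, add_comm]

section JLeW

variable (E : ∀ d, Fin (sdim n d) → (Fin n → ℕ)) {ν : Measure H} (Q : H → ℝ)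

lemma Jd_le_Wd (hν : ν Set.univ ≤ 1) (hd : 0 < d) (E : Fin (sdim n d) → (Fin n → ℕ))
    {G : Set (ProbabilityMeasure H)} (hG : IsOpen G) : Jd n d E H ν Q G ≤ Wd n d E H Q G := by
  have hfinite : IsFiniteMeasure ν := ⟨hν.trans_lt one_lt_top⟩
  have hp : (0 : ℝ) < d * sdim n d := by
    have := sdim_pos n d
    positivity
  have hW (a) (ha : a ∈ Gtilde d H G) :
      absVDMQ n d E H Q a ≤ Wd n d E H Q G ^ (d * sdim n d : ℝ) := by
    rw [← ENNReal.rpow_inv_le_iff hp, ← one_div]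
    exact le_iSup₂ (f := fun a (_ : a ∈ Gtilde d H G) =>
      absVDMQ n d E H Q a ^ (1 / (d * sdim n d) : ℝ)) a ha
  rw [Jd, one_div, mul_assoc, ENNReal.rpow_inv_le_iff (by positivity), mul_comm,
    ENNReal.rpow_mul, ENNReal.rpow_ofNat]
  calc ∫⁻ a in Gtilde d H G, absVDMQ n d E H Q a ^ 2 ∂(Measure.pi fun _ => ν)
      ≤ ∫⁻ _ in Gtilde d H G, (Wd n d E H Q G ^ (d * sdim n d : ℝ)) ^ 2
          ∂(Measure.pi fun _ => ν) :=
        setLIntegral_mono' (measurableSet_Gtilde d hG) fun a ha => by gcongr; exact hW a ha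
    _ = (Wd n d E H Q G ^ (d * sdim n d : ℝ)) ^ 2 *
          (Measure.pi fun _ => ν) (Gtilde d H G) := setLIntegral_const _ _
    _ ≤ (Wd n d E H Q G ^ (d * sdim n d : ℝ)) ^ 2 := by
        refine mul_le_of_le_one_right' ((measure_mono (Set.subset_univ _)).trans ?_)
        rw [Measure.pi_univ]
        exact Finset.prod_le_one' fun _ _ => hν

theorem JQ_le_WQ (hν : ν Set.univ ≤ 1) (μ : ProbabilityMeasure H) :
    JQ n E H ν Q μ ≤ WQ n E H Q μ :=
  iInf₂_mono fun _ hG => limsup_le_limsup <| (eventually_gt_atTop 0).mono fun d hd =>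
    Jd_le_Wd Q hν hd (E d) hG.1

end JLeW

section WLeInf

variable (E : ∀ d, Fin (sdim n d) → (Fin n → ℕ)) (Q : C(H, ℝ))

lemma Wd_zero_le (hd : 0 < d) (E : Fin (sdim n d) → (Fin n → ℕ))
    {c : ℝ} {G : Set (ProbabilityMeasure H)} (hG : ∀ μ ∈ G, ∫ x, Q x ∂(μ : Measure H) ≤ c) :
    Wd n d E H 0 G ≤ ENNReal.ofReal (Real.exp c) *
      (⨆ a, absVDMQ n d E H Q a) ^ (1 / (d * sdim n d) : ℝ) := by
  have hs : (0 : ℝ) < sdim n d := Nat.cast_pos.mpr (sdim_pos n d)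
  have hp : (0 : ℝ) < d * sdim n d := by positivity
  refine iSup₂_le fun a ha => ?_
  have hmean := hG _ ha
  rw [integral_empPM _ _ Q.continuous.stronglyMeasurable, div_le_iff₀ hs] at hmean
  rw [one_div, ENNReal.rpow_inv_le_iff hp, ENNReal.mul_rpow_of_nonneg _ _ hp.le,
    ENNReal.rpow_inv_rpow hp.ne', ENNReal.ofReal_rpow_of_pos (Real.exp_pos _), ← Real.exp_mul]
  calc absVDMQ n d E H 0 a
      = ENNReal.ofReal (Real.exp (d * linearStatistic Q a)) * absVDMQ n d E H Q a := by
        rw [← add_neg_cancel (Q : H → ℝ), absVDMQ_add, map_neg, Pi.neg_apply, neg_mul_neg]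
    _ ≤ ENNReal.ofReal (Real.exp (c * (d * sdim n d))) * ⨆ a, absVDMQ n d E H Q a := by
        refine mul_le_mul' (ENNReal.ofReal_le_ofReal (Real.exp_le_exp.mpr ?_))
          (le_iSup (fun a => absVDMQ n d E H Q a) a)
        linarith [mul_le_mul_of_nonneg_left hmean (Nat.cast_nonneg (α := ℝ) d)]

variable [CompactSpace H]

theorem WQ_zero_le_deltaBar_mul (μ : ProbabilityMeasure H) :
    WQ n E H 0 μ ≤
      deltaBar n E H Q * ENNReal.ofReal (Real.exp (∫ z, Q z ∂(μ : Measure H))) := by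
  have hle (c : ℝ) (hc : ∫ z, Q z ∂(μ : Measure H) < c) :
      WQ n E H 0 μ ≤ deltaBar n E H Q * ENNReal.ofReal (Real.exp c) := by
    let G : Set (ProbabilityMeasure H) := {μ' | ∫ z, Q z ∂(μ' : Measure H) < c}
    have hG : IsOpen G := isOpen_lt
      (ProbabilityMeasure.continuous_integral_boundedContinuousFunction
        (BoundedContinuousFunction.mkOfCompact Q)) continuous_const
    refine (iInf₂_le G ⟨hG, hc⟩).trans ?_
    rw [mul_comm, deltaBar, ← ENNReal.limsup_const_mul_of_ne_top ENNReal.ofReal_ne_top]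
    refine limsup_le_limsup ((eventually_gt_atTop 0).mono fun d hd => ?_)
    exact Wd_zero_le Q hd (E d) fun μ' h => h.out.le
  have hlim : Tendsto (fun c => deltaBar n E H Q * ENNReal.ofReal (Real.exp c))
      (𝓝[>] ∫ z, Q z ∂(μ : Measure H))
      (𝓝 (deltaBar n E H Q * ENNReal.ofReal (Real.exp (∫ z, Q z ∂(μ : Measure H))))) :=
    ENNReal.Tendsto.const_mul
      ((ENNReal.continuous_ofReal.comp Real.continuous_exp).continuousWithinAt)
      (.inl (ENNReal.ofReal_pos.mpr (Real.exp_pos _)).ne')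
  exact ge_of_tendsto hlim (eventually_mem_nhdsWithin.mono hle)

end WLeInf

lemma eventually_forall_le_of_lipschitzWith {ι α : Type*} [PseudoMetricSpace α] {l : Filter ι}
    {F : ι → α → ℝ} {K : NNReal} (hF : ∀ᶠ i in l, LipschitzWith K (F i)) {s : Set α}
    (hs : TotallyBounded s) {c c' : ℝ} (hcc' : c < c') (h : ∀ x ∈ s, ∀ᶠ i in l, c' ≤ F i x) :
    ∀ᶠ i in l, ∀ x ∈ s, c ≤ F i x := by
  have hδ : 0 < (c' - c) / (K + 1) := div_pos (sub_pos.mpr hcc') (by positivity)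
  obtain ⟨t, hts, ht, hcover⟩ := Metric.finite_approx_of_totallyBounded hs _ hδ
  filter_upwards [hF, (eventually_all_finite ht).mpr fun x hx => h x (hts hx)] with i hi hit x hx
  obtain ⟨y, hy, hxy⟩ := Set.mem_iUnion₂.mp (hcover hx)
  have hdist : |F i x - F i y| ≤ K * ((c' - c) / (K + 1)) :=
    (hi.dist_le_mul x y).trans (by gcongr; exact (Metric.mem_ball.mp hxy).le)
  have hK : K * ((c' - c) / (K + 1)) ≤ c' - c := by
    rw [← mul_div_assoc, div_le_iff₀ (by positivity)]
    nlinarith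
  linarith [hit y hy, (abs_le.mp hdist).1]

section FreeEnergy

variable {n d : ℕ} {H : Set (Pt n)}

lemma vandermondeMeasure_eq_withDensity (E : Fin (sdim n d) → (Fin n → ℕ)) (ν : Measure H)
    (Q : C(H, ℝ)) :
    vandermondeMeasure E ν Q =
      (Measure.pi fun _ => ν).withDensity fun a => absVDMQ n d E H Q a ^ 2 := by
  ext s hs
  rw [vandermondeMeasure_apply E ν Q hs, withDensity_apply _ hs]

lemma measurable_absVDMQ (E : Fin (sdim n d) → (Fin n → ℕ)) (Q : C(H, ℝ)) :
    Measurable (absVDMQ n d E H Q) := by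
  simp_rw [funext (absVDMQ_eq_enorm_det E Q)]
  exact (measurable_det_apply _).enorm

lemma integral_exp_linearStatistic_vandermondeMeasure (E : Fin (sdim n d) → (Fin n → ℕ))
    (ν : Measure H) (Q V : C(H, ℝ)) :
    ∫ a, Real.exp (linearStatistic ((2 * d : ℝ) • V) a) ∂(vandermondeMeasure E ν Q) =
      (vandermondeMeasure E ν (Q - V)).real Set.univ := by
  have hdensity (a : Fin (sdim n d) → H) : absVDMQ n d E H (Q - V : C(H, ℝ)) a ^ 2 =
      absVDMQ n d E H Q a ^ 2 *
        ENNReal.ofReal (Real.exp (linearStatistic ((2 * d : ℝ) • V) a)) := by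
    rw [sub_eq_add_neg, ContinuousMap.coe_add, absVDMQ_add, mul_pow, mul_comm,
      ← ENNReal.ofReal_pow (Real.exp_pos _).le, ← Real.exp_nat_mul, ContinuousMap.coe_neg,
      ContinuousMap.coe_smul, map_neg, map_smul, Pi.neg_apply, Pi.smul_apply, smul_eq_mul]
    congr 3
    push_cast
    ring
  rw [integral_eq_lintegral_of_nonneg_ae (.of_forall fun a => (Real.exp_pos _).le)
    (measurable_linearStatistic _).exp.aestronglyMeasurable, Measure.real,
    vandermondeMeasure_eq_withDensity, vandermondeMeasure_eq_withDensity,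
    withDensity_apply _ MeasurableSet.univ, setLIntegral_univ,
    lintegral_withDensity_eq_lintegral_mul _ ((measurable_absVDMQ E Q).pow_const 2)
      (measurable_linearStatistic _).exp.ennreal_ofReal]
  simp_rw [hdensity, Pi.mul_apply]

/-- The free energy `V ↦ (log ∫ |VDM_d(a)|² e^{2d ∑ V(a_j)} dν^s(a)) / (2ds)`: it is the
logarithmic moment generating function of the unweighted Vandermonde measure, scaled so that `V`
enters as the weight `e^V` of `VDM_d`. -/
def freeEnergy (E : Fin (sdim n d) → (Fin n → ℕ)) (ν : Measure H) (V : C(H, ℝ)) : ℝ :=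
  scaledCGF (vandermondeMeasure E ν 0) ((2 * d : ℝ) • V) / (2 * d)

lemma freeEnergy_eq_log_div (E : Fin (sdim n d) → (Fin n → ℕ)) (ν : Measure H) (V : C(H, ℝ)) :
    freeEnergy E ν V =
      Real.log ((vandermondeMeasure E ν (-V)).real Set.univ) / (2 * d * sdim n d) := by
  rw [freeEnergy, scaledCGF, integral_exp_linearStatistic_vandermondeMeasure, zero_sub,
    Fintype.card_fin, div_div, mul_comm]

lemma integral_sum_smul_eq_inner {X τ : Type*} [TopologicalSpace X] [CompactSpace X]
    [MeasurableSpace X] [OpensMeasurableSpace X] (μ : Measure X) [IsFiniteMeasure μ] [Fintype τ]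
    (u : τ → C(X, ℝ)) (t : EuclideanSpace ℝ τ) :
    ∫ x, (∑ i, t i • u i : C(X, ℝ)) x ∂μ = inner ℝ t (WithLp.toLp 2 fun i => ∫ x, u i x ∂μ) := by
  have hu (i : τ) : Integrable (u i) μ :=
    (u i).continuous.integrable_of_hasCompactSupport (.of_compactSpace _)
  simp only [ContinuousMap.sum_apply, ContinuousMap.smul_apply]
  rw [integral_finsetSum _ fun i _ => by exact (hu i).smul (t i)]
  simp [integral_const_mul, PiLp.inner_apply, mul_comm]

variable [CompactSpace H] {ν : Measure H} [IsFiniteMeasure ν]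

instance (E : Fin (sdim n d) → (Fin n → ℕ)) (Q : C(H, ℝ)) :
    IsFiniteMeasure (vandermondeMeasure E ν Q) := by
  unfold vandermondeMeasure
  infer_instance

instance : Nonempty (Fin (sdim n d)) := Fin.pos_iff_nonempty.mp (sdim_pos n d)

lemma lipschitzWith_freeEnergy (hd : 0 < d) (E : Fin (sdim n d) → (Fin n → ℕ))
    [NeZero (vandermondeMeasure E ν 0)] : LipschitzWith 1 (freeEnergy E ν) := by
  have hd' : (0 : ℝ) < 2 * d := by positivity
  refine .of_dist_le_mul fun V W => ?_
  have h := (lipschitzWith_scaledCGF (P := vandermondeMeasure E ν 0)).dist_le_mul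
    ((2 * d : ℝ) • V) ((2 * d : ℝ) • W)
  rw [freeEnergy, freeEnergy, Real.dist_eq, ← sub_div, abs_div, abs_of_pos hd',
    div_le_iff₀ hd', ← Real.dist_eq]
  refine h.trans_eq ?_
  rw [dist_eq_norm, dist_eq_norm, ← smul_sub, norm_smul, Real.norm_of_nonneg hd'.le]
  ring

lemma tiltsDominatedByProducts_vandermondeMeasure (E : Fin (sdim n d) → (Fin n → ℕ))
    (Q : C(H, ℝ)) [hne : NeZero (vandermondeMeasure E ν Q)] :
    TiltsDominatedByProducts (vandermondeMeasure E ν Q) := by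
  unfold vandermondeMeasure at hne ⊢
  exact tiltsDominatedByProducts_determinantalMeasure _

lemma half_exp_le_vandermondeMeasure_real (hd : 0 < d) (E : Fin (sdim n d) → (Fin n → ℕ))
    [NeZero (vandermondeMeasure E ν 0)] (μ : Measure H) [IsFiniteMeasure μ]
    {τ : Type*} [Fintype τ] (u : τ → C(H, ℝ)) {e η R I C : ℝ} {B : NNReal} (he : 0 ≤ e)
    (hη : 0 < η) (hR : 0 ≤ R) (hu : ∀ i, ‖u i‖ ≤ B)
    (hI : ∀ t ∈ Metric.closedBall (0 : EuclideanSpace ℝ τ) R,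
      I ≤ freeEnergy E ν (∑ i, t i • u i) - ∫ x, (∑ i, t i • u i : C(H, ℝ)) x ∂μ)
    (hC : freeEnergy E ν 0 ≤ C) (hCI : C - I < η / 2 * R ^ 2)
    (htail : Fintype.card τ * (2 * Real.exp (-(sdim n d * e ^ 2 / (2 * B ^ 2)))) ≤ 1 / 2) :
    1 / 2 * Real.exp (2 * d * sdim n d * (I - e * (Fintype.card τ * R))) ≤
      (vandermondeMeasure E ν 0).real {a | ∀ i, |linearStatistic (u i) a -
        sdim n d * ∫ x, u i x ∂μ| ≤ sdim n d * (e + √(2 * η * (C - I)))} := by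
  have hd' : (0 : ℝ) < 2 * d := by positivity
  have hdual (t) (ht : t ∈ Metric.closedBall (0 : EuclideanSpace ℝ τ) (2 * d * R)) :
      2 * d * I ≤ scaledCGF (vandermondeMeasure E ν 0) (∑ i, t i • u i) -
        inner ℝ t (WithLp.toLp 2 fun i => ∫ x, u i x ∂μ) := by
    obtain ⟨t, rfl⟩ : ∃ t', (2 * d : ℝ) • t' = t := ⟨_, smul_inv_smul₀ hd'.ne' t⟩
    rw [mem_closedBall_zero_iff, norm_smul, Real.norm_of_nonneg hd'.le,
      mul_le_mul_iff_right₀ hd'] at ht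
    have hsum : ∑ i, ((2 * d : ℝ) • t) i • u i = (2 * d : ℝ) • ∑ i, t i • u i := by
      simp_rw [PiLp.smul_apply, smul_assoc, Finset.smul_sum]
    have h := hI t (mem_closedBall_zero_iff.mpr ht)
    rw [freeEnergy, integral_sum_smul_eq_inner, le_sub_iff_add_le, le_div_iff₀' hd'] at h
    rw [hsum, real_inner_smul_left]
    linarith
  have hC' : scaledCGF (vandermondeMeasure E ν 0) 0 ≤ 2 * d * C := by
    rwa [freeEnergy, smul_zero, div_le_iff₀' hd'] at hC
  have hCI' : 2 * d * C - 2 * d * I < η / (2 * d) / 2 * (2 * d * R) ^ 2 :=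
    calc 2 * d * C - 2 * d * I = 2 * d * (C - I) := by ring
      _ < 2 * d * (η / 2 * R ^ 2) := mul_lt_mul_of_pos_left hCI hd'
      _ = η / (2 * d) / 2 * (2 * d * R) ^ 2 := by field_simp
  have hldp := (tiltsDominatedByProducts_vandermondeMeasure E 0).half_exp_le_measureReal u
    (WithLp.toLp 2 fun i => ∫ x, u i x ∂μ) he (by positivity) (by positivity) hu hdual hC' hCI'
    (by simpa only [Fintype.card_fin])
  have hexp : sdim n d * (2 * d * I - e * (Fintype.card τ * (2 * d * R))) =
      2 * d * sdim n d * (I - e * (Fintype.card τ * R)) := by ring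
  have hsqrt : 2 * (η / (2 * d)) * (2 * d * C - 2 * d * I) = 2 * η * (C - I) := by field_simp
  rwa [Fintype.card_fin, hexp, hsqrt] at hldp

end FreeEnergy

section Asymptotics

variable {n : ℕ} {E : ∀ d, Fin (sdim n d) → (Fin n → ℕ)} {H : Set (Pt n)} {ν : Measure H}

lemma exists_eventually_freeEnergy_zero_le (hE : ∀ d, IsEnum n d (E d)) [CompactSpace H]
    [Nonempty H] (hν : ν Set.univ ≤ 1) : ∃ C, ∀ᶠ d in atTop, freeEnergy (E d) ν 0 ≤ C := by
  have hfinite : IsFiniteMeasure ν := ⟨hν.trans_lt one_lt_top⟩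
  obtain ⟨C, hC0, hC⟩ := exists_eventually_absVDMQ_le_pow hE (0 : C(H, ℝ))
  refine ⟨max (Real.log C) 0, ?_⟩
  filter_upwards [hC, eventually_gt_atTop 0] with d hd hd0
  have hs := sdim_pos n d
  have hle : vandermondeMeasure (E d) ν 0 Set.univ ≤ ENNReal.ofReal (C ^ (2 * d * sdim n d)) := by
    rw [vandermondeMeasure_apply _ _ _ MeasurableSet.univ]
    calc ∫⁻ a in Set.univ, absVDMQ n d (E d) H (0 : C(H, ℝ)) a ^ 2 ∂(Measure.pi fun _ => ν)
        ≤ ∫⁻ _ in Set.univ, (ENNReal.ofReal C ^ (d * sdim n d)) ^ 2 ∂(Measure.pi fun _ => ν) :=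
          lintegral_mono fun a => by gcongr; exact hd a
      _ = (ENNReal.ofReal C ^ (d * sdim n d)) ^ 2 * ν Set.univ ^ sdim n d := by
          simp [Measure.pi_univ]
      _ ≤ (ENNReal.ofReal C ^ (d * sdim n d)) ^ 2 :=
          mul_le_of_le_one_right' (pow_le_one' hν _)
      _ = _ := by rw [← pow_mul, ← ENNReal.ofReal_pow hC0.le]; ring_nf
  rw [freeEnergy_eq_log_div, neg_zero, div_le_iff₀ (by positivity)]
  obtain hzero | hpos := (measureReal_nonneg (μ := vandermondeMeasure (E d) ν 0)
    (s := Set.univ)).eq_or_lt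
  · rw [← hzero, Real.log_zero]
    positivity
  calc Real.log ((vandermondeMeasure (E d) ν 0).real Set.univ)
      ≤ Real.log (C ^ (2 * d * sdim n d)) :=
        Real.log_le_log hpos (ENNReal.toReal_le_of_le_ofReal (by positivity) hle)
    _ = Real.log C * (2 * d * sdim n d) := by
        rw [Real.log_pow]
        push_cast
        ring
    _ ≤ _ := by gcongr; exact le_max_left _ _

lemma eventually_le_freeEnergy_neg (hE : ∀ d, IsEnum n d (E d)) (hH : IsCompact H)
    (hconv : Convex ℝ H) (hint : (interior H).Nonempty) [IsFiniteMeasure ν]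
    (hdens : DensityCond H ν) (Q : C(H, ℝ)) {I : ℝ}
    (hI : ENNReal.ofReal (Real.exp I) < deltaBar n E H Q) :
    ∀ᶠ d in atTop, I ≤ freeEnergy (E d) ν (-Q) := by
  have hcompact : CompactSpace H := isCompact_iff_compactSpace.mp hH
  filter_upwards [eventually_pow_le_vandermondeMeasure_univ hE hH hconv hint hdens Q
    (Real.exp_pos I) hI, eventually_gt_atTop 0] with d hd hd0
  have hs := sdim_pos n d
  rw [← ENNReal.ofReal_pow (Real.exp_pos I).le, ← Real.exp_nat_mul,
    ENNReal.ofReal_le_iff_le_toReal (measure_ne_top _ _), ← Measure.real] at hd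
  rw [freeEnergy_eq_log_div, neg_neg, le_div_iff₀ (by positivity),
    Real.le_log_iff_exp_le ((Real.exp_pos _).trans_le hd)]
  convert hd using 2
  push_cast
  ring

lemma eventually_neZero_vandermondeMeasure (hE : ∀ d, IsEnum n d (E d)) (hH : IsCompact H)
    (hconv : Convex ℝ H) (hint : (interior H).Nonempty) [IsFiniteMeasure ν]
    (hdens : DensityCond H ν) (Q : C(H, ℝ)) (hpos : 0 < deltaBar n E H Q) :
    ∀ᶠ d in atTop, NeZero (vandermondeMeasure (E d) ν Q) := by
  have hcompact : CompactSpace H := isCompact_iff_compactSpace.mp hH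
  obtain ⟨c, hc0, hc⟩ := ENNReal.lt_iff_exists_nnreal_btwn.mp hpos
  rw [← ENNReal.ofReal_coe_nnreal] at hc0 hc
  filter_upwards [eventually_pow_le_vandermondeMeasure_univ hE hH hconv hint hdens Q
    (ENNReal.ofReal_pos.mp hc0) hc] with d hd
  exact ⟨Measure.measure_univ_pos.mp ((ENNReal.pow_pos hc0 _).trans_le hd)⟩

variable {μ : ProbabilityMeasure H} {I I₁ : ℝ}

lemma eventually_forall_le_freeEnergy_sub_integral (hE : ∀ d, IsEnum n d (E d)) (hH : IsCompact H)
    (hconv : Convex ℝ H) (hint : (interior H).Nonempty) [IsFiniteMeasure ν]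
    (hdens : DensityCond H ν)
    (hI₁ : ∀ Q : C(H, ℝ), ENNReal.ofReal (Real.exp I₁) <
      deltaBar n E H Q * ENNReal.ofReal (Real.exp (∫ x, Q x ∂(μ : Measure H))))
    (hI : I < I₁) {s : Set C(H, ℝ)} (hs : TotallyBounded s) :
    ∀ᶠ d in atTop, ∀ V ∈ s, I ≤ freeEnergy (E d) ν V - ∫ x, V x ∂(μ : Measure H) := by
  have hcompact : CompactSpace H := isCompact_iff_compactSpace.mp hH
  have hpos : 0 < deltaBar n E H (0 : C(H, ℝ)) :=
    pos_of_ne_zero (left_ne_zero_of_mul (zero_le.trans_lt (hI₁ 0)).ne')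
  have hint_lip : LipschitzWith 1 fun V : C(H, ℝ) => ∫ x, V x ∂(μ : Measure H) :=
    .of_dist_le_mul fun V W => by
      have hV (V : C(H, ℝ)) : Integrable V (μ : Measure H) :=
        V.continuous.integrable_of_hasCompactSupport (.of_compactSpace _)
      rw [dist_eq_norm, dist_eq_norm, ← integral_sub (hV V) (hV W)]
      simpa using norm_integral_le_of_norm_le_const (μ := (μ : Measure H))
        (.of_forall (V - W).norm_coe_le_norm)
  refine eventually_forall_le_of_lipschitzWith (K := 1 + 1) ?_ hs hI fun V _ => ?_
  · filter_upwards [eventually_neZero_vandermondeMeasure hE hH hconv hint hdens 0 hpos,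
      eventually_gt_atTop 0] with d _ hd
    exact (lipschitzWith_freeEnergy hd (E d)).sub hint_lip
  · have hδ : ENNReal.ofReal (Real.exp (I₁ + ∫ x, V x ∂(μ : Measure H))) <
        deltaBar n E H (-V : C(H, ℝ)) := by
      have h := hI₁ (-V)
      simp_rw [ContinuousMap.neg_apply, integral_neg, Real.exp_neg] at h
      rwa [ENNReal.ofReal_inv_of_pos (Real.exp_pos _), ← div_eq_mul_inv,
        ENNReal.lt_div_iff_mul_lt (by simp) (by simp [Real.exp_pos]),
        ← ENNReal.ofReal_mul (Real.exp_pos _).le, ← Real.exp_add] at h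
    filter_upwards [eventually_le_freeEnergy_neg hE hH hconv hint hdens (-V) hδ] with d hd
    rw [neg_neg] at hd
    linarith

lemma exists_add_sqrt_lt (K m : ℝ) {ε δ : ℝ} (hε : 0 < ε) (hδ : 0 < δ) :
    ∃ η > 0, ∃ R ≥ 0, ∃ e > 0, K < η / 2 * R ^ 2 ∧ e * (m * R) < δ ∧ e + √(2 * η * K) < ε := by
  have hη : Tendsto (fun η => √(2 * η * K)) (𝓝[>] 0) (𝓝 0) :=
    (Continuous.tendsto' (by fun_prop) 0 0 (by simp)).mono_left nhdsWithin_le_nhds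
  obtain ⟨η, hηε, hη0 : 0 < η⟩ := ((hη.eventually_lt_const hε).and self_mem_nhdsWithin).exists
  have hR : Tendsto (fun R : ℝ => η / 2 * R ^ 2) atTop atTop :=
    (tendsto_pow_atTop two_ne_zero).const_mul_atTop (by positivity)
  obtain ⟨R, hRK, hR0⟩ := ((hR.eventually_gt_atTop K).and (eventually_ge_atTop 0)).exists
  have he : Tendsto (fun e : ℝ => e * (m * R)) (𝓝[>] 0) (𝓝 0) :=
    (Continuous.tendsto' (by fun_prop) 0 0 (by simp)).mono_left nhdsWithin_le_nhds
  obtain ⟨e, ⟨heδ, heε⟩, he0⟩ := (((he.eventually_lt_const hδ).and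
    (nhdsWithin_le_nhds (gt_mem_nhds (sub_pos.mpr hηε)))).and self_mem_nhdsWithin).exists
  exact ⟨η, hη0, R, hR0, e, he0, hRK, heδ, lt_sub_iff_add_lt.mp heε⟩

lemma tendsto_sdim_atTop (hn : 1 ≤ n) : Tendsto (sdim n) atTop atTop := by
  refine tendsto_atTop_mono (fun d => ?_) tendsto_id
  calc d ≤ (d + 1).choose 1 := by simp
    _ = (d + 1).choose d := Nat.choose_symm_add.symm
    _ ≤ (d + n).choose d := Nat.choose_le_choose d (by gcongr)
    _ = sdim n d := Nat.choose_symm_add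

lemma eventually_mul_exp_neg_le_half (hn : 1 ≤ n) (m : ℝ) {x : ℝ} (hx : 0 < x) :
    ∀ᶠ d in atTop, m * (2 * Real.exp (-(sdim n d * x))) ≤ 1 / 2 := by
  have hs : Tendsto (fun d => sdim n d * x) atTop atTop :=
    (tendsto_natCast_atTop_atTop.comp (tendsto_sdim_atTop hn)).atTop_mul_const hx
  have h := ((Real.tendsto_exp_neg_atTop_nhds_zero.comp hs).const_mul 2).const_mul m
  rw [mul_zero, mul_zero] at h
  exact (h.eventually_lt_const one_half_pos).mono fun _ => le_of_lt

lemma eventually_exp_le_half_mul_exp (n : ℕ) {x y : ℝ} (hxy : x < y) :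
    ∀ᶠ d : ℕ in atTop, Real.exp (2 * d * sdim n d * x) ≤
      1 / 2 * Real.exp (2 * d * sdim n d * y) := by
  have hd : Tendsto (fun d : ℕ => d * (2 * (y - x))) atTop atTop :=
    tendsto_natCast_atTop_atTop.atTop_mul_const (mul_pos two_pos (sub_pos.mpr hxy))
  filter_upwards [hd.eventually_ge_atTop (Real.log 2)] with d hd
  have hs : (1 : ℝ) ≤ sdim n d := Nat.one_le_cast.mpr (sdim_pos n d)
  have hlog : Real.log 2 ≤ d * (2 * (y - x)) * sdim n d :=
    hd.trans (le_mul_of_one_le_right ((Real.log_nonneg one_le_two).trans hd) hs)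
  rw [one_div, ← Real.exp_log two_pos, ← Real.exp_neg, ← Real.exp_add, Real.exp_le_exp,
    Real.exp_log two_pos]
  linarith

theorem eventually_exp_le_measureReal_Gtilde (hn : 1 ≤ n) (hE : ∀ d, IsEnum n d (E d))
    (hH : IsCompact H) (hconv : Convex ℝ H) (hint : (interior H).Nonempty)
    (hν : ν Set.univ ≤ 1) (hdens : DensityCond H ν)
    (hI₁ : ∀ Q : C(H, ℝ), ENNReal.ofReal (Real.exp I₁) <
      deltaBar n E H Q * ENNReal.ofReal (Real.exp (∫ x, Q x ∂(μ : Measure H))))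
    (hI : I < I₁) {G : Set (ProbabilityMeasure H)} (hG : G ∈ 𝓝 μ) :
    ∀ᶠ d in atTop, Real.exp (2 * d * sdim n d * I) ≤
      (vandermondeMeasure (E d) ν 0).real (Gtilde d H G) := by
  have hfinite : IsFiniteMeasure ν := ⟨hν.trans_lt one_lt_top⟩
  have hcompact : CompactSpace H := isCompact_iff_compactSpace.mp hH
  have hnonempty : Nonempty H := (hint.mono interior_subset).to_subtype
  have hpos : 0 < deltaBar n E H (0 : C(H, ℝ)) :=
    pos_of_ne_zero (left_ne_zero_of_mul (zero_le.trans_lt (hI₁ 0)).ne')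
  obtain ⟨S, ε, hε, hS⟩ := exists_finset_forall_abs_integral_sub_lt_imp_mem μ hG
  obtain ⟨C, hC⟩ := exists_eventually_freeEnergy_zero_le hE hν
  obtain ⟨I', hII', hI'⟩ := exists_between hI
  let u (f : S) : C(H, ℝ) := f.1.toContinuousMap
  obtain ⟨B, hB, hu⟩ : ∃ B : NNReal, 0 < B ∧ ∀ f, ‖u f‖ ≤ B :=
    ⟨∑ f, ‖u f‖₊ + 1, by positivity, fun f => NNReal.coe_le_coe.mpr (le_add_right
      (Finset.single_le_sum_of_canonicallyOrdered (f := fun f => ‖u f‖₊) (Finset.mem_univ f)))⟩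
  obtain ⟨η, hη, R, hR, e, he, hCR, heR, heε⟩ := exists_add_sqrt_lt (C - I') (Fintype.card S) hε
    (half_pos (sub_pos.mpr hII'))
  have hIe : I < I' - e * (Fintype.card S * R) := by linarith
  have hball : TotallyBounded ((fun t : EuclideanSpace ℝ S => ∑ f, t f • u f) ''
      Metric.closedBall 0 R) :=
    ((isCompact_closedBall 0 R).image (by fun_prop)).totallyBounded
  filter_upwards [hC, eventually_mul_exp_neg_le_half hn (Fintype.card S)
      (x := e ^ 2 / (2 * B ^ 2)) (by positivity),
    eventually_exp_le_half_mul_exp n hIe,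
    eventually_neZero_vandermondeMeasure hE hH hconv hint hdens 0 hpos,
    eventually_forall_le_freeEnergy_sub_integral hE hH hconv hint hdens hI₁ hI' hball,
    eventually_gt_atTop 0] with d hCd htaild hhalfd _ hdual hd
  rw [← mul_div_assoc] at htaild
  refine hhalfd.trans ((half_exp_le_vandermondeMeasure_real hd (E d) μ u he.le hη hR hu
    (fun t ht => hdual _ (Set.mem_image_of_mem _ ht)) hCd hCR htaild).trans
    (measureReal_mono fun a ha => hS _ fun f hf => ?_))
  have hs : (0 : ℝ) < sdim n d := Nat.cast_pos.mpr (sdim_pos n d)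
  have hstat := (ha ⟨f, hf⟩).trans_lt (mul_lt_mul_of_pos_left heε hs)
  rw [integral_empPM _ _ f.continuous.stronglyMeasurable]
  rwa [← div_lt_iff₀' hs, ← abs_of_pos hs, ← abs_div, sub_div, abs_of_pos hs,
    mul_div_cancel_left₀ _ hs.ne'] at hstat

lemma eventually_ofReal_exp_le_Jd (hn : 1 ≤ n) (hE : ∀ d, IsEnum n d (E d))
    (hH : IsCompact H) (hconv : Convex ℝ H) (hint : (interior H).Nonempty)
    (hν : ν Set.univ ≤ 1) (hdens : DensityCond H ν)
    (hI₁ : ∀ Q : C(H, ℝ), ENNReal.ofReal (Real.exp I₁) <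
      deltaBar n E H Q * ENNReal.ofReal (Real.exp (∫ x, Q x ∂(μ : Measure H))))
    (hI : I < I₁) {G : Set (ProbabilityMeasure H)} (hG : IsOpen G) (hμ : μ ∈ G) :
    ∀ᶠ d in atTop, ENNReal.ofReal (Real.exp I) ≤ Jd n d (E d) H ν 0 G := by
  have hfinite : IsFiniteMeasure ν := ⟨hν.trans_lt one_lt_top⟩
  have hcompact : CompactSpace H := isCompact_iff_compactSpace.mp hH
  filter_upwards [eventually_exp_le_measureReal_Gtilde hn hE hH hconv hint hν hdens hI₁ hI
    (hG.mem_nhds hμ), eventually_gt_atTop 0] with d hd hd0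
  have hs : (0 : ℝ) < sdim n d := Nat.cast_pos.mpr (sdim_pos n d)
  rw [Measure.real, ← ENNReal.ofReal_le_iff_le_toReal (measure_ne_top _ _),
    vandermondeMeasure_apply _ _ _ (measurableSet_Gtilde d hG)] at hd
  rw [Jd, one_div, ENNReal.le_rpow_inv_iff (by positivity),
    ENNReal.ofReal_rpow_of_pos (Real.exp_pos _), ← Real.exp_mul, mul_comm I]
  exact hd

theorem iInf_deltaBar_mul_le_JQ (hn : 1 ≤ n) (hE : ∀ d, IsEnum n d (E d))
    (hH : IsCompact H) (hconv : Convex ℝ H) (hint : (interior H).Nonempty)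
    (hν : ν Set.univ ≤ 1) (hdens : DensityCond H ν) (μ : ProbabilityMeasure H) :
    ⨅ (Q : H → ℝ) (_ : Continuous Q),
        deltaBar n E H Q * ENNReal.ofReal (Real.exp (∫ x, Q x ∂(μ : Measure H))) ≤
      JQ n E H ν 0 μ := by
  refine le_of_forall_lt_imp_le_of_dense fun c hc => ?_
  obtain rfl | hc0 := eq_zero_or_pos c
  · exact zero_le
  obtain ⟨c₁, hcc₁, hc₁⟩ := exists_between hc
  have hexp {x : ℝ≥0∞} (h0 : 0 < x) (htop : x ≠ ∞) :
      ENNReal.ofReal (Real.exp (Real.log x.toReal)) = x := by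
    rw [Real.exp_log (ENNReal.toReal_pos h0.ne' htop), ENNReal.ofReal_toReal htop]
  have hlog : Real.log c.toReal < Real.log c₁.toReal :=
    Real.log_lt_log (ENNReal.toReal_pos hc0.ne' hcc₁.ne_top)
      (ENNReal.toReal_strict_mono hc₁.ne_top hcc₁)
  have hlt (Q : C(H, ℝ)) : ENNReal.ofReal (Real.exp (Real.log c₁.toReal)) <
      deltaBar n E H Q * ENNReal.ofReal (Real.exp (∫ x, Q x ∂(μ : Measure H))) := by
    rw [hexp (hc0.trans hcc₁) hc₁.ne_top]
    exact hc₁.trans_le (iInf₂_le _ Q.continuous)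
  refine le_iInf₂ fun G hG => le_limsup_of_frequently_le (Eventually.frequently ?_)
  rw [← hexp hc0 hcc₁.ne_top]
  exact eventually_ofReal_exp_le_Jd hn hE hH hconv hint hν hdens hlt hlog hG.1 hG.2

end Asymptotics

/-- **Theorem (main result).** Let `H ⊂ ℂⁿ` be a compact convex set with nonempty interior
and suppose `(H, ν)` satisfies the density condition. Then for every `μ ∈ 𝓜(H)`,
`J(μ) = W(μ) = inf { δ̄^{e^{-Q}}(H) · exp(∫_H Q dμ) : Q : H → ℝ continuous }`. -/
theorem J_eq_W_eq_inf_weighted_transfinite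
    (n : ℕ) (hn : 1 ≤ n)
    (E : ∀ d, Fin (sdim n d) → (Fin n → ℕ)) (hE : ∀ d, IsEnum n d (E d))
    (H : Set (Pt n)) (hHcomp : IsCompact H) (hHconv : Convex ℝ H)
    (hHint : (interior H).Nonempty)
    (ν : Measure H) (hν : ν Set.univ ≤ 1) (hdens : DensityCond H ν)
    (μ : ProbabilityMeasure H) :
    JQ n E H ν 0 μ = WQ n E H 0 μ ∧
    WQ n E H 0 μ =
      ⨅ (Q : H → ℝ) (_ : Continuous Q),
        deltaBar n E H Q * ENNReal.ofReal (Real.exp (∫ z, Q z ∂(μ : Measure H))) := by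
  have hcompact : CompactSpace H := isCompact_iff_compactSpace.mp hHcomp
  have hJW : JQ n E H ν 0 μ ≤ WQ n E H 0 μ := JQ_le_WQ E 0 hν μ
  have hW : WQ n E H 0 μ ≤ ⨅ (Q : H → ℝ) (_ : Continuous Q),
      deltaBar n E H Q * ENNReal.ofReal (Real.exp (∫ z, Q z ∂(μ : Measure H))) :=
    le_iInf₂ fun Q hQ => WQ_zero_le_deltaBar_mul E ⟨Q, hQ⟩ μ
  have hJ := iInf_deltaBar_mul_le_JQ hn hE hHcomp hHconv hHint hν hdens μ
  exact ⟨hJW.antisymm (hW.trans hJ), hW.antisymm (hJ.trans hJW)⟩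

end
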